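/- arXiv:2101.08225 — 6 statements merged into one kernel-verified Lean document; each statement's English description precedes it below -/
import Mathlib

section
/- Let Γ₁ and Γ₂ be finite simple graphs, each having at least two vertices, such that the outer automorphism groups Out(A_{Γ₁}) and Out(A_{Γ₂}) are finite. Let Γ = Γ₁ ⊔ Γ₂ be the disjoint union of the two graphs. Then Out(A_Γ) has a finite-index subgroup isomorphic to the direct product A_{Γ₁} × A_{Γ₂}. -/
open scoped commutatorElement

/-- The set of relators of a right-angled Artin group: commutators of adjacent vertices. -/
def raagRels {V : Type*} (Γ : SimpleGraph V) : Set (FreeGroup V) :=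
  {r | ∃ v w : V, Γ.Adj v w ∧ r = ⁅FreeGroup.of v, FreeGroup.of w⁆}

/-- The right-angled Artin group of a simple graph. -/
abbrev RAAG {V : Type*} (Γ : SimpleGraph V) : Type _ := PresentedGroup (raagRels Γ)

instance conjRangeNormal (G : Type*) [Group G] :
    ((MulAut.conj : G →* MulAut G).range).Normal := by
  constructor
  rintro - ⟨g, rfl⟩ φ
  refine ⟨φ g, ?_⟩
  ext x
  simp [MulAut.conj_apply, mul_assoc]

/-- The outer automorphism group of a group: the quotient of the automorphism group
by the inner automorphisms. -/
def Out (G : Type*) [Group G] : Type _ :=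
  MulAut G ⧸ (MulAut.conj : G →* MulAut G).range

instance (G : Type*) [Group G] : Group (Out G) :=
  QuotientGroup.Quotient.group _

/-- Disjoint union of two simple graphs. -/
def graphSum {V₁ V₂ : Type*} (Γ₁ : SimpleGraph V₁) (Γ₂ : SimpleGraph V₂) :
    SimpleGraph (V₁ ⊕ V₂) where
  Adj x y :=
    match x, y with
    | .inl a, .inl b => Γ₁.Adj a b
    | .inr a, .inr b => Γ₂.Adj a b
    | _, _ => False
  symm := by constructor; rintro (a | a) (b | b) h <;> simp_all <;> exact h.symm
  loopless := by constructor; rintro (a | a) h <;> simp_all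


namespace OutRaag

open Monoid

section FreeProduct

variable {ι : Type} {M : ι → Type} [∀ i, Group (M i)]

theorem neWord_inj {i j k l : ι} (w : CoprodI.NeWord M i j) (w' : CoprodI.NeWord M k l)
    (h : w.prod = w'.prod) : w.toList = w'.toList := by
  classical
  have h' : w.toWord = w'.toWord := CoprodI.Word.equiv.symm.injective h
  exact congrArg CoprodI.Word.toList h'

theorem neWord_prod_eq {i j k l : ι} (w : CoprodI.NeWord M i j) (w' : CoprodI.NeWord M k l)
    (h : w.toList = w'.toList) : w.prod = w'.prod := by
  have h' : w.toWord = w'.toWord := CoprodI.Word.ext h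
  simp [CoprodI.NeWord.prod, h']

theorem neWord_ne_one {i j : ι} (w : CoprodI.NeWord M i j) : w.prod ≠ 1 := by
  classical
  intro h
  have h' : w.toWord = CoprodI.Word.empty :=
    CoprodI.Word.equiv.symm.injective (h.trans CoprodI.Word.prod_empty.symm)
  exact w.toList_ne_nil (congrArg CoprodI.Word.toList h')

theorem exists_neWord (g : CoprodI M) (hg : g ≠ 1) :
    ∃ (i j : ι) (w : CoprodI.NeWord M i j), w.prod = g := by
  classical
  have h1 : (CoprodI.Word.equiv g).prod = g := CoprodI.Word.equiv.symm_apply_apply g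
  have h2 : CoprodI.Word.equiv g ≠ CoprodI.Word.empty := by
    intro h
    rw [h] at h1
    exact hg (by simpa using h1.symm)
  obtain ⟨i, j, w, hw⟩ := CoprodI.NeWord.of_word _ h2
  exact ⟨i, j, w, by rw [← h1, ← hw]; rfl⟩

theorem length_pos {i j : ι} (w : CoprodI.NeWord M i j) : 0 < w.toList.length :=
  List.length_pos_of_ne_nil w.toList_ne_nil

theorem length_inv {i j : ι} (w : CoprodI.NeWord M i j) :
    w.inv.toList.length = w.toList.length := by
  induction w with
  | singleton => simp [CoprodI.NeWord.inv, CoprodI.NeWord.toList]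
  | append w₁ h w₂ ih1 ih2 =>
    simp [CoprodI.NeWord.inv, CoprodI.NeWord.toList, ih1, ih2, add_comm]

theorem length_append {i j k l : ι} (w : CoprodI.NeWord M i j) (h : j ≠ k)
    (w' : CoprodI.NeWord M k l) :
    (w.append h w').toList.length = w.toList.length + w'.toList.length := by
  simp [CoprodI.NeWord.toList]

theorem length_singleton {i : ι} (x : M i) (h : x ≠ 1) :
    (CoprodI.NeWord.singleton x h).toList.length = 1 := rfl

theorem uncons {i j : ι} (w : CoprodI.NeWord M i j) :
    (i = j ∧ ∃ a : M i, w.prod = CoprodI.of a) ∨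
    ∃ (k : ι) (_ : i ≠ k) (a : M i) (_ : a ≠ 1) (w' : CoprodI.NeWord M k j),
      w.prod = CoprodI.of a * w'.prod ∧ w.toList.length = w'.toList.length + 1 := by
  induction w with
  | singleton x h => exact Or.inl ⟨rfl, x, by simp⟩
  | @append i j k l w₁ h w₂ ih1 ih2 =>
    right
    rcases ih1 with ⟨rfl, a, ha⟩ | ⟨k', hk, a, ha, w', h1, h2⟩
    · have ha1 : a ≠ 1 := by
        rintro rfl
        exact neWord_ne_one w₁ (by simpa using ha)
      have hl := neWord_inj w₁ (CoprodI.NeWord.singleton a ha1) (by simpa using ha)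
      refine ⟨k, h, a, ha1, w₂, by simp [ha], ?_⟩
      rw [length_append, hl, length_singleton, add_comm]
    · refine ⟨k', hk, a, ha, w'.append h w₂, by simp [h1, mul_assoc], ?_⟩
      rw [length_append, length_append, h2]; omega

theorem unsnoc {i j : ι} (w : CoprodI.NeWord M i j) :
    (i = j ∧ ∃ a : M j, w.prod = CoprodI.of a) ∨
    ∃ (k : ι) (_ : k ≠ j) (a : M j) (_ : a ≠ 1) (w' : CoprodI.NeWord M i k),
      w.prod = w'.prod * CoprodI.of a ∧ w.toList.length = w'.toList.length + 1 := by
  rcases uncons w.inv with ⟨h, a, ha⟩ | ⟨k, hk, a, ha, w', h1, h2⟩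
  · refine Or.inl ⟨h.symm, a⁻¹, ?_⟩
    rw [CoprodI.NeWord.inv_prod] at ha
    rw [map_inv, ← ha, inv_inv]
  · refine Or.inr ⟨k, hk.symm, a⁻¹, by simpa using ha, w'.inv, ?_, ?_⟩
    · rw [CoprodI.NeWord.inv_prod] at h1
      rw [CoprodI.NeWord.inv_prod, map_inv, ← mul_inv_rev, ← h1, inv_inv]
    · rw [length_inv] at h2 ⊢
      exact h2

/-- strip a letter of `M i` off the right end -/
theorem strip_right (i : ι) (g : CoprodI M) : ∃ (a : M i) (g' : CoprodI M),
    g = g' * CoprodI.of a ∧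
      (g' = 1 ∨ ∃ (k l : ι) (_ : l ≠ i) (w : CoprodI.NeWord M k l), w.prod = g') := by
  by_cases hg : g = 1
  · exact ⟨1, 1, by simp [hg], Or.inl rfl⟩
  obtain ⟨k, l, w, rfl⟩ := exists_neWord g hg
  by_cases hl : l = i
  · subst hl
    rcases unsnoc w with ⟨rfl, a, ha⟩ | ⟨k', hk, a, ha, w', h1, h2⟩
    · exact ⟨a, 1, by simp [ha], Or.inl rfl⟩
    · exact ⟨a, _, h1, Or.inr ⟨_, _, hk, w', rfl⟩⟩
  · exact ⟨1, _, by simp, Or.inr ⟨k, l, hl, w, rfl⟩⟩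

theorem of_eq_of {i j : ι} {m : M i} {n : M j} (hm : m ≠ 1)
    (h : (CoprodI.of m : CoprodI M) = CoprodI.of n) : i = j := by
  have hn : n ≠ 1 := by
    rintro rfl
    exact hm (CoprodI.of_injective i (by simpa using h))
  have := neWord_inj (CoprodI.NeWord.singleton m hm) (CoprodI.NeWord.singleton n hn)
    (by simpa using h)
  simp [CoprodI.NeWord.toList] at this
  exact this.1

theorem malnormal {i j : ι} {m : M i} {n : M j} (hm : m ≠ 1) (g : CoprodI M)
    (h : g * CoprodI.of m * g⁻¹ = CoprodI.of n) :
    i = j ∧ ∃ a : M i, g = CoprodI.of a := by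
  obtain ⟨a, g', rfl, h'⟩ := strip_right i g
  have hm' : a * m * a⁻¹ ≠ 1 := by simpa using hm
  have key : g' * CoprodI.of (a * m * a⁻¹) * g'⁻¹ = CoprodI.of n := by
    rw [← h]; simp [mul_assoc]
  rcases h' with rfl | ⟨k, l, hl, w, rfl⟩
  · exact ⟨of_eq_of hm' (by simpa using key), a, by simp⟩
  · exfalso
    have hn : n ≠ 1 := by
      rintro rfl
      rw [map_one, mul_inv_eq_one, mul_eq_left] at key
      exact hm' (CoprodI.of_injective i (by simpa using key))
    have := neWord_inj ((w.append hl (CoprodI.NeWord.singleton _ hm')).append hl.symm w.inv)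
      (CoprodI.NeWord.singleton n hn) (by simpa [mul_assoc] using key)
    have h2 := congrArg List.length this
    have := length_pos w
    rw [length_append, length_append, length_inv, length_singleton, length_singleton] at h2
    omega

/-- conjugates of the factors -/
def CJ (g : CoprodI M) (i : ι) : Subgroup (CoprodI M) :=
  ((CoprodI.of : M i →* CoprodI M).range).map (MulAut.conj g).toMonoidHom

theorem mem_CJ {g : CoprodI M} {i : ι} {x : CoprodI M} :
    x ∈ CJ g i ↔ ∃ m : M i, x = g * CoprodI.of m * g⁻¹ := by
  simp [CJ, Subgroup.mem_map, eq_comm]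

theorem commute_elliptic {g : CoprodI M} {i : ι} {x y : CoprodI M} (hx : x ∈ CJ g i)
    (hx1 : x ≠ 1) (hc : Commute x y) : y ∈ CJ g i := by
  obtain ⟨m, rfl⟩ := mem_CJ.1 hx
  have hm : m ≠ 1 := by rintro rfl; simp at hx1
  have h : (g⁻¹ * y * g) * CoprodI.of m * (g⁻¹ * y * g)⁻¹ = CoprodI.of m := by
    have h1 : y * (g * CoprodI.of m * g⁻¹) * y⁻¹ = g * CoprodI.of m * g⁻¹ := by
      rw [← hc.eq]; group
    calc _ = g⁻¹ * (y * (g * CoprodI.of m * g⁻¹) * y⁻¹) * g := by group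
      _ = _ := by rw [h1]; group
  obtain ⟨-, a, ha⟩ := malnormal hm _ h
  exact mem_CJ.2 ⟨a, by rw [← ha]; group⟩

theorem cyclic_reduce (n : ℕ) : ∀ {i j : ι} (w : CoprodI.NeWord M i j), w.toList.length ≤ n →
    (∃ g k, w.prod ∈ CJ g k) ∨ ∃ (g : CoprodI M) (k l : ι) (_ : k ≠ l)
      (w' : CoprodI.NeWord M k l), w.prod = g * w'.prod * g⁻¹ := by
  induction n with
  | zero => intro i j w h; have := length_pos w; omega
  | succ n ih =>
    intro i j w h
    by_cases hij : i = j
    swap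
    · exact Or.inr ⟨1, i, j, hij, w, by simp⟩
    subst hij
    rcases uncons w with ⟨-, a, ha⟩ | ⟨k, hk, a, ha, w', h1, h2⟩
    · exact Or.inl ⟨1, i, mem_CJ.2 ⟨a, by simp [ha]⟩⟩
    rcases unsnoc w' with ⟨h3, -⟩ | ⟨l, hl, b, hb, wb, h3, h4⟩
    · exact absurd h3.symm hk
    have h5 : w.prod = CoprodI.of a * (wb.prod * CoprodI.of (b * a)) * (CoprodI.of a)⁻¹ := by
      rw [h1, h3, map_mul]; group
    by_cases hba : b * a = 1
    · rw [hba, map_one, mul_one] at h5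
      rcases ih wb (by omega) with ⟨g, k', hg⟩ | ⟨g, k', l', hkl, v, hv⟩
      · obtain ⟨m, hm⟩ := mem_CJ.1 hg
        exact Or.inl ⟨CoprodI.of a * g, k', mem_CJ.2 ⟨m, by rw [h5, hm]; group⟩⟩
      · exact Or.inr ⟨CoprodI.of a * g, k', l', hkl, v, by rw [h5, hv]; group⟩
    · exact Or.inr ⟨CoprodI.of a, k, i, hk.symm,
        wb.append hl (CoprodI.NeWord.singleton _ hba), by rw [h5]; simp⟩

theorem neWord_pow {i j : ι} (hij : i ≠ j) (w : CoprodI.NeWord M i j) (n : ℕ) :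
    ∃ w' : CoprodI.NeWord M i j, w'.prod = w.prod ^ (n + 1) ∧
      w'.toList.length = (n + 1) * w.toList.length := by
  induction n with
  | zero => exact ⟨w, by simp⟩
  | succ n ih =>
    obtain ⟨w', h1, h2⟩ := ih
    refine ⟨w'.append hij.symm w, by simp [h1, pow_succ], ?_⟩
    rw [length_append, h2]; ring

theorem commute_same {i j : ι} (hij : i ≠ j) (x y : CoprodI.NeWord M i j)
    (hc : Commute x.prod y.prod) :
    x.prod ^ y.toList.length = y.prod ^ x.toList.length := by
  obtain ⟨n, hn⟩ := Nat.exists_eq_succ_of_ne_zero (length_pos y).ne'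
  obtain ⟨m, hm⟩ := Nat.exists_eq_succ_of_ne_zero (length_pos x).ne'
  obtain ⟨X, hX, hX'⟩ := neWord_pow hij x n
  obtain ⟨Y, hY, hY'⟩ := neWord_pow hij y m
  have h := neWord_inj (X.append hij.symm Y) (Y.append hij.symm X) (by
    simp only [CoprodI.NeWord.append_prod, hX, hY]
    exact ((hc.pow_pow _ _).eq))
  have h2 : X.toList ++ Y.toList = Y.toList ++ X.toList := h
  have h3 := (List.append_inj h2 (by rw [hX', hY', hn, hm]; simp; ring)).1
  have h4 := neWord_prod_eq _ _ h3
  rw [hn, hm, ← hX, ← hY, h4]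

theorem commute_cyc {i j k l : ι} (hij : i ≠ j) (x : CoprodI.NeWord M i j)
    (y : CoprodI.NeWord M k l) (hc : Commute x.prod y.prod) :
    ∃ m n : ℤ, m ≠ 0 ∧ x.prod ^ m = y.prod ^ n := by
  by_cases h1 : j ≠ k ∧ l ≠ j
  · exfalso
    have := congrArg List.length (neWord_inj ((x.append h1.1 y).append h1.2 x.inv) y (by
      simp only [CoprodI.NeWord.append_prod, CoprodI.NeWord.inv_prod]
      rw [hc.eq]; group))
    rw [length_append, length_append] at this
    have := length_pos x
    omega
  by_cases h2 : i ≠ k ∧ l ≠ i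
  · exfalso
    have := congrArg List.length (neWord_inj ((x.inv.append h2.1 y).append h2.2 x) y (by
      simp only [CoprodI.NeWord.append_prod, CoprodI.NeWord.inv_prod]
      rw [mul_assoc, ← hc.eq]; group))
    rw [length_append, length_append] at this
    have := length_pos x
    omega
  by_cases h3 : k = i
  · have hlj : l = j := by
      by_contra hl
      exact h1 ⟨by rw [h3]; exact hij.symm, hl⟩
    subst h3 hlj
    exact ⟨y.toList.length, x.toList.length, by exact_mod_cast (length_pos y).ne',
      by exact_mod_cast commute_same hij x y hc⟩
  · have hli : l = i := by
      by_contra hl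
      exact h2 ⟨fun h => h3 h.symm, hl⟩
    have hkj : k = j := by
      by_contra hk
      exact h1 ⟨fun h => hk h.symm, by rw [hli]; exact hij⟩
    subst hli hkj
    have := commute_same hij x y.inv (by rw [CoprodI.NeWord.inv_prod]; exact hc.inv_right)
    refine ⟨y.inv.toList.length, -x.toList.length, by exact_mod_cast (length_pos y.inv).ne', ?_⟩
    rw [zpow_natCast, this, zpow_neg, zpow_natCast, CoprodI.NeWord.inv_prod, inv_pow]

theorem commute_dichotomy {x y : CoprodI M} (hx : x ≠ 1) (hy : y ≠ 1) (hc : Commute x y) :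
    (∃ g i, x ∈ CJ g i) ∨ ∃ m n : ℤ, m ≠ 0 ∧ x ^ m = y ^ n := by
  obtain ⟨i, j, w, rfl⟩ := exists_neWord x hx
  rcases cyclic_reduce _ w le_rfl with h | ⟨g, k, l, hkl, v, hv⟩
  · exact Or.inl h
  right
  have hy' : g⁻¹ * y * g ≠ 1 := by
    intro h
    apply hy
    calc y = g * (g⁻¹ * y * g) * g⁻¹ := by group
      _ = 1 := by rw [h]; group
  obtain ⟨i', j', u, hu⟩ := exists_neWord _ hy'
  have hc' : Commute v.prod u.prod := by
    have : v.prod = g⁻¹ * w.prod * g := by rw [hv]; group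
    rw [this, hu]
    have := hc.map (MulAut.conj g⁻¹).toMonoidHom
    simpa using this
  obtain ⟨m, n, hm, h⟩ := commute_cyc hkl v u hc'
  refine ⟨m, n, hm, ?_⟩
  have hy2 : y = g * u.prod * g⁻¹ := by rw [hu]; group
  rw [hv, hy2, conj_zpow, conj_zpow, h]

end FreeProduct

section TwoFactors

variable {M : Bool → Type} [∀ i, Group (M i)]

theorem double_strip (h : CoprodI M) : ∃ (a : M false) (b : M true) (h' : CoprodI M),
    h = CoprodI.of a * h' * CoprodI.of b ∧
      (h' = 1 ∨ ∃ w : CoprodI.NeWord M true false, w.prod = h') := by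
  obtain ⟨a, g, hg, h1⟩ := strip_right false h⁻¹
  have hh : h = CoprodI.of a⁻¹ * g⁻¹ := by
    rw [map_inv, ← mul_inv_rev, ← hg, inv_inv]
  rcases h1 with rfl | ⟨k, l, hl, w, rfl⟩
  · exact ⟨a⁻¹, 1, 1, by simp [hh], Or.inl rfl⟩
  have hl' : l = true := by simpa using hl
  subst hl'
  rcases Bool.eq_false_or_eq_true k with rfl | rfl
  · rcases unsnoc w.inv with ⟨-, b, hb⟩ | ⟨k, hk, b, hb, w', h1, h2⟩
    · exact ⟨a⁻¹, b, 1, by rw [hh, ← CoprodI.NeWord.inv_prod, hb, mul_one], Or.inl rfl⟩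
    · have hk' : k = false := by simpa using hk
      subst hk'
      exact ⟨a⁻¹, b, w'.prod, by rw [hh, ← CoprodI.NeWord.inv_prod, h1, mul_assoc],
        Or.inr ⟨w', rfl⟩⟩
  · exact ⟨a⁻¹, 1, w.inv.prod, by rw [hh, ← CoprodI.NeWord.inv_prod, map_one, mul_one],
      Or.inr ⟨_, rfl⟩⟩

theorem not_surj_word (φ : CoprodI M →* CoprodI M) (α : M false →* M false)
    (β : M true →* M true) (hα : Function.Injective α) (hβ : Function.Injective β)
    (h : CoprodI.NeWord M true false)
    (h1 : ∀ m : M false, φ (CoprodI.of m) = CoprodI.of (α m))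
    (h2 : ∀ m : M true, φ (CoprodI.of m) = h.prod * CoprodI.of (β m) * h.prod⁻¹)
    {i j : Bool} (w : CoprodI.NeWord M i j) :
    ∃ w' : CoprodI.NeWord M i j, w'.prod = φ w.prod ∧
      (2 ≤ w'.toList.length ∨ ∃ m : M false, w'.prod = CoprodI.of m) := by
  induction w with
  | @singleton i x hx =>
    cases i with
    | false =>
      have : α x ≠ 1 := by simpa using hα.ne hx
      exact ⟨CoprodI.NeWord.singleton (α x) this, by simp [h1], Or.inr ⟨α x, by simp⟩⟩
    | true =>
      have : β x ≠ 1 := by simpa using hβ.ne hx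
      refine ⟨(h.append (by simp) (CoprodI.NeWord.singleton (β x) this)).append (by simp) h.inv,
        by simp [h2, mul_assoc], Or.inl ?_⟩
      rw [length_append, length_append, length_inv]
      have := length_pos h
      omega
  | append w₁ hne w₂ ih1 ih2 =>
    obtain ⟨v₁, e1, -⟩ := ih1
    obtain ⟨v₂, e2, -⟩ := ih2
    refine ⟨v₁.append hne v₂, by simp [e1, e2], Or.inl ?_⟩
    rw [length_append]
    have := length_pos v₁
    have := length_pos v₂
    omega

theorem not_surj [Nontrivial (M true)] (φ : CoprodI M →* CoprodI M) (α : M false →* M false)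
    (β : M true →* M true) (hα : Function.Injective α) (hβ : Function.Injective β)
    (h : CoprodI.NeWord M true false)
    (h1 : ∀ m : M false, φ (CoprodI.of m) = CoprodI.of (α m))
    (h2 : ∀ m : M true, φ (CoprodI.of m) = h.prod * CoprodI.of (β m) * h.prod⁻¹) :
    ¬ Function.Surjective φ := by
  intro hs
  obtain ⟨b, hb⟩ := exists_ne (1 : M true)
  obtain ⟨g, hg⟩ := hs (CoprodI.of b)
  have hg1 : g ≠ 1 := by
    rintro rfl
    rw [map_one] at hg
    exact hb (CoprodI.of_injective true (by simpa using hg.symm))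
  obtain ⟨i, j, w, rfl⟩ := exists_neWord g hg1
  obtain ⟨w', e, h3⟩ := not_surj_word φ α β hα hβ h h1 h2 w
  rcases h3 with h3 | ⟨m, hm⟩
  · have := congrArg List.length (neWord_inj w' (CoprodI.NeWord.singleton b hb) (by simp [e, hg]))
    rw [length_singleton] at this
    omega
  · have := of_eq_of hb (hg.symm.trans (e.symm.trans hm))
    simp at this

/-- the automorphism of the free product from automorphisms of the factors -/
def theta : (∀ b, MulAut (M b)) →* MulAut (CoprodI M) where
  toFun α := MonoidHom.toMulEquiv
    (CoprodI.lift fun b => CoprodI.of.comp (α b).toMonoidHom)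
    (CoprodI.lift fun b => CoprodI.of.comp (α b).symm.toMonoidHom)
    (by ext; simp) (by ext; simp)
  map_one' := by
    have : ∀ x : CoprodI M, (CoprodI.lift fun b => CoprodI.of.comp
      ((1 : MulAut (M b))).toMonoidHom) x = MonoidHom.id _ x := by
      intro x
      congr 1
      ext; simp
    ext x
    exact this x
  map_mul' α β := by
    have : ∀ x : CoprodI M, (CoprodI.lift fun b => CoprodI.of.comp
      ((α b * β b)).toMonoidHom) x = ((CoprodI.lift fun b => CoprodI.of.comp
      ((α b)).toMonoidHom).comp (CoprodI.lift fun b => CoprodI.of.comp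
      ((β b)).toMonoidHom)) x := by
      intro x
      congr 1
      ext; simp
    ext x
    exact this x

theorem theta_of (α : ∀ b, MulAut (M b)) {b : Bool} (m : M b) :
    theta α (CoprodI.of m) = CoprodI.of (α b m) := by
  simp [theta]

/-- type-preserving automorphisms -/
def Tid (φ : MulAut (CoprodI M)) : Prop :=
  ∀ i, ∃ g, ∀ m : M i, φ (CoprodI.of m) ∈ CJ g i

/-- type-swapping automorphisms -/
def Tsw (φ : MulAut (CoprodI M)) : Prop :=
  ∀ i, ∃ g, ∀ m : M i, φ (CoprodI.of m) ∈ CJ g (!i)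

theorem comp_types {φ ψ : MulAut (CoprodI M)} {i j k : Bool} {g g' : CoprodI M}
    (hψ : ∀ m : M i, ψ (CoprodI.of m) ∈ CJ g j)
    (hφ : ∀ m : M j, φ (CoprodI.of m) ∈ CJ g' k) :
    ∀ m : M i, (φ * ψ) (CoprodI.of m) ∈ CJ (φ g * g') k := by
  intro m
  obtain ⟨n, hn⟩ := mem_CJ.1 (hψ m)
  obtain ⟨n', hn'⟩ := mem_CJ.1 (hφ n)
  refine mem_CJ.2 ⟨n', ?_⟩
  rw [MulAut.mul_apply, hn, map_mul, map_mul, hn', map_inv]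
  group

theorem Tsw_mul {φ ψ : MulAut (CoprodI M)} (hφ : Tsw φ) (hψ : Tsw ψ) : Tid (φ * ψ) := by
  intro i
  obtain ⟨g, hg⟩ := hψ i
  obtain ⟨g', hgb⟩ := hφ (!i)
  rw [Bool.not_not] at hgb
  exact ⟨_, comp_types hg hgb⟩

/-- projection to a factor -/
theorem proj_kill {i j : Bool} (hij : i ≠ j) {g x : CoprodI M} (h : x ∈ CJ g j) :
    CoprodI.lift (Pi.mulSingle i (MonoidHom.id (M i))) x = 1 := by
  obtain ⟨m, rfl⟩ := mem_CJ.1 h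
  simp [Pi.mulSingle_eq_of_ne hij.symm]

theorem types [∀ i, Nontrivial (M i)]
    (E : ∀ (φ : MulAut (CoprodI M)) (i : Bool), ∃ g j, ∀ m : M i, φ (CoprodI.of m) ∈ CJ g j)
    (φ : MulAut (CoprodI M)) : Tid φ ∨ Tsw φ := by
  obtain ⟨g, j, hg⟩ := E φ false
  obtain ⟨g', j', hg'⟩ := E φ true
  have hne : j ≠ j' := by
    rintro rfl
    have key : ((CoprodI.lift (Pi.mulSingle (!j) (MonoidHom.id (M (!j))))).comp
        φ.toMonoidHom : CoprodI M →* M (!j)) = 1 := by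
      apply CoprodI.ext_hom
      intro i
      ext m
      have : (!j) ≠ j := by simp
      cases i
      · exact proj_kill this (hg m)
      · exact proj_kill this (hg' m)
    obtain ⟨m, hm⟩ := exists_ne (1 : M (!j))
    apply hm
    have := DFunLike.congr_fun key (φ.symm (CoprodI.of m))
    simpa using this
  cases j <;> cases j'
  · simp at hne
  · left; intro i; cases i
    · exact ⟨g, hg⟩
    · exact ⟨g', hg'⟩
  · right; intro i; cases i
    · exact ⟨g, hg⟩
    · exact ⟨g', hg'⟩
  · simp at hne

theorem Tid_inv [∀ i, Nontrivial (M i)]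
    (E : ∀ (φ : MulAut (CoprodI M)) (i : Bool), ∃ g j, ∀ m : M i, φ (CoprodI.of m) ∈ CJ g j)
    {φ : MulAut (CoprodI M)} (h : Tid φ) : Tid φ⁻¹ := by
  rcases types E φ⁻¹ with h' | h'
  · exact h'
  exfalso
  obtain ⟨g, hg⟩ := h true
  obtain ⟨g', hg'⟩ := h' true
  obtain ⟨m, hm⟩ := exists_ne (1 : M true)
  have := comp_types hg hg' m
  rw [inv_mul_cancel, MulAut.one_apply] at this
  have h2 := proj_kill (i := true) (j := !true) (by simp) this
  simp at h2
  exact hm h2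

theorem restrict [∀ i, Nontrivial (M i)]
    (E : ∀ (φ : MulAut (CoprodI M)) (i : Bool), ∃ g j, ∀ m : M i, φ (CoprodI.of m) ∈ CJ g j)
    {φ : MulAut (CoprodI M)} (h : Tid φ) (i : Bool) : ∃ (g : CoprodI M) (α : MulAut (M i)),
      ∀ m : M i, φ (CoprodI.of m) = g * CoprodI.of (α m) * g⁻¹ := by
  obtain ⟨g, hg⟩ := h i
  obtain ⟨k, hk⟩ := Tid_inv E h i
  choose α hα using fun m => mem_CJ.1 (hg m)
  choose β hβ using fun m => mem_CJ.1 (hk m)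
  have hmul : ∀ m n, α (m * n) = α m * α n := by
    intro m n
    apply CoprodI.of_injective i
    have h1 := hα (m * n)
    rw [map_mul, map_mul, hα m, hα n] at h1
    rw [map_mul]
    have : g * (CoprodI.of (α m) * CoprodI.of (α n)) * g⁻¹ = g * CoprodI.of (α (m * n)) * g⁻¹ := by
      rw [← h1]; group
    exact (mul_left_cancel (mul_right_cancel this)).symm
  have hinj : Function.Injective α := by
    intro m n hmn
    apply CoprodI.of_injective i
    apply φ.injective
    rw [hα, hα, hmn]
  have hk2 : ∀ n : M i, (CoprodI.of n : CoprodI M) =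
      (φ k * g) * CoprodI.of (α (β n)) * (φ k * g)⁻¹ := by
    intro n
    have h1 := congrArg φ (hβ n)
    rw [MulAut.apply_inv_self, map_mul, map_mul, hα, map_inv] at h1
    rw [h1]; group
  obtain ⟨n₁, hn₁⟩ := exists_ne (1 : M i)
  have hne : α (β n₁) ≠ 1 := by
    intro h0
    have := hk2 n₁
    rw [h0] at this
    exact hn₁ (CoprodI.of_injective i (by simpa using this))
  obtain ⟨-, c, hc⟩ := malnormal hne _ (hk2 n₁).symm
  have hsurj : Function.Surjective α := by
    intro n
    refine ⟨β (c * n * c⁻¹), ?_⟩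
    have h1 := hk2 (c * n * c⁻¹)
    rw [hc, ← map_inv, ← map_mul, ← map_mul] at h1
    exact (mul_left_cancel (mul_right_cancel (CoprodI.of_injective i h1))).symm
  exact ⟨g, MulEquiv.ofBijective (MonoidHom.mk' α hmul) ⟨hinj, hsurj⟩, hα⟩

/-- the outer class -/
def outMk (G : Type) [Group G] : MulAut G →* Out G :=
  QuotientGroup.mk' (MulAut.conj : G →* MulAut G).range

theorem outMk_conj {G : Type} [Group G] (g : G) : outMk G (MulAut.conj g) = 1 :=
  (QuotientGroup.eq_one_iff _).2 ⟨g, rfl⟩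

theorem outMk_eq_one {G : Type} [Group G] {φ : MulAut G} :
    outMk G φ = 1 ↔ ∃ g : G, MulAut.conj g = φ :=
  (QuotientGroup.eq_one_iff _)

theorem outMk_surj (G : Type) [Group G] : Function.Surjective (outMk G) :=
  QuotientGroup.mk'_surjective _

theorem Tid_mem [∀ i, Nontrivial (M i)]
    (E : ∀ (φ : MulAut (CoprodI M)) (i : Bool), ∃ g j, ∀ m : M i, φ (CoprodI.of m) ∈ CJ g j)
    {φ : MulAut (CoprodI M)} (h : Tid φ) :
    outMk _ φ ∈ ((outMk (CoprodI M)).comp theta).range := by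
  obtain ⟨g, α, hα⟩ := restrict E h false
  obtain ⟨k, β, hβ⟩ := restrict E h true
  obtain ⟨a, b, h', hh, hd⟩ := double_strip (g⁻¹ * k)
  let γ : MulAut (CoprodI M) := MulAut.conj (g * CoprodI.of a)⁻¹ * φ
  let α' : MulAut (M false) := MulAut.conj a⁻¹ * α
  let β' : MulAut (M true) := MulAut.conj b * β
  have hk : k = g * CoprodI.of a * h' * CoprodI.of b := by
    calc k = g * (g⁻¹ * k) := by group
      _ = _ := by rw [hh]; group
  have h1 : ∀ m : M false, γ (CoprodI.of m) = CoprodI.of (α' m) := by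
    intro m
    simp only [γ, α', MulAut.mul_apply, hα, MulAut.conj_apply]
    simp only [map_mul, map_inv]
    group
  have h2 : ∀ m : M true, γ (CoprodI.of m) = h' * CoprodI.of (β' m) * h'⁻¹ := by
    intro m
    simp only [γ, β', MulAut.mul_apply, hβ, MulAut.conj_apply, hk]
    simp only [map_mul, map_inv]
    group
  rcases hd with rfl | ⟨w, rfl⟩
  · let δ : ∀ b, MulAut (M b) := fun b => match b with
      | false => α'
      | true => β'
    have hγ : theta δ = γ := by
      have : (theta δ).toMonoidHom = γ.toMonoidHom := by
        apply CoprodI.ext_hom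
        intro i
        ext m
        cases i
        · exact (theta_of δ m).trans (h1 m).symm
        · exact (theta_of δ m).trans (by simpa using (h2 m).symm)
      ext x
      exact DFunLike.congr_fun this x
    refine ⟨δ, ?_⟩
    rw [MonoidHom.comp_apply, hγ, map_mul, outMk_conj, one_mul]
  · exact absurd γ.surjective (not_surj γ.toMonoidHom α'.toMonoidHom β'.toMonoidHom
      α'.injective β'.injective w h1 h2)

theorem finiteIndex_of_two {G : Type} [Group G] (N : Subgroup G)
    (h : ∀ x y, x ∉ N → y ∉ N → x⁻¹ * y ∈ N) : N.FiniteIndex := by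
  by_cases hx : ∃ x, x ∉ N
  · obtain ⟨x, hx⟩ := hx
    have : Finite (G ⧸ N) := by
      apply Finite.of_surjective (fun b : Bool => if b then (x : G ⧸ N) else ((1 : G) : G ⧸ N))
      intro q
      induction q using QuotientGroup.induction_on with
      | H y =>
        by_cases hy : y ∈ N
        · exact ⟨false, by simpa [QuotientGroup.eq] using hy⟩
        · exact ⟨true, by simpa [QuotientGroup.eq] using h x y hx hy⟩
    exact Subgroup.finiteIndex_of_finite_quotient
  · push Not at hx
    have : N = ⊤ := (Subgroup.eq_top_iff' N).2 hx
    subst this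
    infer_instance

theorem range_finiteIndex [∀ i, Nontrivial (M i)]
    (E : ∀ (φ : MulAut (CoprodI M)) (i : Bool), ∃ g j, ∀ m : M i, φ (CoprodI.of m) ∈ CJ g j) :
    ((outMk (CoprodI M)).comp theta).range.FiniteIndex := by
  apply finiteIndex_of_two
  intro x y hx hy
  obtain ⟨φ, rfl⟩ := outMk_surj _ x
  obtain ⟨ψ, rfl⟩ := outMk_surj _ y
  rw [← map_inv, ← map_mul]
  apply Tid_mem E
  refine Tsw_mul ?_ ?_
  · rcases types E φ⁻¹ with h | h
    · exact absurd (Tid_mem E (by simpa using Tid_inv E h)) hx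
    · exact h
  · rcases types E ψ with h | h
    · exact absurd (Tid_mem E h) hy
    · exact h

/-- the product of inner automorphism maps -/
def innerPi : (∀ b, M b) →* (∀ b, MulAut (M b)) where
  toFun m b := MulAut.conj (m b)
  map_one' := by ext; simp
  map_mul' x y := by ext; simp

theorem main_coprod [∀ i, Nontrivial (M i)]
    (E : ∀ (φ : MulAut (CoprodI M)) (i : Bool), ∃ g j, ∀ m : M i, φ (CoprodI.of m) ∈ CJ g j)
    (hZ : ∀ i (z : M i), (∀ m, z * m = m * z) → z = 1)
    (hF : ∀ i, Finite (Out (M i))) :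
    ∃ Ψ : (∀ b, M b) →* Out (CoprodI M), Function.Injective Ψ ∧ Ψ.range.FiniteIndex := by
  refine ⟨((outMk (CoprodI M)).comp theta).comp innerPi, ?_, ?_⟩
  · rw [injective_iff_map_eq_one]
    intro x hx
    obtain ⟨k, hk⟩ := outMk_eq_one.1 hx
    have hk' : ∀ i (m : M i), k * CoprodI.of m * k⁻¹ = CoprodI.of (x i * m * (x i)⁻¹) := by
      intro i m
      have := DFunLike.congr_fun hk (CoprodI.of m)
      rw [theta_of] at this
      simpa [innerPi] using this
    have hmem : ∀ i, ∃ a : M i, k = CoprodI.of a := by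
      intro i
      obtain ⟨m, hm⟩ := exists_ne (1 : M i)
      exact (malnormal hm k (hk' i m)).2
    have hk1 : k = 1 := by
      obtain ⟨a, ha⟩ := hmem true
      obtain ⟨b, hb⟩ := hmem false
      by_contra hne
      have ha1 : a ≠ 1 := by rintro rfl; simp [ha] at hne
      have := of_eq_of ha1 (ha.symm.trans hb)
      simp at this
    funext i
    apply hZ
    intro m
    have := CoprodI.of_injective i (by simpa [hk1] using hk' i m :
      (CoprodI.of m : CoprodI M) = CoprodI.of (x i * m * (x i)⁻¹))
    rw [eq_mul_inv_iff_mul_eq] at this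
    exact this.symm
  · rw [MonoidHom.range_comp]
    let q : (∀ b, MulAut (M b)) →* (∀ b, Out (M b)) :=
      MonoidHom.pi fun b => (outMk (M b)).comp (Pi.evalMonoidHom _ b)
    have hq : (innerPi : (∀ b, M b) →* _).range = q.ker := by
      ext α
      constructor
      · rintro ⟨m, rfl⟩
        rw [MonoidHom.mem_ker]
        funext b
        exact outMk_conj (m b)
      · intro h
        have : ∀ b, ∃ m : M b, MulAut.conj m = α b := fun b =>
          outMk_eq_one.1 (congrFun h b)
        choose m hm using this
        exact ⟨m, funext hm⟩
    have h1 : (innerPi : (∀ b, M b) →* _).range.FiniteIndex := by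
      rw [hq]; exact Subgroup.finiteIndex_ker q
    have h2 := range_finiteIndex E
    constructor
    rw [Subgroup.index_map]
    refine mul_ne_zero ?_ h2.index_ne_zero
    exact (Subgroup.finiteIndex_of_le (le_sup_left)).index_ne_zero

end TwoFactors

section FreeGroupLemma

theorem free_first {X : Type} [DecidableEq X] {f : FreeGroup X} {a : X} (hf : f ≠ 1)
    (hc : Commute f (FreeGroup.of a)) : ∃ s L, f.toWord = (a, s) :: L := by
  obtain ⟨c, L, hL⟩ := List.exists_cons_of_ne_nil (fun h => hf (FreeGroup.toWord_eq_nil_iff.1 h))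
  obtain ⟨c, s⟩ := c
  by_cases hca : c = a
  · subst hca
    exact ⟨s, L, hL⟩
  exfalso
  have h1 : (FreeGroup.of a * f).toWord = (a, true) :: f.toWord := by
    rw [FreeGroup.toWord_mul, FreeGroup.toWord_of, List.singleton_append, FreeGroup.reduce.cons,
      FreeGroup.reduce_toWord, hL]
    simp [Ne.symm hca]
  have h2 := FreeGroup.toWord_mul_sublist f (FreeGroup.of a)
  rw [hc.eq, h1, FreeGroup.toWord_of] at h2
  have h3 := h2.eq_of_length (by simp)
  rw [hL] at h3
  simp at h3
  exact hca h3.1.1.symm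

theorem free_center {X : Type} {f : FreeGroup X} {a b : X} (hab : a ≠ b)
    (ha : Commute f (FreeGroup.of a)) (hb : Commute f (FreeGroup.of b)) : f = 1 := by
  classical
  by_contra hf
  obtain ⟨s, L, h1⟩ := free_first hf ha
  obtain ⟨s', L', h2⟩ := free_first hf hb
  rw [h1] at h2
  simp at h2
  exact hab h2.1.1

end FreeGroupLemma

section Raag

variable {V : Type} {Γ : SimpleGraph V}

/-- generators -/
def gen (Γ : SimpleGraph V) (v : V) : RAAG Γ := PresentedGroup.of v

theorem gen_commute {v w : V} (h : Γ.Adj v w) : Commute (gen Γ v) (gen Γ w) := by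
  have : (QuotientGroup.mk ⁅FreeGroup.of v, FreeGroup.of w⁆ : RAAG Γ) = 1 :=
    PresentedGroup.one_of_mem ⟨v, w, h, rfl⟩
  exact commutatorElement_eq_one_iff_commute.1 this

/-- universal property -/
def rlift {G : Type} [Group G] (f : V → G) (h : ∀ v w, Γ.Adj v w → Commute (f v) (f w)) :
    RAAG Γ →* G :=
  PresentedGroup.toGroup (f := f) (by
    rintro r ⟨v, w, hvw, rfl⟩
    rw [map_commutatorElement]
    simpa [commutatorElement_eq_one_iff_commute] using h v w hvw)

@[simp]
theorem rlift_gen {G : Type} [Group G] (f : V → G)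
    (h : ∀ v w, Γ.Adj v w → Commute (f v) (f w)) (v : V) : rlift f h (gen Γ v) = f v :=
  PresentedGroup.toGroup.of _

theorem rext {G : Type} [Group G] {f g : RAAG Γ →* G} (h : ∀ v, f (gen Γ v) = g (gen Γ v)) :
    f = g :=
  PresentedGroup.ext h

open Classical in
/-- exponent sum -/
noncomputable def expo (Γ : SimpleGraph V) (v : V) : RAAG Γ →* Multiplicative ℤ :=
  rlift (fun u => if u = v then Multiplicative.ofAdd 1 else 1) (fun _ _ _ => Commute.all _ _)

theorem expo_self (v : V) : expo Γ v (gen Γ v) = Multiplicative.ofAdd 1 := by simp [expo]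

theorem expo_ne {v u : V} (h : u ≠ v) : expo Γ v (gen Γ u) = 1 := by simp [expo, h]

theorem gen_ne_one (v : V) : gen Γ v ≠ 1 := by
  intro h
  have := expo_self (Γ := Γ) v
  rw [h, map_one] at this
  exact absurd this (by decide)

theorem gen_zpow {v w : V} (hvw : v ≠ w) {m n : ℤ} (h : gen Γ v ^ m = gen Γ w ^ n) : m = 0 := by
  have := congrArg (expo Γ v) h
  rw [map_zpow, map_zpow, expo_self, expo_ne hvw.symm, one_zpow, ← ofAdd_zsmul] at this
  simpa using this

theorem pow_inner {G : Type} [Group G] (hf : Finite (Out G)) (φ : MulAut G) :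
    ∃ n : ℕ, 0 < n ∧ ∃ k : G, ∀ x, (φ ^ n) x = k * x * k⁻¹ := by
  obtain ⟨n, hn, h⟩ := (isOfFinOrder_iff_pow_eq_one).1 (isOfFinOrder_of_finite (outMk G φ))
  rw [← map_pow] at h
  obtain ⟨k, hk⟩ := outMk_eq_one.1 h
  exact ⟨n, hn, k, fun x => by rw [← hk]; simp⟩

open Classical in
/-- transvection endomorphism -/
noncomputable def trans (a b : V) (h : ∀ c, Γ.Adj a c → c = b ∨ Γ.Adj b c) (e : ℤ) :
    RAAG Γ →* RAAG Γ :=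
  rlift (fun u => if u = a then gen Γ a * gen Γ b ^ e else gen Γ u) (by
    have key : ∀ c, Γ.Adj a c → Commute (gen Γ a * gen Γ b ^ e) (gen Γ c) := by
      intro c hc
      refine (gen_commute hc).mul_left ?_
      rcases h c hc with rfl | h
      · exact (Commute.refl _).zpow_left _
      · exact (gen_commute h).zpow_left _
    intro v w hvw
    by_cases hv : v = a <;> by_cases hw : w = a
    · subst hv hw; exact absurd hvw (Γ.irrefl)
    · subst hv; simpa [hw] using key _ hvw
    · subst hw; simpa [hv] using (key _ hvw.symm).symm
    · simpa [hv, hw] using gen_commute hvw)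

theorem trans_a (a b : V) (h : ∀ c, Γ.Adj a c → c = b ∨ Γ.Adj b c) (e : ℤ) :
    trans a b h e (gen Γ a) = gen Γ a * gen Γ b ^ e := by simp [trans]

theorem trans_ne {a u : V} (b : V) (h : ∀ c, Γ.Adj a c → c = b ∨ Γ.Adj b c) (e : ℤ)
    (hu : u ≠ a) : trans a b h e (gen Γ u) = gen Γ u := by simp [trans, hu]

theorem trans_comp {a b : V} (hab : a ≠ b) (h : ∀ c, Γ.Adj a c → c = b ∨ Γ.Adj b c) (e : ℤ) :
    (trans a b h (-e)).comp (trans a b h e) = MonoidHom.id _ := by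
  apply rext
  intro u
  by_cases hu : u = a
  · subst hu
    simp [trans_a, trans_ne b h _ hab.symm]
  · simp [trans_ne b h _ hu]

theorem no_transvection (hf : Finite (Out (RAAG Γ))) {a b : V} (hab : a ≠ b)
    (h : ∀ c, Γ.Adj a c → c = b ∨ Γ.Adj b c) : False := by
  let T : MulAut (RAAG Γ) := MonoidHom.toMulEquiv (trans a b h 1) (trans a b h (-1))
    (trans_comp hab h 1) (by simpa using trans_comp hab h (-1))
  have hTa : T (gen Γ a) = gen Γ a * gen Γ b := by
    simpa [T] using trans_a a b h 1
  have hTb : T (gen Γ b) = gen Γ b := trans_ne b h 1 hab.symm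
  have hTn : ∀ n : ℕ, (T ^ n) (gen Γ a) = gen Γ a * gen Γ b ^ n := by
    intro n
    induction n with
    | zero => simp
    | succ n ih =>
      rw [pow_succ', MulAut.mul_apply, ih, map_mul, map_pow, hTa, hTb, mul_assoc, pow_succ']
  obtain ⟨n, hn, k, hk⟩ := pow_inner hf T
  have h1 := congrArg (expo Γ b) ((hTn n).symm.trans (hk (gen Γ a)))
  rw [map_mul, map_mul, map_mul, map_pow, expo_self, expo_ne hab, map_inv, one_mul, mul_one,
    mul_inv_cancel, ← ofAdd_nsmul] at h1
  simp at h1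
  omega

open Classical in
/-- partial conjugation endomorphism -/
noncomputable def pconj (C : Set V) (hC : ∀ u u', Γ.Adj u u' → (u ∈ C ↔ u' ∈ C)) (g : RAAG Γ) :
    RAAG Γ →* RAAG Γ :=
  rlift (fun u => if u ∈ C then gen Γ u else g * gen Γ u * g⁻¹) (by
    intro v w hvw
    by_cases hv : v ∈ C
    · have hw : w ∈ C := (hC v w hvw).1 hv
      simpa [hv, hw] using gen_commute hvw
    · have hw : w ∉ C := fun h => hv ((hC v w hvw).2 h)
      simpa [hv, hw] using (gen_commute hvw).map (MulAut.conj g).toMonoidHom)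

theorem pconj_in {C : Set V} (hC : ∀ u u', Γ.Adj u u' → (u ∈ C ↔ u' ∈ C)) (g : RAAG Γ) {u : V}
    (hu : u ∈ C) : pconj C hC g (gen Γ u) = gen Γ u := by simp [pconj, hu]

theorem pconj_out {C : Set V} (hC : ∀ u u', Γ.Adj u u' → (u ∈ C ↔ u' ∈ C)) (g : RAAG Γ) {u : V}
    (hu : u ∉ C) : pconj C hC g (gen Γ u) = g * gen Γ u * g⁻¹ := by simp [pconj, hu]

theorem pconj_comp {C : Set V} (hC : ∀ u u', Γ.Adj u u' → (u ∈ C ↔ u' ∈ C)) (g g' : RAAG Γ)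
    (hgg : g' * g = 1) (hg : pconj C hC g g' = g') :
    (pconj C hC g).comp (pconj C hC g') = MonoidHom.id _ := by
  apply rext
  intro u
  by_cases hu : u ∈ C
  · simp [pconj_in hC _ hu]
  · have : g' = g⁻¹ := eq_inv_of_mul_eq_one_left hgg
    rw [MonoidHom.comp_apply, pconj_out hC _ hu, map_mul, map_mul, map_inv, hg,
      pconj_out hC _ hu, this]
    simp only [MonoidHom.id_apply]
    group

theorem no_pconj (hf : Finite (Out (RAAG Γ))) (C : Set V)
    (hC : ∀ u u', Γ.Adj u u' → (u ∈ C ↔ u' ∈ C)) {v v' w : V} (hv : v ∈ C) (hv' : v' ∈ C)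
    (hw : w ∉ C) (hne : v ≠ v') (hna : ¬ Γ.Adj v v') : False := by
  classical
  let T : MulAut (RAAG Γ) := MonoidHom.toMulEquiv (pconj C hC (gen Γ v)) (pconj C hC (gen Γ v)⁻¹)
    (pconj_comp hC _ _ (by simp) (pconj_in hC _ hv))
    (pconj_comp hC _ _ (by simp) (by rw [map_inv, pconj_in hC _ hv]))
  have hTin : ∀ u ∈ C, T (gen Γ u) = gen Γ u := fun u hu => pconj_in hC _ hu
  have hTw : T (gen Γ w) = gen Γ v * gen Γ w * (gen Γ v)⁻¹ := pconj_out hC _ hw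
  have hTn : ∀ n : ℕ, ∀ u ∈ C, (T ^ n) (gen Γ u) = gen Γ u := by
    intro n u hu
    induction n with
    | zero => simp
    | succ n ih => rw [pow_succ', MulAut.mul_apply, ih, hTin u hu]
  have hTnw : ∀ n : ℕ, (T ^ n) (gen Γ w) = gen Γ v ^ n * gen Γ w * (gen Γ v ^ n)⁻¹ := by
    intro n
    induction n with
    | zero => simp
    | succ n ih =>
      rw [pow_succ', MulAut.mul_apply, ih, map_mul, map_mul, map_inv, map_pow, hTin v hv, hTw,
        pow_succ]
      group
  obtain ⟨n, hn, k, hk⟩ := pow_inner hf T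
  let π : RAAG Γ →* FreeGroup V :=
    rlift (fun u => if u = v ∨ u = v' ∨ u = w then FreeGroup.of u else 1) (by
      have h1 : ∀ c ∈ C, ¬ Γ.Adj c w := fun c hc h => hw ((hC _ _ h).1 hc)
      intro u u' huu
      by_cases hu : u = v ∨ u = v' ∨ u = w
      swap
      · simp [hu]
      by_cases hu' : u' = v ∨ u' = v' ∨ u' = w
      swap
      · simp [hu']
      exfalso
      rcases hu with rfl | rfl | rfl <;> rcases hu' with rfl | rfl | rfl
      · exact Γ.irrefl huu
      · exact hna huu
      · exact h1 _ hv huu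
      · exact hna huu.symm
      · exact Γ.irrefl huu
      · exact h1 _ hv' huu
      · exact h1 _ hv huu.symm
      · exact h1 _ hv' huu.symm
      · exact Γ.irrefl huu)
  have hπv : π (gen Γ v) = FreeGroup.of v := by simp [π]
  have hπv' : π (gen Γ v') = FreeGroup.of v' := by simp [π]
  have hπw : π (gen Γ w) = FreeGroup.of w := by simp [π]
  have hkc : ∀ u ∈ C, Commute k (gen Γ u) := by
    intro u hu
    have := (hTn n u hu).symm.trans (hk (gen Γ u))
    rw [eq_mul_inv_iff_mul_eq] at this
    exact this.symm
  have hk1 : π k = 1 := by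
    apply free_center hne
    · rw [← hπv]; exact (hkc v hv).map π
    · rw [← hπv']; exact (hkc v' hv').map π
  have h2 := congrArg π ((hTnw n).symm.trans (hk (gen Γ w)))
  simp only [map_mul, map_inv, map_pow, hk1, hπv, hπw] at h2
  rw [one_mul, inv_one, mul_one, mul_inv_eq_iff_eq_mul] at h2
  have hvw : v ≠ w := by rintro rfl; exact hw hv
  have h3 : FreeGroup.of v ^ n = 1 :=
    free_center hvw ((Commute.refl _).pow_left n) h2
  have h4 := FreeGroup.norm_of_pow v n
  rw [h3, FreeGroup.norm_one] at h4
  omega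

theorem connected_of_finite (hf : Finite (Out (RAAG Γ))) : Γ.Preconnected := by
  by_contra hcon
  simp only [SimpleGraph.Preconnected, not_forall] at hcon
  obtain ⟨v, w, hvw⟩ := hcon
  let C : Set V := {u | Γ.Reachable v u}
  have hC : ∀ u u', Γ.Adj u u' → (u ∈ C ↔ u' ∈ C) := fun u u' h =>
    ⟨fun hu => SimpleGraph.Reachable.trans hu h.reachable,
      fun hu => SimpleGraph.Reachable.trans hu h.symm.reachable⟩
  have hv : v ∈ C := SimpleGraph.Reachable.refl v
  have hw : w ∉ C := hvw
  by_cases hall : ∀ u ∈ C, u = v ∨ Γ.Adj v u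
  · by_cases hex : ∃ u ∈ C, u ≠ v
    · obtain ⟨u, hu, huv⟩ := hex
      exact no_transvection hf huv fun c hc => hall c ((hC _ _ hc).1 hu)
    · push Not at hex
      have hne : v ≠ w := by rintro rfl; exact hw hv
      refine no_transvection hf hne fun c hc => ?_
      have := hex c ((hC _ _ hc).1 hv)
      subst this
      exact absurd hc (Γ.irrefl)
  · push Not at hall
    obtain ⟨u, hu, h1, h2⟩ := hall
    exact no_pconj hf C hC hv hu hw h1.symm h2

open Classical in
/-- kill the generators in `S` -/
noncomputable def kill (Γ : SimpleGraph V) (S : Set V) : RAAG Γ →* RAAG Γ :=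
  rlift (fun u => if u ∈ S then 1 else gen Γ u) (by
    intro v w h
    by_cases hv : v ∈ S <;> by_cases hw : w ∈ S <;> simp [hv, hw, gen_commute h])

theorem kill_in {S : Set V} {u : V} (hu : u ∈ S) : kill Γ S (gen Γ u) = 1 := by simp [kill, hu]

theorem kill_out {S : Set V} {u : V} (hu : u ∉ S) : kill Γ S (gen Γ u) = gen Γ u := by
  simp [kill, hu]

theorem kill_kill (S : Set V) (x : RAAG Γ) : kill Γ S (kill Γ S x) = kill Γ S x := by
  have : (kill Γ S).comp (kill Γ S) = kill Γ S := by
    apply rext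
    intro u
    by_cases hu : u ∈ S
    · simp [kill_in hu]
    · simp [kill_out hu]
  exact DFunLike.congr_fun this x

end Raag

section Center

variable {V : Type} {Γ : SimpleGraph V}

/-- subgroup generated by the link -/
def linkSub (Γ : SimpleGraph V) (v : V) : Subgroup (RAAG Γ) :=
  Subgroup.closure (Set.image (gen Γ) {u | Γ.Adj v u})

theorem link_commute {v : V} {k : RAAG Γ} (hk : k ∈ linkSub Γ v) : Commute k (gen Γ v) := by
  have : linkSub Γ v ≤ Subgroup.centralizer {gen Γ v} := by
    rw [linkSub, Subgroup.closure_le]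
    rintro _ ⟨u, hu, rfl⟩
    rw [SetLike.mem_coe, Subgroup.mem_centralizer_singleton_iff]
    exact (gen_commute hu).symm.eq
  exact (Subgroup.mem_centralizer_singleton_iff.1 (this hk))

theorem link_kill {v : V} {k : RAAG Γ} (hk : k ∈ linkSub Γ v) : kill Γ {v} k = k := by
  have : linkSub Γ v ≤ (kill Γ {v}).eqLocus (MonoidHom.id _) := by
    rw [linkSub, Subgroup.closure_le]
    rintro _ ⟨u, hu, rfl⟩
    refine kill_out ?_
    rintro rfl
    exact Γ.irrefl hu
  exact this hk

theorem not_mem_link {v w : V} (h : ¬ Γ.Adj v w) : gen Γ w ∉ linkSub Γ v := by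
  intro hw
  have : linkSub Γ v ≤ (expo Γ w).ker := by
    rw [linkSub, Subgroup.closure_le]
    rintro _ ⟨u, hu, rfl⟩
    refine expo_ne ?_
    rintro rfl
    exact h hu
  have h1 : expo Γ w (gen Γ w) = 1 := this hw
  rw [expo_self] at h1
  exact absurd h1 (by decide)

/-- cosets of the link subgroup -/
abbrev LX (Γ : SimpleGraph V) (v : V) : Type := RAAG Γ ⧸ linkSub Γ v

/-- the action on the free group on the cosets -/
noncomputable def act (Γ : SimpleGraph V) (v : V) : RAAG Γ →* MulAut (FreeGroup (LX Γ v)) where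
  toFun g := FreeGroup.freeGroupCongr (MulAction.toPerm (kill Γ {v} g))
  map_one' := by
    apply MulEquiv.toMonoidHom_injective
    ext x
    simp
  map_mul' g h := by
    apply MulEquiv.toMonoidHom_injective
    ext x
    simp [mul_smul]

theorem act_of (v : V) (g : RAAG Γ) (x : LX Γ v) :
    act Γ v g (FreeGroup.of x) = FreeGroup.of (kill Γ {v} g • x) := by
  simp [act]

/-- conjugates of the generator indexed by cosets -/
noncomputable def cosetConj (Γ : SimpleGraph V) (v : V) : LX Γ v → RAAG Γ :=
  Quotient.lift (fun h => kill Γ {v} h * gen Γ v * (kill Γ {v} h)⁻¹) (by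
    intro a b hab
    have hab' : a⁻¹ * b ∈ linkSub Γ v := QuotientGroup.leftRel_apply.1 hab
    obtain ⟨k, hk, rfl⟩ : ∃ k ∈ linkSub Γ v, b = a * k := ⟨_, hab', by group⟩
    have h1 := (link_commute hk).eq
    simp only [map_mul, link_kill hk]
    have : k * gen Γ v * k⁻¹ = gen Γ v := by rw [h1]; group
    calc _ = kill Γ {v} a * (k * gen Γ v * k⁻¹) * (kill Γ {v} a)⁻¹ := by rw [this]
      _ = _ := by group)

theorem cosetConj_mk (v : V) (h : RAAG Γ) :
    cosetConj Γ v (QuotientGroup.mk h) = kill Γ {v} h * gen Γ v * (kill Γ {v} h)⁻¹ := rfl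

/-- left inverse -/
noncomputable def semiBack (Γ : SimpleGraph V) (v : V) :
    FreeGroup (LX Γ v) ⋊[act Γ v] RAAG Γ →* RAAG Γ :=
  SemidirectProduct.lift (FreeGroup.lift (cosetConj Γ v)) (kill Γ {v}) (by
    intro g
    apply FreeGroup.ext_hom
    intro x
    induction x using QuotientGroup.induction_on with
    | H h =>
      simp only [MonoidHom.comp_apply, MulEquiv.coe_toMonoidHom, act_of, FreeGroup.lift_apply_of,
        MulAut.conj_apply]
      rw [MulAction.Quotient.smul_mk, cosetConj_mk, cosetConj_mk, smul_eq_mul, map_mul, kill_kill]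
      group)

open Classical in
/-- the map to the semidirect product -/
noncomputable def semiTo (Γ : SimpleGraph V) (v : V) :
    RAAG Γ →* FreeGroup (LX Γ v) ⋊[act Γ v] RAAG Γ :=
  rlift (fun u => if u = v then
      SemidirectProduct.inl (FreeGroup.of (QuotientGroup.mk 1))
    else SemidirectProduct.inr (gen Γ u)) (by
    have key : ∀ u, Γ.Adj v u → Commute (SemidirectProduct.inr (gen Γ u) :
        FreeGroup (LX Γ v) ⋊[act Γ v] RAAG Γ)
        (SemidirectProduct.inl (FreeGroup.of (QuotientGroup.mk 1))) := by
      intro u hu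
      have hk : gen Γ u ∈ linkSub Γ v := Subgroup.subset_closure ⟨u, hu, rfl⟩
      have h1 : act Γ v (gen Γ u) (FreeGroup.of (QuotientGroup.mk 1)) =
          FreeGroup.of (QuotientGroup.mk 1) := by
        rw [act_of, link_kill hk, MulAction.Quotient.smul_mk]
        congr 1
        rw [QuotientGroup.eq]
        simpa using hk
      have h2 := SemidirectProduct.inl_aut (φ := act Γ v) (gen Γ u)
        (FreeGroup.of (QuotientGroup.mk 1))
      rw [h1] at h2
      rw [map_inv, eq_mul_inv_iff_mul_eq] at h2
      exact h2.symm
    intro a b hab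
    by_cases ha : a = v <;> by_cases hb : b = v
    · subst ha hb; exact absurd hab Γ.irrefl
    · subst ha; simpa [hb] using (key b hab).symm
    · subst hb; simpa [ha] using key a hab.symm
    · simpa [ha, hb] using (gen_commute hab).map SemidirectProduct.inr)

theorem semiTo_self (v : V) : semiTo Γ v (gen Γ v) =
    SemidirectProduct.inl (FreeGroup.of (QuotientGroup.mk 1)) := by simp [semiTo]

theorem semiTo_ne {v u : V} (h : u ≠ v) : semiTo Γ v (gen Γ u) =
    SemidirectProduct.inr (gen Γ u) := by simp [semiTo, h]

theorem semiBack_semiTo (v : V) (x : RAAG Γ) : semiBack Γ v (semiTo Γ v x) = x := by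
  have : (semiBack Γ v).comp (semiTo Γ v) = MonoidHom.id _ := by
    apply rext
    intro u
    by_cases hu : u = v
    · subst hu
      rw [MonoidHom.comp_apply, semiTo_self, semiBack, SemidirectProduct.lift_inl,
        FreeGroup.lift_apply_of, cosetConj_mk]
      simp
    · rw [MonoidHom.comp_apply, semiTo_ne hu, semiBack, SemidirectProduct.lift_inr]
      exact kill_out hu
  exact DFunLike.congr_fun this x

theorem semiTo_right (v : V) (x : RAAG Γ) : (semiTo Γ v x).right = kill Γ {v} x := by
  have : SemidirectProduct.rightHom.comp (semiTo Γ v) = kill Γ {v} := by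
    apply rext
    intro u
    by_cases hu : u = v
    · subst hu
      rw [MonoidHom.comp_apply, semiTo_self, kill_in (Set.mem_singleton u)]
      simp
    · rw [MonoidHom.comp_apply, semiTo_ne hu, kill_out (S := {v}) (by simpa using hu)]
      simp
  exact DFunLike.congr_fun this x

theorem free_fix {X : Type} {f : FreeGroup X} {x y : X}
    (h : f * FreeGroup.of y = FreeGroup.of x * f) : y = x := by
  classical
  by_contra hne
  have := congrArg (FreeGroup.lift fun u : X =>
    if u = x then Multiplicative.ofAdd (1 : ℤ) else 1) h
  simp [hne] at this

theorem center_fix {v w : V} (hwv : w ≠ v) (hna : ¬ Γ.Adj v w) {z : RAAG Γ}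
    (hz : ∀ m, z * m = m * z) : kill Γ {v} z = z := by
  have key : ∀ x : LX Γ v, (∃ c : RAAG Γ, semiTo Γ v c = SemidirectProduct.inl (FreeGroup.of x)) →
      Commute (semiTo Γ v z).left (FreeGroup.of x) := by
    rintro x ⟨c, hc⟩
    have h1 := congrArg (fun y => (semiTo Γ v y).left) (hz c)
    simp only [map_mul, hc, SemidirectProduct.mul_left, SemidirectProduct.left_inl,
      SemidirectProduct.right_inl, map_one, MulAut.one_apply, act_of] at h1
    have h2 := free_fix h1
    rw [h2] at h1
    exact h1
  have hf : (semiTo Γ v z).left = 1 := by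
    have hne : (QuotientGroup.mk 1 : LX Γ v) ≠ QuotientGroup.mk (gen Γ w) := by
      rw [Ne, QuotientGroup.eq]
      simpa using not_mem_link hna
    apply free_center hne
    · exact key _ ⟨gen Γ v, semiTo_self v⟩
    · refine key _ ⟨gen Γ w * gen Γ v * (gen Γ w)⁻¹, ?_⟩
      rw [map_mul, map_mul, map_inv, semiTo_self, semiTo_ne hwv, ← map_inv,
        ← SemidirectProduct.inl_aut, act_of, kill_out (by simpa using hwv),
        MulAction.Quotient.smul_mk]
      simp
  have h3 : semiTo Γ v z = SemidirectProduct.inr (kill Γ {v} z) := by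
    ext
    · simp [hf]
    · simp [semiTo_right]
  have h4 := semiBack_semiTo v z
  rw [h3, semiBack, SemidirectProduct.lift_inr, kill_kill] at h4
  exact h4

theorem center_trivial [Fintype V] (hV : 2 ≤ Fintype.card V) (hf : Finite (Out (RAAG Γ)))
    (z : RAAG Γ) (hz : ∀ m, z * m = m * z) : z = 1 := by
  classical
  have : Nontrivial V := Fintype.one_lt_card_iff_nontrivial.1 hV
  have h1 : ∀ v, kill Γ {v} z = z := by
    intro v
    by_cases hcone : ∀ w, w ≠ v → Γ.Adj v w
    · obtain ⟨w, hw⟩ := exists_ne v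
      exact (no_transvection hf hw fun c hc => by
        by_cases hcv : c = v
        · exact Or.inl hcv
        · exact Or.inr (hcone c hcv)).elim
    · push Not at hcone
      obtain ⟨w, hw, hna⟩ := hcone
      exact center_fix hw hna hz
  have h2 : ∀ S : Finset V, kill Γ (S : Set V) z = z := by
    intro S
    induction S using Finset.induction_on with
    | empty =>
      have : kill Γ ((∅ : Finset V) : Set V) = MonoidHom.id _ :=
        rext fun u => kill_out (by simp)
      rw [this]; rfl
    | insert v S hv ih =>
      have : kill Γ ((insert v S : Finset V) : Set V) = (kill Γ {v}).comp (kill Γ S) := by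
        apply rext
        intro u
        by_cases huS : u ∈ S
        · rw [kill_in (by simp [huS]), MonoidHom.comp_apply, kill_in (by simpa using huS), map_one]
        · rw [MonoidHom.comp_apply, kill_out (S := (S : Set V)) (by simpa using huS)]
          by_cases huv : u = v
          · rw [kill_in (by simp [huv]), kill_in (by simp [huv])]
          · rw [kill_out (by simp [huS, huv]), kill_out (by simp [huv])]
      rw [this, MonoidHom.comp_apply, ih, h1]
  have h3 : kill Γ ((Finset.univ : Finset V) : Set V) = 1 := rext fun u => kill_in (by simp)
  rw [← h2 Finset.univ, h3, MonoidHom.one_apply]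

end Center

section Final

theorem elliptic_image {V : Type} {Γ : SimpleGraph V} [Nontrivial V] (hcon : Γ.Preconnected)
    {ι : Type} {M : ι → Type} [∀ i, Group (M i)] (φ : RAAG Γ →* CoprodI M)
    (hφ : Function.Injective φ) : ∃ g j, ∀ m, φ m ∈ CJ g j := by
  obtain ⟨v, v', hvv⟩ := exists_pair_ne V
  have hne : ∀ u, φ (gen Γ u) ≠ 1 := fun u h => gen_ne_one u (hφ (h.trans (map_one φ).symm))
  obtain ⟨w, hw⟩ : ∃ w, Γ.Adj v w := by
    obtain ⟨p⟩ := hcon v v'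
    cases p with
    | nil => exact absurd rfl hvv
    | cons h _ => exact ⟨_, h⟩
  have hell : ∃ g j, φ (gen Γ v) ∈ CJ g j := by
    rcases commute_dichotomy (hne v) (hne w) ((gen_commute hw).map φ) with h | ⟨m, n, hm, h⟩
    · exact h
    · rw [← map_zpow, ← map_zpow] at h
      exact absurd (gen_zpow hw.ne (hφ h)) hm
  obtain ⟨g, j, hg⟩ := hell
  refine ⟨g, j, ?_⟩
  have hall : ∀ u, φ (gen Γ u) ∈ CJ g j := by
    intro u
    have hr := hcon v u
    rw [SimpleGraph.reachable_iff_reflTransGen] at hr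
    induction hr with
    | refl => exact hg
    | tail _ hbc ih => exact commute_elliptic ih (hne _) ((gen_commute hbc).map φ)
  have htop : (CJ g j).comap φ = ⊤ := by
    rw [eq_top_iff, ← PresentedGroup.closure_range_of (raagRels Γ), Subgroup.closure_le]
    rintro _ ⟨u, rfl⟩
    exact hall u
  intro m
  have : m ∈ (CJ g j).comap φ := by rw [htop]; trivial
  exact this

theorem main_raag {V : Bool → Type} [∀ b, Fintype (V b)] (Γ : ∀ b, SimpleGraph (V b))
    (h : ∀ b, 2 ≤ Fintype.card (V b)) (hf : ∀ b, Finite (Out (RAAG (Γ b)))) :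
    ∃ Ψ : (∀ b, RAAG (Γ b)) →* Out (CoprodI fun b => RAAG (Γ b)),
      Function.Injective Ψ ∧ Ψ.range.FiniteIndex := by
  have hV : ∀ b, Nontrivial (V b) := fun b => Fintype.one_lt_card_iff_nontrivial.1 (h b)
  have hN : ∀ b, Nontrivial (RAAG (Γ b)) := fun b => by
    obtain ⟨v, _⟩ := exists_pair_ne (V b)
    exact ⟨gen (Γ b) v, 1, gen_ne_one v⟩
  refine main_coprod ?_ (fun i z hz => center_trivial (h i) (hf i) z hz) hf
  intro φ i
  exact elliptic_image (connected_of_finite (hf i))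
    (φ.toMonoidHom.comp (CoprodI.of (M := fun b => RAAG (Γ b)) (i := i)))
    (φ.injective.comp (CoprodI.of_injective i))

/-- isomorphic groups have isomorphic outer automorphism groups -/
noncomputable def outCongr {G H : Type} [Group G] [Group H] (e : G ≃* H) : Out G ≃* Out H :=
  QuotientGroup.congr _ _ (MulAut.congr e) (by
    ext φ
    constructor
    · rintro ⟨_, ⟨g, rfl⟩, rfl⟩
      refine ⟨e g, ?_⟩
      ext x
      simp [MulAut.congr]
    · rintro ⟨g, rfl⟩
      refine ⟨MulAut.conj (e.symm g), ⟨_, rfl⟩, ?_⟩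
      ext x
      simp [MulAut.congr])

/-- the two vertex sets as a family -/
def vfam (V₁ V₂ : Type) : Bool → Type
  | false => V₁
  | true => V₂

/-- the two graphs as a family -/
def gfam {V₁ V₂ : Type} (Γ₁ : SimpleGraph V₁) (Γ₂ : SimpleGraph V₂) :
    ∀ b, SimpleGraph (vfam V₁ V₂ b)
  | false => Γ₁
  | true => Γ₂

/-- the free product decomposition -/
noncomputable def sumEquiv {V₁ V₂ : Type} (Γ₁ : SimpleGraph V₁) (Γ₂ : SimpleGraph V₂) :
    (CoprodI fun b => RAAG (gfam Γ₁ Γ₂ b)) ≃* RAAG (graphSum Γ₁ Γ₂) :=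
  MonoidHom.toMulEquiv
    (CoprodI.lift fun b => match b with
      | false => rlift (Γ := Γ₁) (fun v => gen (graphSum Γ₁ Γ₂) (Sum.inl v))
          (fun _ _ h => gen_commute (Γ := graphSum Γ₁ Γ₂) h)
      | true => rlift (Γ := Γ₂) (fun v => gen (graphSum Γ₁ Γ₂) (Sum.inr v))
          (fun _ _ h => gen_commute (Γ := graphSum Γ₁ Γ₂) h))
    (rlift (fun u => match u with
      | Sum.inl v => CoprodI.of (M := fun b => RAAG (gfam Γ₁ Γ₂ b)) (i := false) (gen Γ₁ v)
      | Sum.inr v => CoprodI.of (M := fun b => RAAG (gfam Γ₁ Γ₂ b)) (i := true) (gen Γ₂ v)) (by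
        rintro (a | a) (b | b) h
        · exact (gen_commute (Γ := Γ₁) h).map
            (CoprodI.of (M := fun b => RAAG (gfam Γ₁ Γ₂ b)) (i := false))
        · exact h.elim
        · exact h.elim
        · exact (gen_commute (Γ := Γ₂) h).map
            (CoprodI.of (M := fun b => RAAG (gfam Γ₁ Γ₂ b)) (i := true))))
    (by
      apply CoprodI.ext_hom
      intro i
      cases i
      · apply rext (Γ := Γ₁)
        intro v
        erw [MonoidHom.comp_apply, MonoidHom.comp_apply, CoprodI.lift_of, rlift_gen]
      · apply rext (Γ := Γ₂)
        intro v
        erw [MonoidHom.comp_apply, MonoidHom.comp_apply, CoprodI.lift_of, rlift_gen])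
    (by
      apply rext
      rintro (v | v)
      · rw [MonoidHom.comp_apply, rlift_gen]
        erw [CoprodI.lift_of, rlift_gen]
      · rw [MonoidHom.comp_apply, rlift_gen]
        erw [CoprodI.lift_of, rlift_gen])

/-- a product over `Bool` -/
def prodEquiv {V₁ V₂ : Type} (Γ₁ : SimpleGraph V₁) (Γ₂ : SimpleGraph V₂) :
    (∀ b, RAAG (gfam Γ₁ Γ₂ b)) ≃* RAAG Γ₁ × RAAG Γ₂ where
  toFun x := (x false, x true)
  invFun y b := match b with
    | false => y.1
    | true => y.2
  left_inv x := by funext b; cases b <;> rfl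
  right_inv y := rfl
  map_mul' x y := rfl

end Final

end OutRaag

theorem out_raag_disjointUnion_has_finiteIndex_product_subgroup
    {V₁ V₂ : Type} [Fintype V₁] [Fintype V₂]
    (Γ₁ : SimpleGraph V₁) (Γ₂ : SimpleGraph V₂)
    (h₁ : 2 ≤ Fintype.card V₁) (h₂ : 2 ≤ Fintype.card V₂)
    (hf₁ : Finite (Out (RAAG Γ₁))) (hf₂ : Finite (Out (RAAG Γ₂))) :
    ∃ H : Subgroup (Out (RAAG (graphSum Γ₁ Γ₂))), H.FiniteIndex ∧
      Nonempty (H ≃* (RAAG Γ₁ × RAAG Γ₂)) := by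
  have i1 : ∀ b, Fintype (OutRaag.vfam V₁ V₂ b) := fun b => match b with
    | false => inferInstanceAs (Fintype V₁)
    | true => inferInstanceAs (Fintype V₂)
  obtain ⟨Ψ, hinj, hfin⟩ := OutRaag.main_raag (OutRaag.gfam Γ₁ Γ₂)
    (fun b => match b with
      | false => by convert h₁; rfl
      | true => by convert h₂; rfl)
    (fun b => match b with
      | false => hf₁
      | true => hf₂)
  let e := OutRaag.outCongr (OutRaag.sumEquiv Γ₁ Γ₂)
  let Φ := e.toMonoidHom.comp Ψ
  have hΦ : Function.Injective Φ := e.injective.comp hinj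
  refine ⟨Φ.range, ?_, ⟨(MonoidHom.ofInjective hΦ).symm.trans (OutRaag.prodEquiv Γ₁ Γ₂)⟩⟩
  constructor
  rw [MonoidHom.range_comp]
  have : (Ψ.range.map e.toMonoidHom).index = Ψ.range.index :=
    Subgroup.index_map_equiv _ e
  rw [this]
  exact hfin.index_ne_zero
end

section
/- Let Γ be a finite simple graph. The outer automorphism group Out(A_Γ) is finite if and only if for every vertex u of Γ: (i) any two vertices of Γ lying outside st(u) are connected by a path all of whose vertices lie outside st(u); and (ii) for every vertex v, if lk(u) ⊆ st(v) then u = v. -/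
open scoped commutatorElement

/-- The star of a vertex: the vertex together with its neighbours
(the link being the neighbour set `Γ.neighborSet u`). -/
def star {V : Type*} (Γ : SimpleGraph V) (u : V) : Set V :=
  insert u (Γ.neighborSet u)

/-- Any two vertices outside the star of `u` are connected by a path all of whose
vertices lie outside the star of `u`. -/
def connectedOutsideStar {V : Type*} (Γ : SimpleGraph V) (u : V) : Prop :=
  ∀ x y : {v : V // v ∉ star Γ u}, (Γ.induce {v : V | v ∉ star Γ u}).Reachable x y


namespace RaagProof

section basics

variable {V : Type} {Γ : SimpleGraph V}

/-- generator -/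
def gen (Γ : SimpleGraph V) (v : V) : RAAG Γ := PresentedGroup.of v

/-- universal property -/
def lift {G : Type*} [Group G] (f : V → G) (hf : ∀ s t, Γ.Adj s t → Commute (f s) (f t)) :
    RAAG Γ →* G :=
  PresentedGroup.toGroup (f := f) (by
    rintro r ⟨s, t, h, rfl⟩
    rw [map_commutatorElement, FreeGroup.lift_apply_of, FreeGroup.lift_apply_of,
      commutatorElement_eq_one_iff_commute]
    exact hf s t h)

@[simp] lemma lift_gen {G : Type*} [Group G] (f : V → G)
    (hf : ∀ s t, Γ.Adj s t → Commute (f s) (f t)) (s : V) : lift f hf (gen Γ s) = f s := by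
  simp [lift, gen]

lemma gen_comm {s t : V} (h : Γ.Adj s t) : Commute (gen Γ s) (gen Γ t) := by
  rw [← commutatorElement_eq_one_iff_commute]
  have : (⁅FreeGroup.of s, FreeGroup.of t⁆ : FreeGroup V) ∈ raagRels Γ := ⟨s, t, h, rfl⟩
  have h2 := PresentedGroup.one_of_mem this
  rw [map_commutatorElement] at h2
  exact h2

lemma ind_right {p : RAAG Γ → Prop} (x : RAAG Γ) (one : p 1)
    (mul : ∀ x s, p x → p (x * gen Γ s)) (inv : ∀ x s, p x → p (x * (gen Γ s)⁻¹)) : p x := by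
  have hx : x ∈ Subgroup.closure (Set.range (PresentedGroup.of : V → RAAG Γ)) := by
    rw [PresentedGroup.closure_range_of]; trivial
  induction hx using Subgroup.closure_induction_right with
  | one => exact one
  | mul_right x y hy h ih =>
    obtain ⟨s, rfl⟩ := h
    exact mul _ _ ih
  | mul_inv_cancel x y hy h ih =>
    obtain ⟨s, rfl⟩ := h
    exact inv _ _ ih

lemma hom_ext' {G : Type*} [Group G] {f g : RAAG Γ →* G} (h : ∀ s, f (gen Γ s) = g (gen Γ s)) :
    f = g := PresentedGroup.ext h

/-- parabolic subgroup -/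
def Par (Γ : SimpleGraph V) (T : Set V) : Subgroup (RAAG Γ) := Subgroup.closure (gen Γ '' T)

/-- link subgroup -/
def L (Γ : SimpleGraph V) (v : V) : Subgroup (RAAG Γ) := Par Γ (Γ.neighborSet v)

lemma gen_mem_Par {T : Set V} {s : V} (h : s ∈ T) : gen Γ s ∈ Par Γ T :=
  Subgroup.subset_closure ⟨s, h, rfl⟩

lemma Par_mono {T T' : Set V} (h : T ⊆ T') : Par Γ T ≤ Par Γ T' :=
  Subgroup.closure_mono (Set.image_mono h)

lemma Par_le {T : Set V} {K : Subgroup (RAAG Γ)} (h : ∀ s ∈ T, gen Γ s ∈ K) : Par Γ T ≤ K := by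
  rw [Par, Subgroup.closure_le]
  rintro _ ⟨s, hs, rfl⟩
  exact h s hs

lemma L_comm {v : V} {x : RAAG Γ} (hx : x ∈ L Γ v) : Commute (gen Γ v) x := by
  have : L Γ v ≤ Subgroup.centralizer {gen Γ v} := by
    apply Par_le
    intro s hs
    rw [Subgroup.mem_centralizer_singleton_iff]
    exact (gen_comm (Γ := Γ) hs).symm.eq
  have h := this hx
  rw [Subgroup.mem_centralizer_singleton_iff] at h
  exact h.symm

open Classical in
/-- right translation recording crossings -/
noncomputable def stepFun (Γ : SimpleGraph V) (v s : V) : Equiv.Perm (RAAG Γ × ℤ) where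
  toFun p := (p.1 * gen Γ s, p.2 + if s = v ∧ p.1 ∈ L Γ v then 1 else 0)
  invFun p := (p.1 * (gen Γ s)⁻¹, p.2 - if s = v ∧ p.1 * (gen Γ s)⁻¹ ∈ L Γ v then 1 else 0)
  left_inv p := by simp
  right_inv p := by simp

open Classical in
lemma stepFun_comm (v : V) {s t : V} (h : Γ.Adj s t) :
    Commute (stepFun Γ v s) (stepFun Γ v t) := by
  ext1 p
  have hc := (gen_comm h).eq
  have key : ∀ s t : V, Γ.Adj s t → ∀ x : RAAG Γ,
      (s = v ∧ x * gen Γ t ∈ L Γ v ↔ s = v ∧ x ∈ L Γ v) := by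
    intro s t h x
    constructor
    · rintro ⟨rfl, h1⟩
      exact ⟨rfl, (Subgroup.mul_mem_cancel_right _ (gen_mem_Par h)).1 h1⟩
    · rintro ⟨rfl, h1⟩
      exact ⟨rfl, Subgroup.mul_mem _ h1 (gen_mem_Par h)⟩
  simp only [Equiv.Perm.coe_mul, Function.comp, stepFun, Equiv.coe_fn_mk, mul_assoc, hc, Prod.mk.injEq,
    true_and, key s t h, key t s h.symm]
  ring

/-- crossing homomorphism -/
noncomputable def theta (Γ : SimpleGraph V) (v : V) : RAAG Γ →* Equiv.Perm (RAAG Γ × ℤ) :=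
  lift (fun s => (stepFun Γ v s)⁻¹) (fun _ _ h => (stepFun_comm v h).inv_inv)

/-- signed crossing number of the wall between `1` and `v` -/
noncomputable def chi (v : V) (x : RAAG Γ) : ℤ := ((theta Γ v x)⁻¹ (1, 0)).2

lemma theta_mul_gen (v s : V) (x : RAAG Γ) (p : RAAG Γ × ℤ) :
    (theta Γ v (x * gen Γ s))⁻¹ p = stepFun Γ v s ((theta Γ v x)⁻¹ p) := by
  simp [theta]

lemma theta_fst (v : V) (x : RAAG Γ) : ((theta Γ v x)⁻¹ (1, 0)).1 = x := by
  induction x using ind_right with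
  | one => simp
  | mul x s ih => rw [theta_mul_gen]; simp only [stepFun, Equiv.coe_fn_mk, ih]
  | inv x s ih =>
    have h := theta_mul_gen v s (x * (gen Γ s)⁻¹) (1, 0)
    rw [inv_mul_cancel_right] at h
    rw [h] at ih
    simp only [stepFun, Equiv.coe_fn_mk] at ih
    exact eq_mul_inv_of_mul_eq ih

open Classical in
lemma chi_mul (v s : V) (x : RAAG Γ) :
    chi v (x * gen Γ s) = chi v x + if s = v ∧ x ∈ L Γ v then 1 else 0 := by
  unfold chi
  rw [theta_mul_gen]
  simp only [stepFun, Equiv.coe_fn_mk, theta_fst]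

lemma chi_one (v : V) : chi v (1 : RAAG Γ) = 0 := by simp [chi]

lemma not_adj_self (v : V) : v ∉ Γ.neighborSet v := by simp

lemma chi_mul_ne {v s : V} (h : s ≠ v) (x : RAAG Γ) : chi v (x * gen Γ s) = chi v x := by
  rw [chi_mul]; simp [h]

lemma chi_mul_Par {v : V} {T : Set V} (hv : v ∉ T) {l : RAAG Γ} (hl : l ∈ Par Γ T) :
    ∀ x : RAAG Γ, chi v (x * l) = chi v x := by
  induction hl using Subgroup.closure_induction with
  | mem y hy =>
    obtain ⟨s, hs, rfl⟩ := hy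
    intro x
    exact chi_mul_ne (by rintro rfl; exact hv hs) x
  | one => simp
  | mul y z _ _ h1 h2 => intro x; rw [← mul_assoc, h2, h1]
  | inv y _ h1 => intro x; rw [← h1 (x * y⁻¹)]; simp

lemma chi_L {v : V} {x : RAAG Γ} (hx : x ∈ L Γ v) : chi v x = 0 := by
  have := chi_mul_Par (not_adj_self v) hx 1
  rwa [one_mul, chi_one] at this

lemma chi_zero_or_one (v : V) (x : RAAG Γ) : chi v x = 0 ∨ chi v x = 1 := by
  induction x using ind_right with
  | one => left; exact chi_one v
  | mul x s ih =>
    rw [chi_mul]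
    split_ifs with h
    · right; rw [chi_L h.2]; simp
    · simpa using ih
  | inv x s ih =>
    have h := chi_mul v s (x * (gen Γ s)⁻¹)
    rw [inv_mul_cancel_right] at h
    split_ifs at h with h1
    · left; exact chi_L h1.2
    · rw [h] at ih; simpa using ih

/-- positive halfspace of the wall between `a` and `a v`. -/
def H (v : V) (a : RAAG Γ) : Set (RAAG Γ) := {x | chi v (a⁻¹ * x) = 1}

lemma base_notMem (v : V) (a : RAAG Γ) : a ∉ H v a := by simp [H, chi_one]

lemma mul_gen_mem (v t : V) (a x : RAAG Γ) :
    x * gen Γ t ∈ H v a ↔ x ∈ H v a ∨ (t = v ∧ a⁻¹ * x ∈ L Γ v) := by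
  simp only [H, Set.mem_ofPred_eq, ← mul_assoc]
  rw [chi_mul]
  split_ifs with h
  · rw [chi_L h.2]; simp [h]
  · simp [h]

lemma base_mul_mem (v : V) (a : RAAG Γ) : a * gen Γ v ∈ H v a := by
  rw [mul_gen_mem]; right; simp [one_mem]

lemma base_L_notMem {v : V} {a x : RAAG Γ} (h : a⁻¹ * x ∈ L Γ v) : x ∉ H v a := by
  simp [H, chi_L h]

lemma mul_Par_mem {v : V} {T : Set V} (hv : v ∉ T) {l : RAAG Γ} (hl : l ∈ Par Γ T) (a x : RAAG Γ) :
    x * l ∈ H v a ↔ x ∈ H v a := by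
  simp only [H, Set.mem_ofPred_eq, ← mul_assoc]
  rw [chi_mul_Par hv hl]

lemma mul_gen_mem_ne {v t : V} (h : t ≠ v) (a x : RAAG Γ) :
    x * gen Γ t ∈ H v a ↔ x ∈ H v a :=
  mul_Par_mem (T := {t}) (by simpa using h.symm) (gen_mem_Par (Set.mem_singleton t)) a x

lemma mul_gen_zpow_mem_ne {v t : V} (h : t ≠ v) (a x : RAAG Γ) (n : ℤ) :
    x * gen Γ t ^ n ∈ H v a ↔ x ∈ H v a :=
  mul_Par_mem (T := {t}) (by simpa using h.symm) (Subgroup.zpow_mem _ (gen_mem_Par (Set.mem_singleton t)) n) a x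

lemma mul_gen_inv_mem_ne {v t : V} (h : t ≠ v) (a x : RAAG Γ) :
    x * (gen Γ t)⁻¹ ∈ H v a ↔ x ∈ H v a :=
  mul_Par_mem (T := {t}) (by simpa using h.symm) (Subgroup.inv_mem _ (gen_mem_Par (Set.mem_singleton t))) a x

/-- left translation -/
lemma smul_mem (v : V) (g a x : RAAG Γ) : g * x ∈ H v (g * a) ↔ x ∈ H v a := by
  simp [H, mul_assoc]

lemma mem_mul_left (v : V) (g a x : RAAG Γ) : x ∈ H v (g * a) ↔ g⁻¹ * x ∈ H v a := by
  simp [H, mul_assoc]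

lemma L_mul_mem_one {v : V} {l : RAAG Γ} (hl : l ∈ L Γ v) (x : RAAG Γ) :
    chi v (l * x) = chi v x := by
  have hL : ∀ x, l * x ∈ L Γ v ↔ x ∈ L Γ v := fun x => Subgroup.mul_mem_cancel_left _ hl
  induction x using ind_right with
  | one => simp [chi_one, chi_L hl]
  | mul x s ih => rw [← mul_assoc, chi_mul, chi_mul, ih, hL]
  | inv x s ih =>
    have h := chi_mul v s (x * (gen Γ s)⁻¹)
    have h' := chi_mul v s (l * (x * (gen Γ s)⁻¹))
    rw [hL, mul_assoc, inv_mul_cancel_right] at h'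
    rw [inv_mul_cancel_right] at h
    rw [ih, h] at h'
    linarith

lemma H_eq_iff {v : V} {a b : RAAG Γ} : (H v a : Set (RAAG Γ)) = H v b ↔ a⁻¹ * b ∈ L Γ v := by
  constructor
  · intro h
    have h1 : b ∉ H v a := h ▸ base_notMem v b
    have h2 : b * gen Γ v ∈ H v a := h ▸ base_mul_mem v b
    rw [mul_gen_mem] at h2
    tauto
  · intro h
    ext x
    simp only [H, Set.mem_ofPred_eq]
    rw [← L_mul_mem_one h (b⁻¹ * x)]
    simp [mul_assoc]

/-- crossing of an edge -/
lemma cross {v t : V} {a x : RAAG Γ} (h : ¬ (x ∈ H v a ↔ x * gen Γ t ∈ H v a)) :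
    t = v ∧ a⁻¹ * x ∈ L Γ v ∧ x ∉ H v a ∧ x * gen Γ t ∈ H v a := by
  have := mul_gen_mem v t a x
  tauto

/-- one of the two sides of a wall -/
def IsSide (v : V) (a : RAAG Γ) (X : Set (RAAG Γ)) : Prop := X = H v a ∨ X = (H v a)ᶜ

lemma IsSide.iff {v : V} {a : RAAG Γ} {X : Set (RAAG Γ)} (h : IsSide v a X) {x y : RAAG Γ}
    (hxy : x ∈ H v a ↔ y ∈ H v a) : x ∈ X ↔ y ∈ X := by
  rcases h with rfl | rfl
  · exact hxy
  · simp [hxy]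

/-- walls with nonadjacent labels are nested -/
lemma nested {v s : V} (hvs : ¬ Γ.Adj v s) {a b : RAAG Γ} {X Y : Set (RAAG Γ)}
    (hX : IsSide v a X) (hY : IsSide s b Y) (h1 : a ∉ Y) (h2 : a * gen Γ v ∉ Y)
    (h3 : b ∉ X) (h4 : b * gen Γ s ∉ X) {x : RAAG Γ} (hx : x ∈ X) (hy : x ∈ Y) : False := by
  -- general crossing fact
  have key : ∀ {v s : V} (_ : ¬ Γ.Adj v s) {a b : RAAG Γ} {X Y : Set (RAAG Γ)}
    (_ : IsSide v a X) (_ : IsSide s b Y) (_ : a ∉ Y) (_ : a * gen Γ v ∉ Y) (z : RAAG Γ) (t : V),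
      (z ∈ Y → (z ∈ X ↔ z * gen Γ t ∈ X)) ∧
      (z * gen Γ t ∈ Y → (z ∈ X ↔ z * gen Γ t ∈ X)) := by
    intro v s hvs a b X Y hX hY h1 h2 z t
    by_cases hc : (z ∈ H v a ↔ z * gen Γ t ∈ H v a)
    · exact ⟨fun _ => hX.iff hc, fun _ => hX.iff hc⟩
    · obtain ⟨rfl, hl, -, -⟩ := cross hc
      have hs : s ∉ Γ.neighborSet t := hvs
      have e1 : z ∈ Y ↔ a ∈ Y := by
        apply hY.iff
        have := mul_Par_mem hs hl b a
        rwa [mul_inv_cancel_left] at this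
      have e2 : z * gen Γ t ∈ Y ↔ a * gen Γ t ∈ Y := by
        apply hY.iff
        have := mul_Par_mem hs hl b (a * gen Γ t)
        rw [mul_assoc, (L_comm hl).eq] at this
        rwa [mul_assoc, mul_inv_cancel_left] at this
      rw [e1, e2]
      tauto
  have k1 := @key v s hvs a b X Y hX hY h1 h2
  have k2 := @key s v (fun h => hvs h.symm) b a Y X hY hX h3 h4
  have main : ∀ y : RAAG Γ, x * y ∈ X ∧ x * y ∈ Y := by
    intro y
    induction y using ind_right with
    | one => simpa using ⟨hx, hy⟩
    | mul y t ih =>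
      rw [← mul_assoc]
      exact ⟨((k1 _ t).1 ih.2).1 ih.1, ((k2 _ t).1 ih.1).1 ih.2⟩
    | inv y t ih =>
      rw [← mul_assoc]
      have a1 := (k1 (x * y * (gen Γ t)⁻¹) t).2
      have a2 := (k2 (x * y * (gen Γ t)⁻¹) t).2
      rw [inv_mul_cancel_right] at a1 a2
      exact ⟨(a1 ih.2).2 ih.1, (a2 ih.1).2 ih.2⟩
  have := (main (x⁻¹ * a)).2
  rw [mul_inv_cancel_left] at this
  exact h1 this

/-- comparison of parallel halfspaces -/
lemma subset_of_pts {v : V} {a b p q r : RAAG Γ} (pa : p ∈ H v a) (pb : p ∈ H v b)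
    (qa : q ∉ H v a) (qb : q ∉ H v b) (ra : r ∉ H v a) (rb : r ∈ H v b) : H v a ⊆ H v b := by
  have hne : (H v a : Set (RAAG Γ)) ≠ H v b := fun h => ra (h ▸ rb)
  have e1 : b ∈ H v a ↔ b * gen Γ v ∈ H v a := by
    by_contra hc
    exact hne (H_eq_iff.2 (cross hc).2.1)
  have e2 : a ∈ H v b ↔ a * gen Γ v ∈ H v b := by
    by_contra hc
    exact hne (H_eq_iff.2 (cross hc).2.1).symm
  have hv : ¬ Γ.Adj v v := by simp
  have n := @nested V Γ v v hv a b
  have s1 : IsSide v a (H v a) := Or.inl rfl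
  have s2 : IsSide v a (H v a)ᶜ := Or.inr rfl
  have t1 : IsSide v b (H v b) := Or.inl rfl
  have t2 : IsSide v b (H v b)ᶜ := Or.inr rfl
  by_cases c1 : b ∈ H v a <;> by_cases c2 : a ∈ H v b
  · have := @n _ _ s2 t2 (by simpa using c2) (by simpa using e2.1 c2) (by simpa using c1)
      (by simpa using e1.1 c1) q qa qb
    exact this.elim
  · have := @n _ _ s2 t1 (by simpa using c2) (by simpa [← e2] using c2) (by simpa using c1)
      (by simpa using e1.1 c1) r ra rb
    exact this.elim
  · intro x hx
    by_contra hxb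
    exact @n _ _ s1 t2 (by simpa using c2) (by simpa using e2.1 c2) (by simpa using c1)
      (by simpa [← e1] using c1) x hx hxb
  · have := @n _ _ s1 t1 (by simpa using c2) (by simpa [← e2] using c2) (by simpa using c1)
      (by simpa [← e1] using c1) p pa pb
    exact this.elim

/-- set of walls of label `v` separating two points -/
def sep (v : V) (x y : RAAG Γ) : Set (Set (RAAG Γ)) :=
  {U | (∃ a, U = H v a) ∧ ¬ (x ∈ U ↔ y ∈ U)}

lemma sep_finite (v : V) (x y : RAAG Γ) : (sep v x y).Finite := by
  have main : ∀ z : RAAG Γ, (sep v x (x * z)).Finite := by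
    intro z
    induction z using ind_right with
    | one => simp [sep]
    | mul z s ih =>
      refine (ih.insert (H v (x * z))).subset ?_
      rintro U ⟨⟨a, rfl⟩, hU⟩
      by_cases hc : (x * z ∈ H v a ↔ x * z * gen Γ s ∈ H v a)
      · right
        refine ⟨⟨a, rfl⟩, ?_⟩
        rwa [hc, mul_assoc]
      · left
        exact H_eq_iff.2 (cross hc).2.1
    | inv z s ih =>
      refine (ih.insert (H v (x * z * (gen Γ s)⁻¹))).subset ?_
      rintro U ⟨⟨a, rfl⟩, hU⟩
      by_cases hc : (x * z * (gen Γ s)⁻¹ ∈ H v a ↔ x * z * (gen Γ s)⁻¹ * gen Γ s ∈ H v a)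
      · right
        refine ⟨⟨a, rfl⟩, ?_⟩
        rw [inv_mul_cancel_right] at hc
        rwa [← hc, mul_assoc]
      · left
        exact H_eq_iff.2 (cross hc).2.1
  have := main (x⁻¹ * y)
  rwa [mul_inv_cancel_left] at this

end basics

section chains

variable {V : Type} {Γ : SimpleGraph V}

/-- `g` translates the halfspace `H v a` strictly into itself. -/
def Skew (v : V) (g a : RAAG Γ) : Prop := H v (g * a) ⊂ H v a

lemma H_mul_subset (v : V) (g a b : RAAG Γ) : H v (g * a) ⊆ H v (g * b) ↔ H v a ⊆ H v b := by
  constructor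
  · intro h x hx
    have := h ((smul_mem v g a x).2 hx)
    exact (smul_mem v g b x).1 this
  · intro h x hx
    rw [mem_mul_left] at hx ⊢
    exact h hx

lemma H_mul_ssubset (v : V) (g a b : RAAG Γ) : H v (g * a) ⊂ H v (g * b) ↔ H v a ⊂ H v b := by
  rw [ssubset_iff_subset_not_subset, ssubset_iff_subset_not_subset, H_mul_subset, H_mul_subset]

lemma Skew.strictAnti {v : V} {g a : RAAG Γ} (h : Skew v g a) :
    StrictAnti (fun n : ℤ => (H v (g ^ n * a) : Set (RAAG Γ))) := by
  apply strictAnti_int_of_succ_lt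
  intro n
  have : g ^ (n + 1) * a = g ^ n * (g * a) := by rw [zpow_add_one, mul_assoc]
  rw [this]
  exact (H_mul_ssubset v _ _ _).2 h

lemma Skew.exists_notMem {v : V} {g a : RAAG Γ} (h : Skew v g a) (x : RAAG Γ) :
    ∃ n : ℕ, x ∉ H v (g ^ (n : ℤ) * a) := by
  by_contra hc
  push Not at hc
  have hinj : Function.Injective (fun n : ℕ => (H v (g ^ (n : ℤ) * a) : Set (RAAG Γ))) :=
    h.strictAnti.injective.comp Nat.cast_injective
  refine Set.infinite_of_injective_forall_mem hinj (s := sep v x a) ?_ (sep_finite v x a)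
  intro n
  refine ⟨⟨_, rfl⟩, ?_⟩
  have h0 : a ∉ H v (g ^ (n : ℤ) * a) := by
    intro ha
    have := h.strictAnti.antitone (Int.natCast_nonneg n) ha
    simp only [zpow_zero, one_mul] at this
    exact base_notMem v a this
  have := hc n
  tauto

lemma Skew.exists_mem {v : V} {g a : RAAG Γ} (h : Skew v g a) (x : RAAG Γ) :
    ∃ n : ℕ, x ∈ H v (g ^ (-(n : ℤ)) * a) := by
  by_contra hc
  push Not at hc
  have hinj : Function.Injective (fun n : ℕ => (H v (g ^ (-(n : ℤ)) * a) : Set (RAAG Γ))) :=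
    h.strictAnti.injective.comp (neg_injective.comp Nat.cast_injective)
  refine Set.infinite_of_injective_forall_mem hinj (s := sep v x (a * gen Γ v)) ?_ (sep_finite v x _)
  intro n
  refine ⟨⟨_, rfl⟩, ?_⟩
  have h0 : a * gen Γ v ∈ H v (g ^ (-(n : ℤ)) * a) := by
    have h1 : -(n : ℤ) ≤ 0 := by simp
    apply h.strictAnti.antitone h1
    simp only [zpow_zero, one_mul]
    exact base_mul_mem v a
  have := hc n
  tauto

lemma Skew.exists_cross {v : V} {g a : RAAG Γ} (h : Skew v g a) (x : RAAG Γ) :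
    ∃ k : ℤ, x ∈ H v (g ^ k * a) ∧ x ∉ H v (g ^ (k + 1) * a) := by
  obtain ⟨n, hn⟩ := h.exists_notMem x
  obtain ⟨m, hm⟩ := h.exists_mem x
  obtain ⟨k, hk, hk'⟩ := Int.exists_greatest_of_bdd (P := fun k => x ∈ H v (g ^ k * a))
    ⟨n, fun z hz => by
      by_contra hlt
      exact hn (h.strictAnti.antitone (not_le.1 hlt).le hz)⟩ ⟨_, hm⟩
  refine ⟨k, hk, fun hc => ?_⟩
  have := hk' _ hc
  omega

lemma skew_translate {v : V} {g a h : RAAG Γ} (hs : Skew v g a) (hc : Commute g h) :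
    Skew v g (h * a) := by
  unfold Skew
  rw [← mul_assoc, hc.eq, mul_assoc, H_mul_ssubset]
  exact hs

lemma skew_gen (v : V) : Skew v (gen Γ v) (1 : RAAG Γ) := by
  have h1 : (1 : RAAG Γ) ∉ H v (1 : RAAG Γ) := base_notMem v 1
  have hv : gen Γ v ∈ H v (1 : RAAG Γ) := by simpa using base_mul_mem v (1 : RAAG Γ)
  have hi : (gen Γ v)⁻¹ ∉ H v (1 : RAAG Γ) := by
    intro h
    have := (mul_gen_mem v v 1 (gen Γ v)⁻¹).2 (Or.inl h)
    rw [inv_mul_cancel] at this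
    exact h1 this
  unfold Skew
  have hr : gen Γ v ∉ H v (gen Γ v * 1) := by rw [mem_mul_left]; simpa using h1
  refine ⟨subset_of_pts (p := gen Γ v * gen Γ v) (q := 1) (r := gen Γ v) ?_ ?_ ?_ h1 hr hv, fun h => hr (h hv)⟩
  · rw [mem_mul_left]; simpa using hv
  · exact (mul_gen_mem v v 1 _).2 (Or.inl hv)
  · rw [mem_mul_left]; simpa using hi

lemma skew_conj (v : V) (g : RAAG Γ) (n : ℤ) : Skew v (g * gen Γ v * g⁻¹) (g * gen Γ v ^ n) := by
  have h := skew_translate (skew_gen (Γ := Γ) v) (Commute.refl (gen Γ v) |>.zpow_right n)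
  unfold Skew at h ⊢
  have e : g * gen Γ v * g⁻¹ * (g * gen Γ v ^ n) = g * (gen Γ v * gen Γ v ^ n) := by group
  rw [e, H_mul_ssubset]
  simpa using h

/-- the centralizer of a generator -/
lemma centralizer_gen {v : V} {z : RAAG Γ} (hz : Commute (gen Γ v) z) :
    ∃ n : ℤ, gen Γ v ^ n * z ∈ L Γ v := by
  obtain ⟨k, hk, hk'⟩ := (skew_gen (Γ := Γ) v).exists_cross z⁻¹
  rw [mem_mul_left] at hk hk'
  have e : ((gen Γ v) ^ (k + 1))⁻¹ * z⁻¹ * gen Γ v = ((gen Γ v) ^ k)⁻¹ * z⁻¹ := by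
    rw [mul_assoc, ← hz.inv_right.eq, ← mul_assoc]
    congr 1
    group
  rw [← e, mul_gen_mem] at hk
  rcases hk with h | ⟨-, h⟩
  · exact absurd h hk'
  · refine ⟨k + 1, ?_⟩
    have := Subgroup.inv_mem _ h
    rw [(hz.zpow_left (k+1)).eq]
    simpa using this

lemma centralizer_gen_Par {v : V} {z : RAAG Γ} (hz : Commute (gen Γ v) z) :
    z ∈ Par Γ (_root_.star Γ v) := by
  obtain ⟨n, hn⟩ := centralizer_gen hz
  have h1 : gen Γ v ^ n * z ∈ Par Γ (_root_.star Γ v) :=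
    Par_mono (Set.subset_insert _ _) hn
  exact (Subgroup.mul_mem_cancel_left _
    (Subgroup.zpow_mem _ (gen_mem_Par (Set.mem_insert _ _)) n)).1 h1

open Classical in
/-- abelianization -/
noncomputable def ab (Γ : SimpleGraph V) : RAAG Γ →* Multiplicative (V → ℚ) :=
  lift (fun v => Multiplicative.ofAdd (Pi.single v 1)) (fun _ _ _ => Commute.all _ _)

/-- exponent vector -/
noncomputable def ex (x : RAAG Γ) : V → ℚ := Multiplicative.toAdd (ab Γ x)

@[simp] lemma ex_one : ex (1 : RAAG Γ) = 0 := by simp [ex]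
@[simp] lemma ex_mul (x y : RAAG Γ) : ex (x * y) = ex x + ex y := by simp [ex]
@[simp] lemma ex_inv (x : RAAG Γ) : ex x⁻¹ = - ex x := by simp [ex]
@[simp] lemma ex_pow (x : RAAG Γ) (n : ℕ) : ex (x ^ n) = (n : ℚ) • ex x := by
  simp [ex, Nat.cast_smul_eq_nsmul]
@[simp] lemma ex_zpow (x : RAAG Γ) (n : ℤ) : ex (x ^ n) = (n : ℚ) • ex x := by
  simp [ex, Int.cast_smul_eq_zsmul]
open Classical in
lemma ex_gen (v : V) : ex (gen Γ v) = Pi.single v 1 := by simp [ex, ab]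
lemma ex_gen_self (v : V) : ex (gen Γ v) v = 1 := by classical simp [ex_gen]
lemma ex_gen_ne {v w : V} (h : w ≠ v) : ex (gen Γ v) w = 0 := by classical simp [ex_gen, h]
lemma ex_conj (x y : RAAG Γ) : ex (x * y * x⁻¹) = ex y := by simp
lemma ex_conj' (x y : RAAG Γ) : ex (x⁻¹ * y * x) = ex y := by simp

lemma ex_Par {T : Set V} {x : RAAG Γ} (hx : x ∈ Par Γ T) {v : V} (hv : v ∉ T) : ex x v = 0 := by
  induction hx using Subgroup.closure_induction with
  | mem y hy =>
    obtain ⟨s, hs, rfl⟩ := hy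
    exact ex_gen_ne (by rintro rfl; exact hv hs)
  | one => simp
  | mul y z _ _ h1 h2 => simp [h1, h2]
  | inv y _ h1 => simp [h1]

lemma centralizer_gen_L {v : V} {z : RAAG Γ} (hz : Commute (gen Γ v) z) (h0 : ex z v = 0) :
    z ∈ L Γ v := by
  obtain ⟨n, hn⟩ := centralizer_gen hz
  have := ex_Par hn (not_adj_self v)
  simp [ex_gen_self, h0] at this
  subst this
  simpa using hn

lemma alg_aux {G : Type*} [Group G] {g h : G} (hc : Commute g h) (a : G) (p q : ℤ) (i d : ℕ) :
    (g ^ p * (h ^ i * a))⁻¹ * (g ^ q * (h ^ (i + d) * a)) = a⁻¹ * (h ^ d * g ^ (q - p)) * a := by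
  have c1 : Commute (g ^ (q - p)) (h ^ d) := (hc.zpow_left _).pow_right _
  have c2 : Commute (g ^ (q - p)) (h ^ i) := (hc.zpow_left _).pow_right _
  rw [← c1.eq]
  calc (g ^ p * (h ^ i * a))⁻¹ * (g ^ q * (h ^ (i + d) * a))
      = a⁻¹ * ((h ^ i)⁻¹ * (g ^ (q - p) * h ^ i) * h ^ d) * a := by
        rw [pow_add, sub_eq_neg_add, zpow_add]; simp only [mul_inv_rev, zpow_neg, mul_assoc]
    _ = _ := by rw [c2.eq, inv_mul_cancel_left]

/-- an element stabilizing a halfspace up to powers -/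
lemma commute_pow {v : V} {g a h : RAAG Γ} (hs : Skew v g a) (hc : Commute g h) :
    ∃ m : ℕ, 0 < m ∧ ∃ k : ℤ, a⁻¹ * (h ^ m * g ^ k) * a ∈ L Γ v := by
  have h1 : ∀ i : ℕ, ∃ k : ℤ, (1 : RAAG Γ) ∈ H v (g ^ k * (h ^ i * a)) ∧
      (1 : RAAG Γ) ∉ H v (g ^ (k + 1) * (h ^ i * a)) := fun i =>
    (skew_translate hs (hc.pow_right i)).exists_cross 1
  choose k hk hk' using h1
  have hfin := sep_finite v (1 : RAAG Γ) g⁻¹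
  have hmem : ∀ i, H v (g ^ k i * (h ^ i * a)) ∈ sep v (1 : RAAG Γ) g⁻¹ := by
    intro i
    refine ⟨⟨_, rfl⟩, ?_⟩
    have := hk' i
    rw [add_comm, zpow_one_add, mul_assoc, mem_mul_left, mul_one] at this
    have := hk i
    tauto
  have hni : ¬ Function.Injective (fun i => (H v (g ^ k i * (h ^ i * a)) : Set (RAAG Γ))) :=
    fun hinj => Set.infinite_of_injective_forall_mem hinj hmem hfin
  have : ∃ i j : ℕ, i < j ∧ (H v (g ^ k i * (h ^ i * a)) : Set (RAAG Γ)) = H v (g ^ k j * (h ^ j * a)) := by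
    simp only [Function.Injective] at hni
    push Not at hni
    obtain ⟨i, j, he, hne⟩ := hni
    rcases lt_or_gt_of_ne hne with hl | hl
    · exact ⟨i, j, hl, he⟩
    · exact ⟨j, i, hl, he.symm⟩
  obtain ⟨i, j, hij, he⟩ := this
  rw [H_eq_iff] at he
  refine ⟨j - i, by omega, k j - k i, ?_⟩
  have e : (g ^ k i * (h ^ i * a))⁻¹ * (g ^ k j * (h ^ j * a)) =
      a⁻¹ * (h ^ (j - i) * g ^ (k j - k i)) * a := by
    have := alg_aux hc a (k i) (k j) i (j - i)
    rwa [Nat.add_sub_cancel' hij.le] at this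
  rwa [e] at he

/-- elliptic elements do not skewer -/
lemma not_skew_of_elliptic {w : V} {h x a : RAAG Γ} (hx : x⁻¹ * h * x ∈ Par Γ {w}ᶜ) :
    ¬ Skew w h a := by
  intro hs
  have hw : w ∉ ({w}ᶜ : Set V) := by simp
  have key : ∀ n : ℤ, x ∈ H w (h ^ n * a) ↔ x ∈ H w a := by
    intro n
    rw [mem_mul_left]
    have : (h ^ n)⁻¹ * x = x * (x⁻¹ * h * x) ^ (-n) := by
      have : x⁻¹ * h * x = MulAut.conj x⁻¹ h := by simp
      rw [this, ← map_zpow]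
      simp [mul_assoc]
    rw [this]
    exact mul_Par_mem hw (Subgroup.zpow_mem _ hx _) _ _
  obtain ⟨n, hn⟩ := hs.exists_notMem x
  obtain ⟨m, hm⟩ := hs.exists_mem x
  rw [key] at hn hm
  exact hn hm

/-- first wall on the way out of the coset of `Par {w}ᶜ` -/
lemma first_wall (w : V) (y : RAAG Γ) : y ∈ Par Γ {w}ᶜ ∨ ∃ b ∈ Par Γ {w}ᶜ,
    y ∈ H w b ∨ y ∉ H w (b * (gen Γ w)⁻¹) := by
  have hLB : L Γ w ≤ Par Γ {w}ᶜ := Par_mono (by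
    intro t ht; rintro rfl; exact not_adj_self _ ht)
  induction y using ind_right with
  | one => left; exact one_mem _
  | mul y s ih =>
    by_cases hs : s = w
    · subst hs
      rcases ih with h | ⟨b, hb, h | h⟩
      · exact Or.inr ⟨y, h, Or.inl (base_mul_mem _ _)⟩
      · exact Or.inr ⟨b, hb, Or.inl ((mul_gen_mem _ _ _ _).2 (Or.inl h))⟩
      · by_cases h2 : y * gen Γ s ∈ H s (b * (gen Γ s)⁻¹)
        · rw [mul_gen_mem] at h2
          rcases h2 with h2 | ⟨-, h2⟩
          · exact absurd h2 h
          · have h3 := L_comm h2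
            left
            have e : y * gen Γ s = b * ((b * (gen Γ s)⁻¹)⁻¹ * y) := by
              calc y * gen Γ s = b * (gen Γ s)⁻¹ * (((b * (gen Γ s)⁻¹)⁻¹ * y) * gen Γ s) := by group
                _ = _ := by rw [← h3.eq]; group
            rw [e]
            exact mul_mem hb (hLB h2)
        · exact Or.inr ⟨b, hb, Or.inr h2⟩
    · rcases ih with h | ⟨b, hb, h⟩
      · exact Or.inl (mul_mem h (gen_mem_Par hs))
      · refine Or.inr ⟨b, hb, ?_⟩
        rwa [mul_gen_mem_ne hs, mul_gen_mem_ne hs]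
  | inv y s ih =>
    by_cases hs : s = w
    · subst hs
      rcases ih with h | ⟨b, hb, h | h⟩
      · exact Or.inr ⟨y, h, Or.inr (base_notMem _ _)⟩
      · have h2 := mul_gen_mem s s b (y * (gen Γ s)⁻¹)
        rw [inv_mul_cancel_right] at h2
        rcases h2.1 h with h3 | ⟨-, h3⟩
        · exact Or.inr ⟨b, hb, Or.inl h3⟩
        · left
          have := mul_mem hb (hLB h3)
          rwa [mul_inv_cancel_left] at this
      · refine Or.inr ⟨b, hb, Or.inr fun h3 => h ?_⟩
        have := (mul_gen_mem s s (b * (gen Γ s)⁻¹) (y * (gen Γ s)⁻¹)).2 (Or.inl h3)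
        rwa [inv_mul_cancel_right] at this
    · rcases ih with h | ⟨b, hb, h⟩
      · exact Or.inl (mul_mem h (inv_mem (gen_mem_Par hs)))
      · refine Or.inr ⟨b, hb, ?_⟩
        rwa [mul_gen_inv_mem_ne hs, mul_gen_inv_mem_ne hs]

/-- an element not conjugate into `Par {w}ᶜ` skewers a halfspace -/
lemma exists_skew {w : V} {g : RAAG Γ} (hg : ∀ x : RAAG Γ, x⁻¹ * g * x ∉ Par Γ {w}ᶜ) :
    ∃ a, Skew w g a ∨ Skew w g⁻¹ a := by
  have hw : w ∉ ({w}ᶜ : Set V) := by simp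
  set f : RAAG Γ → ℕ := fun x => (sep w x (g * x)).ncard with hf
  obtain ⟨x0, hmin0⟩ : ∃ x0, ∀ x, f x0 ≤ f x := ⟨Function.argmin f, fun x => Function.argmin_le f x⟩
  -- pick the first wall
  obtain ⟨x1, c, hmin, hx, hsep⟩ : ∃ x1 c, (∀ x, f x1 ≤ f x) ∧
      (x1 = c ∨ x1 = c * gen Γ w) ∧ (x1 ∈ H w c ↔ ¬ g * x1 ∈ H w c) := by
    rcases first_wall w (x0⁻¹ * g * x0) with h | ⟨b, hb, h⟩
    · exact absurd h (hg x0)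
    have hfb : f (x0 * b) = f x0 := by
      simp only [hf]
      congr 1
      ext U
      refine and_congr_right ?_
      rintro ⟨a, rfl⟩
      rw [← mul_assoc, mul_Par_mem hw hb, mul_Par_mem hw hb]
    refine ⟨x0 * b, ?_⟩
    rcases h with h | h
    · refine ⟨x0 * b, fun x => hfb ▸ hmin0 x, Or.inl rfl, ?_⟩
      have h1 : g * (x0 * b) ∈ H w (x0 * b) := by
        rw [mem_mul_left, ← mul_assoc, ← mul_assoc, mul_Par_mem hw hb]
        exact h
      have h2 := base_notMem w (x0 * b)
      tauto
    · refine ⟨x0 * b * (gen Γ w)⁻¹, fun x => hfb ▸ hmin0 x, Or.inr (by group), ?_⟩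
      have h1 : g * (x0 * b) ∉ H w (x0 * b * (gen Γ w)⁻¹) := by
        rw [mul_assoc x0, mem_mul_left, ← mul_assoc, ← mul_assoc, mul_Par_mem hw hb]
        exact h
      have h2 := base_mul_mem w (x0 * b * (gen Γ w)⁻¹)
      rw [inv_mul_cancel_right] at h2
      tauto
  obtain ⟨x2, hx2⟩ : ∃ x2, (x1 = c ∧ x2 = c * gen Γ w) ∨ (x1 = c * gen Γ w ∧ x2 = c) := by
    rcases hx with h | h
    · exact ⟨_, Or.inl ⟨h, rfl⟩⟩
    · exact ⟨_, Or.inr ⟨h, rfl⟩⟩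
  have off : ∀ d, (H w d : Set (RAAG Γ)) ≠ H w c → (x1 ∈ H w d ↔ x2 ∈ H w d) := by
    intro d hd
    have : c ∈ H w d ↔ c * gen Γ w ∈ H w d := by
      by_contra hc
      exact hd (H_eq_iff.2 (cross hc).2.1)
    rcases hx2 with ⟨rfl, rfl⟩ | ⟨rfl, rfl⟩
    · exact this
    · exact this.symm
  have on : x1 ∈ H w c ↔ ¬ x2 ∈ H w c := by
    have a1 := base_notMem w c
    have a2 := base_mul_mem w c
    rcases hx2 with ⟨rfl, rfl⟩ | ⟨rfl, rfl⟩ <;> tauto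
  have goff : ∀ d, (H w d : Set (RAAG Γ)) ≠ H w (g * c) → (g * x1 ∈ H w d ↔ g * x2 ∈ H w d) := by
    intro d hd
    have e : d = g * (g⁻¹ * d) := by group
    have : (H w (g⁻¹ * d) : Set (RAAG Γ)) ≠ H w c := by
      intro h
      apply hd
      rw [H_eq_iff] at h ⊢
      simpa [mul_assoc] using h
    have := off _ this
    rw [e, smul_mem, smul_mem]
    exact this
  clear hx hx2
  have gx1 : g * x1 ∈ H w (g * c) ↔ x1 ∈ H w c := smul_mem _ _ _ _
  have gx2 : g * x2 ∈ H w (g * c) ↔ x2 ∈ H w c := smul_mem _ _ _ _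
  have hne : (H w (g * c) : Set (RAAG Γ)) ≠ H w c := by
    intro h
    rw [h] at gx1
    tauto
  have g1 := goff c hne.symm
  have g2 := off (g * c) hne
  have claim : x1 ∈ H w (g * c) ↔ x1 ∈ H w c := by
    by_contra hcon
    have hlt : f x2 < f x1 := by
      apply Set.ncard_lt_ncard _ (sep_finite _ _ _)
      refine ⟨?_, fun hsub => ?_⟩
      · rintro U ⟨⟨d, rfl⟩, hU⟩
        refine ⟨⟨d, rfl⟩, ?_⟩
        by_cases e1 : (H w d : Set (RAAG Γ)) = H w c
        · rw [e1] at hU ⊢; grind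
        by_cases e2 : (H w d : Set (RAAG Γ)) = H w (g * c)
        · rw [e2] at hU ⊢; grind
        have := off d e1
        have := goff d e2
        grind
      · have : H w c ∈ sep w x1 (g * x1) := ⟨⟨c, rfl⟩, by grind⟩
        have := (hsub this).2
        grind
    exact absurd (hmin x2) (not_le.2 hlt)
  refine ⟨c, ?_⟩
  by_cases hW : x1 ∈ H w c
  · right
    have hs : H w c ⊆ H w (g * c) := subset_of_pts (p := x1) (q := g * x2) (r := g * x1)
      (by grind) (by grind) (by grind) (by grind) (by grind) (by grind)
    unfold Skew
    rw [← H_mul_ssubset w g, mul_inv_cancel_left]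
    exact ⟨hs, fun h => hne (Set.Subset.antisymm h hs)⟩
  · left
    have hs : H w (g * c) ⊆ H w c := subset_of_pts (p := g * x2) (q := x1) (r := g * x1)
      (by grind) (by grind) (by grind) (by grind) (by grind) (by grind)
    exact ⟨hs, fun h => hne (Set.Subset.antisymm hs h)⟩

end chains

section supports

variable {V : Type} {Γ : SimpleGraph V}

open Classical in
/-- retraction to a parabolic -/
noncomputable def retr (Γ : SimpleGraph V) (T : Set V) : RAAG Γ →* RAAG Γ :=
  lift (fun s => if s ∈ T then gen Γ s else 1) (by
    intro s t h
    split_ifs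
    · exact gen_comm h
    · exact Commute.one_right _
    · exact Commute.one_left _
    · exact Commute.one_left _)

lemma retr_Par {T : Set V} {x : RAAG Γ} (hx : x ∈ Par Γ T) : retr Γ T x = x := by
  induction hx using Subgroup.closure_induction with
  | mem y hy =>
    obtain ⟨s, hs, rfl⟩ := hy
    simp [retr, hs]
  | one => simp
  | mul y z _ _ h1 h2 => simp [h1, h2]
  | inv y _ h1 => simp [h1]

lemma retr_mem {T T' : Set V} {x : RAAG Γ} (hx : x ∈ Par Γ T') : retr Γ T x ∈ Par Γ (T' ∩ T) := by
  have : Par Γ T' ≤ (Par Γ (T' ∩ T)).comap (retr Γ T) := by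
    apply Par_le
    intro s hs
    rw [Subgroup.mem_comap]
    by_cases h : s ∈ T
    · simpa [retr, h] using gen_mem_Par (Γ := Γ) (show s ∈ T' ∩ T from ⟨hs, h⟩)
    · simp [retr, h]
  exact this hx

/-- essential support -/
def Supp (g : RAAG Γ) : Set V := {w | ∀ x : RAAG Γ, x⁻¹ * g * x ∉ Par Γ {w}ᶜ}

lemma mem_Par_univ (g : RAAG Γ) : g ∈ Par Γ Set.univ := by
  induction g using ind_right with
  | one => exact one_mem _
  | mul y s ih => exact mul_mem ih (gen_mem_Par trivial)
  | inv y s ih => exact mul_mem ih (inv_mem (gen_mem_Par trivial))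

lemma conj_Supp [Fintype V] (g : RAAG Γ) : ∃ x : RAAG Γ, x⁻¹ * g * x ∈ Par Γ (Supp g) := by
  classical
  have main : ∀ F : Finset V, (∀ w ∈ F, w ∉ Supp g) → ∃ x : RAAG Γ, x⁻¹ * g * x ∈ Par Γ (F : Set V)ᶜ := by
    intro F
    induction F using Finset.induction_on with
    | empty =>
      intro _
      refine ⟨1, ?_⟩
      simp only [Finset.coe_empty, Set.compl_empty, inv_one, one_mul, mul_one]
      exact mem_Par_univ g
    | insert u F hu ih =>
      intro hF
      obtain ⟨x, hx⟩ := ih (fun w hw => hF w (Finset.mem_insert_of_mem hw))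
      have h1 := hF u (Finset.mem_insert_self _ _)
      simp only [Supp, Set.mem_ofPred_eq] at h1
      push Not at h1
      obtain ⟨y, hy⟩ := h1
      set r := retr Γ (F : Set V)ᶜ
      refine ⟨x * r (x⁻¹ * y), ?_⟩
      have e : (x * r (x⁻¹ * y))⁻¹ * g * (x * r (x⁻¹ * y)) = r (y⁻¹ * g * y) := by
        have e1 : y⁻¹ * g * y = (x⁻¹ * y)⁻¹ * (x⁻¹ * g * x) * (x⁻¹ * y) := by group
        rw [e1]
        generalize x⁻¹ * y = t
        rw [map_mul r, map_mul r, map_inv r, retr_Par hx]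
        group
      rw [e]
      have := retr_mem (T := (F : Set V)ᶜ) hy
      refine Par_mono ?_ this
      intro t ht
      simp only [Set.mem_inter_iff, Set.mem_compl_iff, Set.mem_singleton_iff, Finset.mem_coe] at ht
      simpa using ht
  obtain ⟨x, hx⟩ := main (Finset.univ.filter (fun w => w ∉ Supp g)) (by simp)
  refine ⟨x, Par_mono ?_ hx⟩
  intro t ht
  by_contra h
  simp [h] at ht

lemma fix_pow_aux {w : V} {g a h : RAAG Γ} (hs : Skew w g a) (hc : Commute g h) :
    ∃ m : ℕ, 0 < m ∧ ∃ k : ℤ, a⁻¹ * (h ^ m * g ^ k) * a ∈ L Γ w ∧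
      ((∃ x, x⁻¹ * h * x ∈ Par Γ {w}ᶜ) → k = 0) := by
  obtain ⟨m, hm, k, hk⟩ := commute_pow hs hc
  refine ⟨m, hm, k, hk, ?_⟩
  rintro ⟨x, hx⟩
  have ell : x⁻¹ * h ^ m * x ∈ Par Γ {w}ᶜ := by
    have : x⁻¹ * h ^ m * x = (x⁻¹ * h * x) ^ m := by
      have e := conj_pow (i := m) (a := x⁻¹) (b := h)
      simpa using e.symm
    rw [this]; exact pow_mem hx m
  have ell' : x⁻¹ * (h ^ m)⁻¹ * x ∈ Par Γ {w}ᶜ := by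
    have := inv_mem ell
    simpa [mul_assoc] using this
  have heq : (H w (h ^ m * a) : Set (RAAG Γ)) = H w (g ^ (-k) * a) := by
    symm
    rw [H_eq_iff]
    have e : (g ^ (-k) * a)⁻¹ * (h ^ m * a) = a⁻¹ * (h ^ m * g ^ k) * a := by
      have : Commute (g ^ k) (h ^ m) := (hc.zpow_left k).pow_right m
      rw [← this.eq]
      simp [mul_assoc]
    rwa [e]
  by_contra hk0
  rcases lt_or_gt_of_ne hk0 with hlt | hlt
  · apply not_skew_of_elliptic (a := a) ell
    unfold Skew
    rw [heq]
    have := hs.strictAnti (show (0 : ℤ) < -k by omega)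
    simpa using this
  · apply not_skew_of_elliptic (a := a) ell'
    unfold Skew
    rw [← H_mul_ssubset w (h ^ m), mul_inv_cancel_left, heq]
    have := hs.strictAnti (show -k < (0 : ℤ) by omega)
    simpa using this

lemma fix_pow {w : V} {g : RAAG Γ} (hw : w ∈ Supp g) :
    ∃ a : RAAG Γ, ∀ h, Commute g h → ∃ m : ℕ, 0 < m ∧ ∃ k : ℤ, a⁻¹ * (h ^ m * g ^ k) * a ∈ L Γ w ∧
      ((∃ x, x⁻¹ * h * x ∈ Par Γ {w}ᶜ) → k = 0) := by
  obtain ⟨a, ha | ha⟩ := exists_skew hw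
  · exact ⟨a, fun h hc => fix_pow_aux ha hc⟩
  · refine ⟨a, fun h hc => ?_⟩
    obtain ⟨m, hm, k, hk, hk'⟩ := fix_pow_aux ha hc.inv_left
    refine ⟨m, hm, -k, ?_, fun h => by rw [hk' h]; rfl⟩
    simpa using hk

/-- span of exponent vectors of the centralizer -/
noncomputable def M (g : RAAG Γ) : Submodule ℚ (V → ℚ) := Submodule.span ℚ (ex '' {h | Commute g h})

/-- coordinate subspace -/
def Q (T : Set V) : Submodule ℚ (V → ℚ) where
  carrier := {f | ∀ v, v ∉ T → f v = 0}
  add_mem' := by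
    intro a b ha hb v hv
    simp [ha v hv, hb v hv]
  zero_mem' := by intro v _; rfl
  smul_mem' := by
    intro c a ha v hv
    simp [ha v hv]

lemma mem_Q {T : Set V} {f : V → ℚ} : f ∈ Q T ↔ ∀ v, v ∉ T → f v = 0 := Iff.rfl

lemma finrank_Q [Fintype V] (T : Set V) : Module.finrank ℚ (Q T) = T.ncard := by
  classical
  have e : Q T = Submodule.span ℚ ((fun v => (Pi.single v 1 : V → ℚ)) '' T) := by
    apply le_antisymm
    · intro f hf
      have : f = ∑ v, f v • (Pi.single v 1 : V → ℚ) := by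
        ext w
        simp [Finset.sum_apply, Pi.single_apply]
      rw [this]
      apply Submodule.sum_mem
      intro v _
      by_cases hv : v ∈ T
      · exact Submodule.smul_mem _ _ (Submodule.subset_span ⟨v, hv, rfl⟩)
      · rw [hf v hv, zero_smul]; exact Submodule.zero_mem _
    · rw [Submodule.span_le]
      rintro _ ⟨v, hv, rfl⟩ w hw
      have : w ≠ v := by rintro rfl; exact hw hv
      simp [this]
  have hli : LinearIndependent ℚ (fun v : T => (Pi.single (v : V) 1 : V → ℚ)) := by
    have := (Pi.basisFun ℚ V).linearIndependent.comp (Subtype.val : T → V) Subtype.val_injective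
    convert this using 1
    ext v : 1
    simp
  have hr : ((fun v => (Pi.single v 1 : V → ℚ)) '' T) =
      Set.range (fun v : T => (Pi.single (v : V) 1 : V → ℚ)) := by
    rw [Set.image_eq_range]
  rw [e, hr, finrank_span_eq_card hli, ← Nat.card_eq_fintype_card, Nat.card_coe_set_eq]

lemma ex_mem_Q {T : Set V} {x y : RAAG Γ} (h : x⁻¹ * y * x ∈ Par Γ T) : ex y ∈ Q T := by
  intro v hv
  have := ex_Par h hv
  rwa [ex_conj'] at this

/-- degree -/
noncomputable def deg (Γ : SimpleGraph V) (v : V) : ℕ := (Γ.neighborSet v).ncard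

lemma le_M_gen [Fintype V] (v : V) : 1 + deg Γ v ≤ Module.finrank ℚ (M (gen Γ v)) := by
  classical
  have h1 : Module.finrank ℚ (Q (_root_.star Γ v)) = 1 + deg Γ v := by
    rw [finrank_Q, _root_.star, Set.ncard_insert_of_notMem (not_adj_self v) (Set.toFinite _), add_comm]
    rfl
  rw [← h1]
  apply Submodule.finrank_mono
  intro f hf
  have : f = ∑ v, f v • ex (gen Γ v) := by
    ext w
    simp [Finset.sum_apply, ex_gen, Pi.single_apply]
  rw [this]
  apply Submodule.sum_mem
  intro w _
  by_cases hw : w ∈ _root_.star Γ v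
  · refine Submodule.smul_mem _ _ (Submodule.subset_span ⟨_, ?_, rfl⟩)
    rcases hw with rfl | hw
    · exact Commute.refl _
    · exact gen_comm hw
  · rw [hf w hw, zero_smul]; exact Submodule.zero_mem _

lemma finrank_span_sup [Fintype V] (g : V → ℚ) (T : Set V) :
    Module.finrank ℚ ↥(Submodule.span ℚ {g} ⊔ Q T) ≤ 1 + T.ncard := by
  have h1 := Submodule.finrank_add_le_finrank_add_finrank (Submodule.span ℚ {g}) (Q T)
  have h2 : Module.finrank ℚ ↥(Submodule.span ℚ {g}) ≤ 1 := by
    have := finrank_span_le_card (R := ℚ) ({g} : Set (V → ℚ))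
    simpa using this
  rw [finrank_Q] at h1
  omega

lemma mem_sup_of_pow {g h : RAAG Γ} {T : Set V} {m : ℕ} (hm : 0 < m) {k : ℤ}
    (hmem : ex (h ^ m * g ^ k) ∈ Q T) : ex h ∈ Submodule.span ℚ {ex g} ⊔ Q T := by
  have hm0 : (m : ℚ) ≠ 0 := by exact_mod_cast hm.ne'
  have e : ex h = (-(k : ℚ) / m) • ex g + (1 / (m : ℚ)) • ex (h ^ m * g ^ k) := by
    rw [ex_mul, ex_pow, ex_zpow, smul_add, smul_smul, smul_smul, add_left_comm, ← add_smul]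
    have : -(k : ℚ) / m + 1 / m * k = 0 := by ring
    rw [this, one_div_mul_cancel hm0]; simp
  rw [e]
  exact Submodule.add_mem_sup (Submodule.smul_mem _ _ (Submodule.mem_span_singleton_self _))
    (Submodule.smul_mem _ _ hmem)

lemma M_le {w : V} {g : RAAG Γ} (hw : w ∈ Supp g) :
    M g ≤ Submodule.span ℚ {ex g} ⊔ Q (Γ.neighborSet w) := by
  obtain ⟨a, ha⟩ := fix_pow hw
  rw [M, Submodule.span_le]
  rintro _ ⟨h, hc, rfl⟩
  obtain ⟨m, hm, k, hk, -⟩ := ha h hc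
  exact mem_sup_of_pow hm (ex_mem_Q hk)

lemma finrank_M_le [Fintype V] {w : V} {g : RAAG Γ} (hw : w ∈ Supp g) :
    Module.finrank ℚ (M g) ≤ 1 + deg Γ w :=
  (Submodule.finrank_mono (M_le hw)).trans (finrank_span_sup _ _)

lemma finrank_M_lt [Fintype V] {w w' z : V} {g : RAAG Γ} (hw : w ∈ Supp g) (hw' : w' ∈ Supp g)
    (hne : w ≠ w') (hz : Γ.Adj w z) (hz' : z ∉ _root_.star Γ w') :
    Module.finrank ℚ (M g) ≤ deg Γ w := by
  have hz1 : z ≠ w' := fun h => hz' (Or.inl h)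
  have hz2 : z ∉ Γ.neighborSet w' := fun h => hz' (Or.inr h)
  by_cases hadj : Γ.Adj w w'
  · by_contra hlt
    have hN := finrank_span_sup (ex g) (Γ.neighborSet w)
    have hd : (Γ.neighborSet w).ncard = deg Γ w := rfl
    have heq := Submodule.eq_of_le_of_finrank_le (M_le hw) (by omega)
    have hle : Q (Γ.neighborSet w) ≤ Submodule.span ℚ {ex g} ⊔ Q (Γ.neighborSet w') :=
      (le_sup_right.trans heq.ge).trans (M_le hw')
    have h1 : ex (gen Γ w') ∈ Q (Γ.neighborSet w) := fun v hv => ex_gen_ne (by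
      rintro rfl; exact hv hadj)
    have h2 : ex (gen Γ z) ∈ Q (Γ.neighborSet w) := fun v hv => ex_gen_ne (by
      rintro rfl; exact hv hz)
    obtain ⟨y1, hy1, u1, hu1, e1⟩ := Submodule.mem_sup.1 (hle h1)
    obtain ⟨y2, hy2, u2, hu2, e2⟩ := Submodule.mem_sup.1 (hle h2)
    obtain ⟨c1, rfl⟩ := Submodule.mem_span_singleton.1 hy1
    obtain ⟨c2, rfl⟩ := Submodule.mem_span_singleton.1 hy2
    have a1 := congrFun e1 w'
    have a2 := congrFun e1 z
    have a4 := congrFun e2 z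
    simp only [Pi.add_apply, Pi.smul_apply, hu1 w' (not_adj_self w'), hu1 z hz2, hu2 z hz2,
      ex_gen_self, ex_gen_ne hz1, smul_eq_mul, add_zero] at a1 a2 a4
    have a3 := congrFun e2 w'
    simp only [Pi.add_apply, Pi.smul_apply, hu2 w' (not_adj_self w'),
      ex_gen_ne hz1.symm, smul_eq_mul, add_zero] at a3
    have : c1 ≠ 0 := by rintro rfl; simp at a1
    have : ex g z = 0 := by simpa [this] using a2
    simp [this] at a4
  · obtain ⟨a, ha⟩ := fix_pow hw
    obtain ⟨a', ha'⟩ := fix_pow hw'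
    have hle : M g ≤ Submodule.span ℚ {ex g} ⊔ Q (Γ.neighborSet w ∩ Γ.neighborSet w') := by
      rw [M, Submodule.span_le]
      rintro _ ⟨h, hc, rfl⟩
      obtain ⟨m, hm, k, hk, -⟩ := ha h hc
      have hcu : Commute g (h ^ m * g ^ k) :=
        (Commute.pow_right hc m).mul_right (Commute.self_zpow g k)
      obtain ⟨m', hm', k', hk', hk0⟩ := ha' _ hcu
      have hk0' := hk0 ⟨a, Par_mono (by intro t ht; rintro rfl; exact hadj ht) hk⟩
      subst hk0'
      refine mem_sup_of_pow (m := m) (k := k) hm ?_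
      have b1 := ex_mem_Q hk
      have b2 := ex_mem_Q hk'
      intro v hv
      by_cases hvw : v ∈ Γ.neighborSet w
      · have := b2 v (fun h => hv ⟨hvw, h⟩)
        rw [zpow_zero, mul_one, ex_pow] at this
        have hm0 : (m' : ℚ) ≠ 0 := by exact_mod_cast hm'.ne'
        simpa only [Pi.smul_apply, smul_eq_mul, mul_eq_zero, hm0, false_or] using this
      · exact b1 v hvw
    have h1 := (Submodule.finrank_mono hle).trans (finrank_span_sup _ _)
    have h2 : (Γ.neighborSet w ∩ Γ.neighborSet w').ncard < deg Γ w := by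
      apply Set.ncard_lt_ncard _ (Set.toFinite _)
      exact ⟨Set.inter_subset_left, fun h => hz2 (h hz).2⟩
    omega

/-- induced map on the rational abelianization -/
noncomputable def exlin [Fintype V] (φ : RAAG Γ →* RAAG Γ) : (V → ℚ) →ₗ[ℚ] (V → ℚ) :=
  Fintype.linearCombination ℚ (fun v => ex (φ (gen Γ v)))

lemma exlin_ex [Fintype V] (φ : RAAG Γ →* RAAG Γ) (x : RAAG Γ) : exlin φ (ex x) = ex (φ x) := by
  classical
  have hg : ∀ s, exlin φ (ex (gen Γ s)) = ex (φ (gen Γ s)) := by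
    intro s
    simp [exlin, ex_gen]
  induction x using ind_right with
  | one => simp
  | mul x s ih => simp [ih, hg]
  | inv x s ih => simp [ih, hg]

lemma finrank_M_map [Fintype V] (φ : MulAut (RAAG Γ)) (g : RAAG Γ) :
    Module.finrank ℚ (M (φ g)) ≤ Module.finrank ℚ (M g) := by
  refine le_trans (Submodule.finrank_mono (t := (M g).map (exlin (φ : RAAG Γ →* RAAG Γ))) ?_)
    (Submodule.finrank_map_le _ _)
  rw [M, Submodule.span_le]
  rintro _ ⟨h, hc, rfl⟩
  refine ⟨ex (φ.symm h), Submodule.subset_span ⟨_, ?_, rfl⟩, ?_⟩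
  · have : Commute (φ g) h := hc
    have := this.map φ.symm
    simpa using this
  · rw [exlin_ex]; simp

lemma deg_le [Fintype V] (φ : MulAut (RAAG Γ)) {u w : V} (hw : w ∈ Supp (φ (gen Γ u))) :
    deg Γ u ≤ deg Γ w := by
  have h1 := le_M_gen (Γ := Γ) u
  have h2 := finrank_M_map φ.symm (φ (gen Γ u))
  have h3 := finrank_M_le hw
  have e : φ.symm (φ (gen Γ u)) = gen Γ u := MulEquiv.symm_apply_apply φ _
  rw [e] at h2
  omega

lemma exlin_injective [Fintype V] (φ : MulAut (RAAG Γ)) :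
    Function.Injective (exlin (φ : RAAG Γ →* RAAG Γ)) := by
  classical
  have key : ∀ f, exlin (φ.symm : RAAG Γ →* RAAG Γ) (exlin (φ : RAAG Γ →* RAAG Γ) f) = f := by
    intro f
    have : f = ∑ v, f v • ex (gen Γ v) := by
      ext w
      simp [Finset.sum_apply, ex_gen, Pi.single_apply]
    rw [this]
    simp only [map_sum, map_smul, exlin_ex]
    simp
  exact Function.LeftInverse.injective key

lemma supp_subsingleton [Fintype V] (hii : ∀ u v : V, Γ.neighborSet u ⊆ _root_.star Γ v → u = v)
    (φ : MulAut (RAAG Γ)) (v : V) : (Supp (φ (gen Γ v))).Subsingleton := by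
  by_contra hns
  rw [Set.not_subsingleton_iff] at hns
  set T : Set V := {w | deg Γ v < deg Γ w} with hT
  have hsub : Supp (φ (gen Γ v)) ⊆ T := by
    intro w hw
    obtain ⟨w', hw', hne⟩ := hns.exists_ne w
    have : ¬ Γ.neighborSet w ⊆ _root_.star Γ w' := fun h => hne (hii _ _ h).symm
    obtain ⟨z, hz, hz'⟩ := Set.not_subset.1 this
    have h3 := finrank_M_lt hw hw' hne.symm hz hz'
    have h1 := le_M_gen (Γ := Γ) v
    have h2 := finrank_M_map φ.symm (φ (gen Γ v))
    have e : φ.symm (φ (gen Γ v)) = gen Γ v := MulEquiv.symm_apply_apply φ _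
    rw [e] at h2
    simp only [hT, Set.mem_ofPred_eq]
    omega
  have hmap : (Q T).map (exlin (φ : RAAG Γ →* RAAG Γ)) ≤ Q T := by
    rintro _ ⟨f, hf, rfl⟩
    classical
    have : f = ∑ v, f v • ex (gen Γ v) := by
      ext w
      simp [Finset.sum_apply, ex_gen, Pi.single_apply]
    rw [this]
    simp only [map_sum, map_smul, exlin_ex]
    apply Submodule.sum_mem
    intro u _
    by_cases hu : u ∈ T
    · apply Submodule.smul_mem
      obtain ⟨x, hx⟩ := conj_Supp (φ (gen Γ u))
      refine ex_mem_Q (x := x) (Par_mono ?_ hx)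
      intro w hw
      exact lt_of_lt_of_le hu (deg_le φ hw)
    · rw [hf u hu, zero_smul]; exact Submodule.zero_mem _
  have heq : (Q T).map (exlin (φ : RAAG Γ →* RAAG Γ)) = Q T := by
    apply Submodule.eq_of_le_of_finrank_eq hmap
    exact (LinearEquiv.finrank_eq
      (Submodule.equivMapOfInjective _ (exlin_injective φ) (Q T))).symm
  obtain ⟨x, hx⟩ := conj_Supp (φ (gen Γ v))
  have h1 : ex (φ (gen Γ v)) ∈ Q T := ex_mem_Q (Par_mono hsub hx)
  rw [← heq] at h1
  obtain ⟨f, hf, hfe⟩ := h1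
  have h2 := exlin_ex (φ : RAAG Γ →* RAAG Γ) (gen Γ v)
  have h3 : f = ex (gen Γ v) := exlin_injective φ (hfe.trans h2.symm)
  have h4 : v ∉ T := by simp [hT]
  have := hf v h4
  rw [h3, ex_gen_self] at this
  exact one_ne_zero this

lemma ex_int (x : RAAG Γ) (v : V) : ∃ z : ℤ, ex x v = z := by
  have hg : ∀ s, ∃ z : ℤ, ex (gen Γ s) v = z := by
    intro s
    by_cases h : v = s
    · subst h; exact ⟨1, by simp [ex_gen_self]⟩
    · exact ⟨0, by simp [ex_gen_ne h]⟩
  induction x using ind_right with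
  | one => exact ⟨0, by simp⟩
  | mul x s ih =>
    obtain ⟨a, ha⟩ := ih
    obtain ⟨b, hb⟩ := hg s
    exact ⟨a + b, by simp [ha, hb]⟩
  | inv x s ih =>
    obtain ⟨a, ha⟩ := ih
    obtain ⟨b, hb⟩ := hg s
    exact ⟨a - b, by simp [ha, hb, sub_eq_add_neg]⟩

/-- Step 1: vertices go to conjugates of vertices or inverses. -/
lemma step_one [Fintype V] (hii : ∀ u v : V, Γ.neighborSet u ⊆ _root_.star Γ v → u = v)
    (φ : MulAut (RAAG Γ)) (v : V) : ∃ (d : V × ℤˣ) (x : RAAG Γ),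
      φ (gen Γ v) = x * gen Γ d.1 ^ (d.2 : ℤ) * x⁻¹ := by
  obtain ⟨x, hx⟩ := conj_Supp (φ (gen Γ v))
  obtain ⟨w, hw⟩ : ∃ w, Supp (φ (gen Γ v)) ⊆ {w} := by
    rcases (supp_subsingleton hii φ v).eq_empty_or_singleton with h | ⟨w, h⟩
    · exact ⟨v, by simp [h]⟩
    · exact ⟨w, h.le⟩
  have h1 := Par_mono hw hx
  rw [Par, Set.image_singleton, Subgroup.mem_closure_singleton] at h1
  obtain ⟨n, hn⟩ := h1
  have h2 : φ (gen Γ v) = x * gen Γ w ^ n * x⁻¹ := by rw [hn]; group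
  have h3 : ex (gen Γ v) v = n * ex (φ.symm (gen Γ w)) v := by
    have : gen Γ v = φ.symm (x * gen Γ w ^ n * x⁻¹) := by rw [← h2]; simp
    rw [this]
    simp
  obtain ⟨z, hz⟩ := ex_int (φ.symm (gen Γ w)) v
  rw [hz, ex_gen_self] at h3
  have h4 : n * z = 1 := by exact_mod_cast h3.symm
  exact ⟨(w, Units.mkOfMulEqOne n z h4), x, h2⟩

end supports

section steptwo

variable {V : Type} {Γ : SimpleGraph V}

/-- words of given length -/
inductive W (Γ : SimpleGraph V) : ℕ → RAAG Γ → Prop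
  | one : W Γ 0 1
  | mul (n : ℕ) (x : RAAG Γ) (s : V) : W Γ n x → W Γ (n + 1) (x * gen Γ s)
  | inv (n : ℕ) (x : RAAG Γ) (s : V) : W Γ n x → W Γ (n + 1) (x * (gen Γ s)⁻¹)

lemma exists_W (x : RAAG Γ) : ∃ n, W Γ n x := by
  induction x using ind_right with
  | one => exact ⟨0, W.one⟩
  | mul x s ih =>
    obtain ⟨n, hn⟩ := ih
    exact ⟨_, W.mul n x s hn⟩
  | inv x s ih =>
    obtain ⟨n, hn⟩ := ih
    exact ⟨_, W.inv n x s hn⟩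

/-- word length -/
noncomputable def len (x : RAAG Γ) : ℕ := sInf {n | W Γ n x}

lemma W_len (x : RAAG Γ) : W Γ (len x) x := Nat.sInf_mem (exists_W x)

lemma len_le {n : ℕ} {x : RAAG Γ} (h : W Γ n x) : len x ≤ n := Nat.sInf_le h

lemma W_decomp {n : ℕ} {x : RAAG Γ} (h : W Γ n x) :
    x = 1 ∨ ∃ s, ∃ m < n, W Γ m ((gen Γ s)⁻¹ * x) ∨ W Γ m (gen Γ s * x) := by
  induction h with
  | one => exact Or.inl rfl
  | mul n x s h ih =>
    right
    rcases ih with rfl | ⟨t, m, hm, h1 | h1⟩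
    · refine ⟨s, 0, by omega, Or.inl ?_⟩
      simpa using W.one
    · refine ⟨t, m + 1, by omega, Or.inl ?_⟩
      rw [← mul_assoc]; exact W.mul _ _ _ h1
    · refine ⟨t, m + 1, by omega, Or.inr ?_⟩
      rw [← mul_assoc]; exact W.mul _ _ _ h1
  | inv n x s h ih =>
    right
    rcases ih with rfl | ⟨t, m, hm, h1 | h1⟩
    · refine ⟨s, 0, by omega, Or.inr ?_⟩
      simpa using W.one
    · refine ⟨t, m + 1, by omega, Or.inl ?_⟩
      rw [← mul_assoc]; exact W.inv _ _ _ h1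
    · refine ⟨t, m + 1, by omega, Or.inr ?_⟩
      rw [← mul_assoc]; exact W.inv _ _ _ h1

lemma len_decomp {x : RAAG Γ} (hx : x ≠ 1) :
    ∃ s, len ((gen Γ s)⁻¹ * x) < len x ∨ len (gen Γ s * x) < len x := by
  rcases W_decomp (W_len x) with h | ⟨s, m, hm, h | h⟩
  · exact absurd h hx
  · exact ⟨s, Or.inl ((len_le h).trans_lt hm)⟩
  · exact ⟨s, Or.inr ((len_le h).trans_lt hm)⟩

lemma W_del1 {v : V} {a : RAAG Γ} (h1 : (1 : RAAG Γ) ∉ H v a) {n : ℕ} {x : RAAG Γ} (h : W Γ n x) :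
    x ∈ H v a → ∃ m < n, W Γ m (a * (gen Γ v)⁻¹ * a⁻¹ * x) := by
  induction h with
  | one => exact fun h => absurd h h1
  | mul n x s h ih =>
    intro hx
    by_cases hU : x ∈ H v a
    · obtain ⟨m, hm, hW⟩ := ih hU
      refine ⟨m + 1, by omega, ?_⟩
      rw [← mul_assoc]; exact W.mul _ _ _ hW
    · obtain ⟨rfl, hl, -, -⟩ := cross (v := v) (t := s) (a := a) (x := x) (by tauto)
      refine ⟨n, by omega, ?_⟩
      have e : a * (gen Γ s)⁻¹ * a⁻¹ * (x * gen Γ s) = x := by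
        have := (L_comm hl).eq
        calc a * (gen Γ s)⁻¹ * a⁻¹ * (x * gen Γ s)
            = a * (gen Γ s)⁻¹ * ((a⁻¹ * x) * gen Γ s) := by group
          _ = a * (gen Γ s)⁻¹ * (gen Γ s * (a⁻¹ * x)) := by rw [this]
          _ = x := by group
      rwa [e]
  | inv n x s h ih =>
    intro hx
    have hU : x ∈ H v a := by
      by_contra hU
      have := cross (v := v) (t := s) (a := a) (x := x * (gen Γ s)⁻¹) (by
        rw [inv_mul_cancel_right]; tauto)
      exact this.2.2.1 hx
    obtain ⟨m, hm, hW⟩ := ih hU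
    refine ⟨m + 1, by omega, ?_⟩
    rw [← mul_assoc]; exact W.inv _ _ _ hW

lemma W_del2 {v : V} {a : RAAG Γ} (h1 : (1 : RAAG Γ) ∈ H v a) {n : ℕ} {x : RAAG Γ} (h : W Γ n x) :
    x ∉ H v a → ∃ m < n, W Γ m (a * gen Γ v * a⁻¹ * x) := by
  induction h with
  | one => exact fun h => absurd h1 h
  | inv n x s h ih =>
    intro hx
    by_cases hU : x ∈ H v a
    · obtain ⟨rfl, hl, -, -⟩ := cross (v := v) (t := s) (a := a) (x := x * (gen Γ s)⁻¹) (by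
        rw [inv_mul_cancel_right]; tauto)
      refine ⟨n, by omega, ?_⟩
      have e : a * gen Γ s * a⁻¹ * (x * (gen Γ s)⁻¹) = x := by
        have := (L_comm hl).eq
        calc a * gen Γ s * a⁻¹ * (x * (gen Γ s)⁻¹)
            = a * (gen Γ s * (a⁻¹ * (x * (gen Γ s)⁻¹))) := by group
          _ = a * (a⁻¹ * (x * (gen Γ s)⁻¹) * gen Γ s) := by rw [this]
          _ = x := by group
      rwa [e]
    · obtain ⟨m, hm, hW⟩ := ih hU
      refine ⟨m + 1, by omega, ?_⟩
      rw [← mul_assoc]; exact W.inv _ _ _ hW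
  | mul n x s h ih =>
    intro hx
    have hU : x ∉ H v a := by
      intro hU
      have := cross (v := v) (t := s) (a := a) (x := x) (by tauto)
      exact this.2.2.1 hU
    obtain ⟨m, hm, hW⟩ := ih hU
    refine ⟨m + 1, by omega, ?_⟩
    rw [← mul_assoc]; exact W.mul _ _ _ hW

lemma len_del1 {v : V} {a x : RAAG Γ} (h1 : (1 : RAAG Γ) ∉ H v a) (hx : x ∈ H v a) :
    len (a * (gen Γ v)⁻¹ * a⁻¹ * x) < len x := by
  obtain ⟨m, hm, h⟩ := W_del1 h1 (W_len x) hx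
  exact (len_le h).trans_lt hm

lemma len_del2 {v : V} {a x : RAAG Γ} (h1 : (1 : RAAG Γ) ∈ H v a) (hx : x ∉ H v a) :
    len (a * gen Γ v * a⁻¹ * x) < len x := by
  obtain ⟨m, hm, h⟩ := W_del2 h1 (W_len x) hx
  exact (len_le h).trans_lt hm

lemma one_mem_inv (v : V) : (1 : RAAG Γ) ∈ H v (gen Γ v)⁻¹ := by
  have := base_mul_mem v (gen Γ v)⁻¹
  rwa [inv_mul_cancel] at this

lemma first_pos {s : V} {x : RAAG Γ} (h : len ((gen Γ s)⁻¹ * x) < len x) : x ∈ H s (1 : RAAG Γ) := by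
  by_contra hx
  have h2 : (gen Γ s)⁻¹ * x ∉ H s (gen Γ s)⁻¹ := by
    have := smul_mem s (gen Γ s)⁻¹ 1 x
    rw [mul_one] at this
    rwa [this]
  have := len_del2 (one_mem_inv s) h2
  have e : (gen Γ s)⁻¹ * gen Γ s * ((gen Γ s)⁻¹)⁻¹ * ((gen Γ s)⁻¹ * x) = x := by group
  rw [e] at this
  omega

lemma first_neg {s : V} {x : RAAG Γ} (h : len (gen Γ s * x) < len x) : x ∉ H s (gen Γ s)⁻¹ := by
  intro hx
  have h2 : gen Γ s * x ∈ H s (1 : RAAG Γ) := by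
    have := smul_mem s (gen Γ s) (gen Γ s)⁻¹ x
    rw [mul_inv_cancel] at this
    rwa [this]
  have := len_del1 (base_notMem s 1) h2
  have e : 1 * (gen Γ s)⁻¹ * 1⁻¹ * (gen Γ s * x) = x := by group
  rw [e] at this
  omega

lemma mem_star_symm {v w : V} (h : w ∉ _root_.star Γ v) : v ∉ _root_.star Γ w := by
  rintro (rfl | h1)
  · exact h (Or.inl rfl)
  · exact h (Or.inr (Γ.adj_symm h1))

lemma pos {φ : RAAG Γ →* RAAG Γ} {h : V → RAAG Γ}
    (hφ : ∀ v, φ (gen Γ v) = h v * gen Γ v * (h v)⁻¹) {v w w' : V} (hadj : Γ.Adj w w')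
    (hw : w ∉ _root_.star Γ v) (hw' : w' ∉ _root_.star Γ v) (a : RAAG Γ) :
    h w ∈ H v a ↔ h w' ∈ H v a := by
  by_contra hc
  set x := φ (gen Γ w) with hx
  have hwv : w ≠ v := fun e => hw (Or.inl e)
  have hz : Commute (gen Γ w') ((h w')⁻¹ * x * h w') := by
    have h1 : Commute (φ (gen Γ w')) x := (gen_comm hadj.symm).map φ
    rw [hφ w'] at h1
    have h2 := h1.map (MulAut.conj (h w')⁻¹ : RAAG Γ ≃* RAAG Γ)
    simp only [MulAut.conj_apply, inv_inv] at h2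
    have e : (h w')⁻¹ * (h w' * gen Γ w' * (h w')⁻¹) * h w' = gen Γ w' := by group
    rwa [e] at h2
  have hzP := centralizer_gen_Par hz
  have hvw' := mem_star_symm hw'
  have hmem : ∀ m : ℕ, (H v ((x ^ m)⁻¹ * a) : Set (RAAG Γ)) ∈ sep v (h w) (h w') := by
    intro m
    refine ⟨⟨_, rfl⟩, ?_⟩
    rw [mem_mul_left, mem_mul_left, inv_inv]
    have e1 : x ^ m * h w = h w * gen Γ w ^ (m : ℤ) := by
      rw [hx, hφ w, conj_pow]; simp
    have e2 : x ^ m * h w' = h w' * ((h w')⁻¹ * x * h w') ^ m := by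
      have := conj_pow (i := m) (a := (h w')⁻¹) (b := x)
      rw [inv_inv] at this
      rw [this]; group
    rw [e1, e2, mul_gen_zpow_mem_ne hwv, mul_Par_mem hvw' (pow_mem hzP m)]
    exact hc
  refine Set.infinite_of_injective_forall_mem (f := fun m : ℕ => (H v ((x ^ m)⁻¹ * a) : Set (RAAG Γ)))
    ?_ hmem (sep_finite v (h w) (h w'))
  intro i j hij
  have h1 := H_eq_iff.1 hij
  have h2 := ex_Par h1 (v := w) (fun h => hw (Or.inr h))
  have h3 : ex x w = 1 := by rw [hx, hφ, ex_conj, ex_gen_self]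
  simp [h3] at h2
  have : (i : ℚ) = j := by linarith
  exact_mod_cast this

lemma pos_all {φ : RAAG Γ →* RAAG Γ} {h : V → RAAG Γ}
    (hφ : ∀ v, φ (gen Γ v) = h v * gen Γ v * (h v)⁻¹) {v : V} (hi : connectedOutsideStar Γ v)
    {w w' : V} (hw : w ∉ _root_.star Γ v) (hw' : w' ∉ _root_.star Γ v) (a : RAAG Γ) :
    h w ∈ H v a ↔ h w' ∈ H v a := by
  have main : ∀ x y : {z : V // z ∉ _root_.star Γ v},
      (Γ.induce {z : V | z ∉ _root_.star Γ v}).Walk x y → (h x.1 ∈ H v a ↔ h y.1 ∈ H v a) := by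
    intro x y p
    induction p with
    | nil => exact Iff.rfl
    | @cons x y z hxy p ih => exact (pos hφ hxy x.2 y.2 a).trans ih
  obtain ⟨p⟩ := hi ⟨w, hw⟩ ⟨w', hw'⟩
  exact main _ _ p

lemma conj_zpow_mul (v : V) (h : RAAG Γ) (n : ℤ) :
    (h * gen Γ v * h⁻¹) ^ n * h = h * gen Γ v ^ n := by
  rw [conj_zpow]; group

lemma anti (v : V) (h : RAAG Γ) :
    StrictAnti (fun n : ℤ => (H v (h * gen Γ v ^ n) : Set (RAAG Γ))) := by
  have := (skew_conj v h 0).strictAnti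
  simp only [zpow_zero, mul_one, conj_zpow_mul] at this
  exact this

/-- normalized data -/
structure Normd (φ : RAAG Γ →* RAAG Γ) (h : V → RAAG Γ) : Prop where
  hφ : ∀ v, φ (gen Γ v) = h v * gen Γ v * (h v)⁻¹
  hmin : ∀ v (n : ℤ) w, w ∉ _root_.star Γ v →
    ((1 : RAAG Γ) ∈ H v (h v * gen Γ v ^ n) ↔ h w ∈ H v (h v * gen Γ v ^ n))
  h1 : ∀ v, (1 : RAAG Γ) ∈ H v (h v * gen Γ v ^ (-1 : ℤ))
  h0 : ∀ v, (1 : RAAG Γ) ∉ H v (h v * gen Γ v ^ (0 : ℤ))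

lemma normd_id : Normd (MonoidHom.id (RAAG Γ)) (fun _ => 1) where
  hφ v := by simp
  hmin v n w _ := Iff.rfl
  h1 v := by simpa using one_mem_inv v
  h0 v := by simpa using base_notMem v (1 : RAAG Γ)

namespace Normd

variable {φ : RAAG Γ →* RAAG Γ} {h : V → RAAG Γ}

lemma base (N : Normd φ h) (v : V) (n : ℤ) : (1 : RAAG Γ) ∈ H v (h v * gen Γ v ^ n) ↔ n < 0 := by
  have ha := (anti v (h v)).antitone
  constructor
  · intro h1
    by_contra hn
    exact N.h0 v (ha (show (0 : ℤ) ≤ n by omega) h1)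
  · intro hn
    exact ha (show n ≤ (-1 : ℤ) by omega) (N.h1 v)

lemma same (N : Normd φ h) (s : V) (n : ℤ) (z : RAAG Γ) :
    φ (gen Γ s) * z ∈ H s (h s * gen Γ s ^ n) ↔ z ∈ H s (h s * gen Γ s ^ (n - 1)) := by
  have e : h s * gen Γ s ^ n = φ (gen Γ s) * (h s * gen Γ s ^ (n - 1)) := by
    rw [N.hφ s, zpow_sub_one]
    have := (Commute.self_zpow (gen Γ s) n).eq
    calc h s * gen Γ s ^ n = h s * (gen Γ s ^ n * gen Γ s) * (gen Γ s)⁻¹ := by group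
      _ = h s * (gen Γ s * gen Γ s ^ n) * (gen Γ s)⁻¹ := by rw [this]
      _ = _ := by group
  rw [e, smul_mem]

lemma adj (N : Normd φ h) {v s : V} (hvs : Γ.Adj v s) (n : ℤ) (z : RAAG Γ) :
    φ (gen Γ s) * z ∈ H v (h v * gen Γ v ^ n) ↔ z ∈ H v (h v * gen Γ v ^ n) := by
  set a := h v * gen Γ v ^ n with ha
  have hc : Commute (gen Γ v) (a⁻¹ * φ (gen Γ s) * a) := by
    have h1 : Commute (φ (gen Γ v)) (φ (gen Γ s)) := (gen_comm hvs).map φ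
    have e : φ (gen Γ v) = a * gen Γ v * a⁻¹ := by
      rw [N.hφ v, ha]
      have := (Commute.self_zpow (gen Γ v) n).eq
      calc h v * gen Γ v * (h v)⁻¹ = h v * (gen Γ v * gen Γ v ^ n) * (gen Γ v ^ n)⁻¹ * (h v)⁻¹ := by
            group
        _ = h v * (gen Γ v ^ n * gen Γ v) * (gen Γ v ^ n)⁻¹ * (h v)⁻¹ := by rw [this]
        _ = _ := by group
    rw [e] at h1
    have h2 := h1.map (MulAut.conj a⁻¹ : RAAG Γ ≃* RAAG Γ)
    simp only [MulAut.conj_apply, inv_inv] at h2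
    have e : a⁻¹ * (a * gen Γ v * a⁻¹) * a = gen Γ v := by group
    rwa [e] at h2
  have hL := centralizer_gen_L hc (by
    rw [ex_conj', N.hφ s, ex_conj, ex_gen_ne hvs.ne])
  have : (H v a : Set (RAAG Γ)) = H v (φ (gen Γ s) * a) := by
    rw [H_eq_iff, ← mul_assoc]; exact hL
  rw [this, smul_mem, ← this]

lemma far_aux (N : Normd φ h) {v s : V} (hne : v ≠ s) (hvs : ¬ Γ.Adj v s) (n m : ℤ) {X : Set (RAAG Γ)}
    (hX : IsSide s (h s * gen Γ s ^ m) X) (h1 : (1 : RAAG Γ) ∉ X) {y : RAAG Γ} (hy : y ∈ X) :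
    y ∈ H v (h v * gen Γ v ^ n) ↔ (1 : RAAG Γ) ∈ H v (h v * gen Γ v ^ n) := by
  by_contra hc
  have hs : s ∉ _root_.star Γ v := by
    rintro (e | e)
    · exact hne e.symm
    · exact hvs e
  have hv := mem_star_symm hs
  obtain ⟨Y, hY, hyY, h1Y⟩ : ∃ Y, IsSide v (h v * gen Γ v ^ n) Y ∧ y ∈ Y ∧ (1 : RAAG Γ) ∉ Y := by
    by_cases hyU : y ∈ H v (h v * gen Γ v ^ n)
    · exact ⟨_, Or.inl rfl, hyU, fun h => hc (iff_of_true hyU h)⟩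
    · exact ⟨_, Or.inr rfl, hyU, fun h => hc (iff_of_false hyU h)⟩
  have eY : h s * gen Γ s ^ m ∈ Y ↔ 1 ∈ Y := hY.iff (by
    rw [mul_gen_zpow_mem_ne hne.symm, N.hmin v n s hs])
  have eY' : h s * gen Γ s ^ m * gen Γ s ∈ Y ↔ 1 ∈ Y := by
    rw [← eY]; exact hY.iff (mul_gen_mem_ne hne.symm _ _)
  have eX : h v * gen Γ v ^ n ∈ X ↔ 1 ∈ X := hX.iff (by
    rw [mul_gen_zpow_mem_ne hne, N.hmin s m v hv])
  have eX' : h v * gen Γ v ^ n * gen Γ v ∈ X ↔ 1 ∈ X := by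
    rw [← eX]; exact hX.iff (mul_gen_mem_ne hne _ _)
  exact nested (fun h => hvs h.symm) hX hY (by rwa [eY]) (by rwa [eY']) (by rwa [eX])
    (by rwa [eX']) hy hyY

lemma far (N : Normd φ h) {v s : V} (hne : v ≠ s) (hvs : ¬ Γ.Adj v s) (n : ℤ) {y : RAAG Γ}
    (hy : y ∈ H s (h s * gen Γ s ^ (0 : ℤ)) ∨ y ∉ H s (h s * gen Γ s ^ (-1 : ℤ))) :
    y ∈ H v (h v * gen Γ v ^ n) ↔ n < 0 := by
  rw [← N.base v n]
  rcases hy with hy | hy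
  · exact N.far_aux hne hvs n 0 (Or.inl rfl) (N.h0 s) hy
  · exact N.far_aux hne hvs n (-1) (Or.inr rfl) (by simpa using N.h1 s) hy

lemma pingpong (N : Normd φ h) : ∀ (k : ℕ) (x : RAAG Γ), len x = k → ∀ (v : V) (n : ℤ),
    (x ∈ H v (1 * gen Γ v ^ n) ↔ φ x ∈ H v (h v * gen Γ v ^ n)) := by
  have I := normd_id (Γ := Γ)
  intro k
  induction k using Nat.strong_induction_on with
  | _ k ih =>
    intro x hk v n
    by_cases hx : x = 1
    · subst hx
      rw [map_one, N.base v n]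
      exact I.base v n
    obtain ⟨s, hs | hs⟩ := len_decomp hx
    · have hfirst := first_pos hs
      rw [hk] at hs
      have IH := ih _ hs _ rfl
      set y := (gen Γ s)⁻¹ * x with hy
      have exy : x = gen Γ s * y := by rw [hy]; group
      have hsame : ∀ n : ℤ, (x ∈ H s (1 * gen Γ s ^ n) ↔ φ x ∈ H s (h s * gen Γ s ^ n)) := by
        intro n
        rw [exy, map_mul, N.same, ← IH]
        exact I.same s n y
      by_cases hvs : v = s
      · subst hvs; exact hsame n
      by_cases hadj : Γ.Adj v s
      · rw [exy, map_mul, N.adj hadj, ← IH]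
        exact I.adj hadj n y
      · have hx0 : x ∈ H s (1 * gen Γ s ^ (0 : ℤ)) := by simpa using hfirst
        rw [N.far hvs hadj n (Or.inl ((hsame 0).1 hx0))]
        exact I.far hvs hadj n (Or.inl hx0)
    · have hfirst := first_neg hs
      rw [hk] at hs
      have IH := ih _ hs _ rfl
      set y := gen Γ s * x with hy
      have hsame : ∀ n : ℤ, (x ∈ H s (1 * gen Γ s ^ n) ↔ φ x ∈ H s (h s * gen Γ s ^ n)) := by
        intro n
        have h1 := N.same s (n + 1) (φ x)
        have h2 := I.same s (n + 1) x
        rw [add_sub_cancel_right] at h1 h2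
        rw [← h1, ← map_mul, ← IH]
        exact h2.symm
      by_cases hvs : v = s
      · subst hvs; exact hsame n
      by_cases hadj : Γ.Adj v s
      · rw [← N.adj hadj, ← map_mul, ← IH]
        exact (I.adj hadj n x).symm
      · have hx0 : x ∉ H s (1 * gen Γ s ^ (-1 : ℤ)) := by simpa using hfirst
        rw [N.far hvs hadj n (Or.inr (fun h => hx0 ((hsame (-1)).2 h)))]
        exact I.far hvs hadj n (Or.inr hx0)

lemma fixed (N : Normd φ h) (hsurj : Function.Surjective φ) (s : V) : φ (gen Γ s) = gen Γ s := by
  obtain ⟨a, ha⟩ := hsurj (gen Γ s)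
  have hne : gen Γ s ≠ 1 := by
    intro h
    have := ex_gen_self (Γ := Γ) s
    rw [h] at this
    simp at this
  have ha1 : a ≠ 1 := by
    rintro rfl
    rw [map_one] at ha
    exact hne ha.symm
  obtain ⟨t, ht | ht⟩ := len_decomp ha1
  · have h1 := first_pos ht
    have h2 := (N.pingpong _ a rfl t 0).1 (by simpa using h1)
    have h3 := N.h0 t
    rw [ha] at h2
    have hcr := cross (v := t) (t := s) (a := h t * gen Γ t ^ (0 : ℤ)) (x := 1) (by
      rw [one_mul]; tauto)
    obtain ⟨rfl, hl, -, -⟩ := hcr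
    rw [zpow_zero, mul_one, mul_one] at hl
    have h4 := L_comm (inv_mem hl)
    rw [inv_inv] at h4
    rw [N.hφ, ← h4.eq, mul_inv_cancel_right]
  · have h1 := first_neg ht
    have h2 : φ a ∉ H t (h t * gen Γ t ^ (-1 : ℤ)) := fun h =>
      h1 (by simpa using (N.pingpong _ a rfl t (-1)).2 h)
    have h3 := N.h1 t
    rw [ha] at h2
    have hcr := cross (v := t) (t := s) (a := h t * gen Γ t ^ (-1 : ℤ)) (x := 1) (by
      rw [one_mul]; tauto)
    exact absurd h3 hcr.2.2.1

end Normd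

/-- renormalize by powers of the generators -/
lemma normalize {φ : RAAG Γ →* RAAG Γ} {h : V → RAAG Γ}
    (hφ : ∀ v, φ (gen Γ v) = h v * gen Γ v * (h v)⁻¹)
    (hmin : ∀ v (n : ℤ) w, w ∉ _root_.star Γ v →
      ((1 : RAAG Γ) ∈ H v (h v * gen Γ v ^ n) ↔ h w ∈ H v (h v * gen Γ v ^ n))) :
    ∃ h', Normd φ h' := by
  have hex : ∀ v, ∃ k : ℤ, (1 : RAAG Γ) ∈ H v (h v * gen Γ v ^ k) ∧
      (1 : RAAG Γ) ∉ H v (h v * gen Γ v ^ (k + 1)) := by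
    intro v
    have := (skew_conj v (h v) 0).exists_cross 1
    simpa only [zpow_zero, mul_one, conj_zpow_mul] using this
  choose k hk hk' using hex
  refine ⟨fun v => h v * gen Γ v ^ (k v + 1), ?_, ?_, ?_, ?_⟩
  · intro v
    rw [hφ v]
    have := (Commute.self_zpow (gen Γ v) (k v + 1)).eq
    calc h v * gen Γ v * (h v)⁻¹
        = h v * (gen Γ v * gen Γ v ^ (k v + 1)) * (gen Γ v ^ (k v + 1))⁻¹ * (h v)⁻¹ := by
          group
      _ = h v * (gen Γ v ^ (k v + 1) * gen Γ v) * (gen Γ v ^ (k v + 1))⁻¹ * (h v)⁻¹ := by rw [this]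
      _ = _ := by group
  · intro v n w hw
    have hne : w ≠ v := fun e => hw (Or.inl e)
    rw [mul_gen_zpow_mem_ne hne, mul_assoc, ← zpow_add]
    exact hmin v _ w hw
  · intro v
    rw [mul_assoc, ← zpow_add, add_neg_cancel_right]
    exact hk v
  · intro v
    rw [zpow_zero, mul_one]
    exact hk' v

lemma min_cond [Fintype V] (hi : ∀ u, connectedOutsideStar Γ u) {φ : RAAG Γ →* RAAG Γ}
    {h : V → RAAG Γ} (hφ : ∀ v, φ (gen Γ v) = h v * gen Γ v * (h v)⁻¹)
    (hm : ∀ (p : RAAG Γ) (h' : V → RAAG Γ),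
      (∀ v, p * φ (gen Γ v) * p⁻¹ = h' v * gen Γ v * (h' v)⁻¹) →
      ∑ v, len (h v) ≤ ∑ v, len (h' v))
    (v : V) (n : ℤ) (w : V) (hw : w ∉ _root_.star Γ v) :
      ((1 : RAAG Γ) ∈ H v (h v * gen Γ v ^ n) ↔ h w ∈ H v (h v * gen Γ v ^ n)) := by
  classical
  by_contra hc
  set a := h v * gen Γ v ^ n with ha
  have et : φ (gen Γ v) = a * gen Γ v * a⁻¹ := by
    rw [hφ v, ha]
    have := (Commute.self_zpow (gen Γ v) n).eq
    calc h v * gen Γ v * (h v)⁻¹ = h v * (gen Γ v * gen Γ v ^ n) * (gen Γ v ^ n)⁻¹ * (h v)⁻¹ := by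
          group
      _ = h v * (gen Γ v ^ n * gen Γ v) * (gen Γ v ^ n)⁻¹ * (h v)⁻¹ := by rw [this]
      _ = _ := by group
  have hcomm : ∀ u ∈ _root_.star Γ v, Commute (φ (gen Γ v)) (φ (gen Γ u)) := by
    rintro u (rfl | hu)
    · exact Commute.refl _
    · exact (gen_comm hu).map φ
  -- the general modification
  have key : ∀ q : RAAG Γ, (∀ u ∈ _root_.star Γ v, Commute q (φ (gen Γ u))) →
      (∀ u, u ∉ _root_.star Γ v → len (q * h u) < len (h u)) → False := by
    intro q hq hlt
    have := hm q (fun u => if u ∈ _root_.star Γ v then h u else q * h u) (by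
      intro u
      split_ifs with hu
      · rw [(hq u hu).eq, mul_inv_cancel_right, hφ]
      · rw [hφ]; group)
    refine absurd this (not_le.2 ?_)
    apply Finset.sum_lt_sum
    · intro u _
      split_ifs with hu
      · exact le_rfl
      · exact (hlt u hu).le
    · refine ⟨w, Finset.mem_univ _, ?_⟩
      rw [if_neg hw]
      exact hlt w hw
  by_cases h1 : (1 : RAAG Γ) ∈ H v a
  · have hwU : h w ∉ H v a := fun h => hc (iff_of_true h1 h)
    refine key (φ (gen Γ v)) hcomm ?_
    intro u hu
    rw [et]
    exact len_del2 h1 (by rwa [pos_all hφ (hi v) hu hw])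
  · have hwU : h w ∈ H v a := by
      by_contra h
      exact hc (iff_of_false h1 h)
    refine key (φ (gen Γ v))⁻¹ (fun u hu => (hcomm u hu).inv_left) ?_
    intro u hu
    have e : (φ (gen Γ v))⁻¹ = a * (gen Γ v)⁻¹ * a⁻¹ := by rw [et]; group
    rw [e]
    exact len_del1 h1 (by rwa [pos_all hφ (hi v) hu hw])

/-- Step 2: automorphisms conjugating every generator are inner. -/
lemma step_two [Fintype V] (hi : ∀ u, connectedOutsideStar Γ u) (φ : MulAut (RAAG Γ))
    (hφ : ∀ v, ∃ g, φ (gen Γ v) = g * gen Γ v * g⁻¹) :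
    φ ∈ (MulAut.conj : RAAG Γ →* MulAut (RAAG Γ)).range := by
  classical
  choose g hg using hφ
  let P : ℕ → Prop := fun n => ∃ (p : RAAG Γ) (h : V → RAAG Γ),
    (∀ v, p * φ (gen Γ v) * p⁻¹ = h v * gen Γ v * (h v)⁻¹) ∧ ∑ v, len (h v) = n
  have hP : ∃ n, P n := ⟨_, 1, g, by simpa using hg, rfl⟩
  obtain ⟨p, h, hh, hn⟩ := Nat.find_spec hP
  let ψ : RAAG Γ →* RAAG Γ := ((MulAut.conj p * φ : MulAut (RAAG Γ)) : RAAG Γ ≃* RAAG Γ).toMonoidHom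
  have hψ : ∀ x, ψ x = p * φ x * p⁻¹ := fun x => rfl
  have hψs : Function.Surjective ψ := (MulAut.conj p * φ : MulAut (RAAG Γ)).surjective
  have hφ' : ∀ v, ψ (gen Γ v) = h v * gen Γ v * (h v)⁻¹ := hh
  have hm : ∀ (q : RAAG Γ) (h' : V → RAAG Γ),
      (∀ v, q * ψ (gen Γ v) * q⁻¹ = h' v * gen Γ v * (h' v)⁻¹) →
      ∑ v, len (h v) ≤ ∑ v, len (h' v) := by
    intro q h' hq
    rw [hn]
    apply Nat.find_min'
    refine ⟨q * p, h', ?_, rfl⟩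
    intro v
    rw [← hq v, hψ]
    group
  obtain ⟨h', N⟩ := normalize hφ' (min_cond hi hφ' hm)
  refine ⟨p⁻¹, ?_⟩
  have e : ψ = MonoidHom.id _ := hom_ext' (fun s => N.fixed hψs s)
  ext x
  have := hψ x
  rw [e, MonoidHom.id_apply] at this
  rw [MulAut.conj_apply]
  conv_lhs => rw [this]
  group

end steptwo

section converse

variable {V : Type} {Γ : SimpleGraph V}

lemma finite_of [Fintype V]
    (hyp : ∀ u : V, connectedOutsideStar Γ u ∧ ∀ v : V, Γ.neighborSet u ⊆ _root_.star Γ v → u = v) :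
    Finite (Out (RAAG Γ)) := by
  have hi : ∀ u, connectedOutsideStar Γ u := fun u => (hyp u).1
  have hii : ∀ u v : V, Γ.neighborSet u ⊆ _root_.star Γ v → u = v := fun u => (hyp u).2
  choose d x hd using fun φ => step_one hii φ
  let f : Out (RAAG Γ) → (V → V × ℤˣ) := fun c => d (Quotient.out c)
  apply Finite.of_injective f
  intro c c' hcc
  have hcc' : d (Quotient.out c) = d (Quotient.out c') := hcc
  rw [← Quotient.out_eq c, ← Quotient.out_eq c']
  generalize Quotient.out c = φ at hcc'
  generalize Quotient.out c' = ψ at hcc'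
  refine QuotientGroup.eq.2 ?_
  apply step_two hi
  intro v
  have h1 := hd φ v
  have h2 := hd ψ v
  rw [← hcc'] at h2
  set y := gen Γ (d φ v).1 ^ ((d φ v).2 : ℤ)
  have h3 : ψ (gen Γ v) = (x ψ v * (x φ v)⁻¹) * φ (gen Γ v) * (x ψ v * (x φ v)⁻¹)⁻¹ := by
    rw [h1, h2]; group
  refine ⟨φ⁻¹ (x ψ v * (x φ v)⁻¹), ?_⟩
  rw [MulAut.mul_apply, h3, map_mul, map_mul, map_inv, MulAut.inv_apply_self]

lemma pow_inner (hf : Finite (Out (RAAG Γ))) (φ : MulAut (RAAG Γ)) :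
    ∃ n : ℕ, 0 < n ∧ ∃ g : RAAG Γ, φ ^ n = MulAut.conj g := by
  let c : Out (RAAG Γ) := QuotientGroup.mk' (MulAut.conj : RAAG Γ →* MulAut (RAAG Γ)).range φ
  refine ⟨Nat.card (Out (RAAG Γ)), Nat.card_pos, ?_⟩
  have h : c ^ Nat.card (Out (RAAG Γ)) = 1 := pow_card_eq_one'
  have h2 : φ ^ Nat.card (Out (RAAG Γ)) ∈ (MulAut.conj : RAAG Γ →* MulAut (RAAG Γ)).range :=
    (QuotientGroup.eq_one_iff _).1 h
  obtain ⟨g, hg⟩ := h2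
  exact ⟨g, hg.symm⟩

open Classical in
/-- transvection homomorphism -/
noncomputable def tv (u v : V) (hne : u ≠ v) (hl : Γ.neighborSet u ⊆ _root_.star Γ v) (k : ℤ) :
    RAAG Γ →* RAAG Γ :=
  lift (fun s => if s = u then gen Γ u * gen Γ v ^ k else gen Γ s) (by
    have key : ∀ t, Γ.Adj u t → Commute (gen Γ u * gen Γ v ^ k) (gen Γ t) := by
      intro t ht
      refine (gen_comm ht).mul_left (Commute.zpow_left ?_ k)
      rcases hl ht with rfl | h
      · exact Commute.refl _
      · exact gen_comm h
    intro s t h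
    split_ifs with h1 h2 h2
    · exact Commute.refl _
    · exact key t (h1 ▸ h)
    · exact (key s (h2 ▸ h.symm)).symm
    · exact gen_comm h)

lemma tv_self {u v : V} (hne : u ≠ v) (hl : Γ.neighborSet u ⊆ _root_.star Γ v) (k : ℤ) :
    tv u v hne hl k (gen Γ u) = gen Γ u * gen Γ v ^ k := by simp [tv]

lemma tv_ne {u v : V} (hne : u ≠ v) (hl : Γ.neighborSet u ⊆ _root_.star Γ v) (k : ℤ) {s : V}
    (hs : s ≠ u) : tv u v hne hl k (gen Γ s) = gen Γ s := by simp [tv, hs]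

lemma tv_comp {u v : V} (hne : u ≠ v) (hl : Γ.neighborSet u ⊆ _root_.star Γ v) (k : ℤ) :
    (tv u v hne hl k).comp (tv u v hne hl (-k)) = MonoidHom.id _ := by
  apply hom_ext'
  intro s
  rw [MonoidHom.comp_apply, MonoidHom.id_apply]
  by_cases hs : s = u
  · subst hs
    rw [tv_self, map_mul, map_zpow, tv_self, tv_ne hne hl k hne.symm]
    group
  · rw [tv_ne hne hl _ hs, tv_ne hne hl _ hs]

lemma no_transvection (hf : Finite (Out (RAAG Γ))) (u v : V)
    (hl : Γ.neighborSet u ⊆ _root_.star Γ v) : u = v := by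
  by_contra hne
  let φ : MulAut (RAAG Γ) := MonoidHom.toMulEquiv (tv u v hne hl 1) (tv u v hne hl (-1))
    (by simpa using tv_comp hne hl (-1)) (tv_comp hne hl 1)
  have h1 : φ (gen Γ u) = gen Γ u * gen Γ v := by
    have := tv_self hne hl 1
    rwa [zpow_one] at this
  have h2 : φ (gen Γ v) = gen Γ v := tv_ne hne hl 1 (Ne.symm hne)
  have h3 : ∀ n : ℕ, (φ ^ n) (gen Γ u) = gen Γ u * gen Γ v ^ n := by
    intro n
    induction n with
    | zero => simp
    | succ n ih =>
      rw [pow_succ', MulAut.mul_apply, ih, map_mul, map_pow, h1, h2, pow_succ', mul_assoc]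
  obtain ⟨n, hn, g, hg⟩ := pow_inner hf φ
  have h4 := h3 n
  rw [hg, MulAut.conj_apply] at h4
  have h5 := congrFun (congrArg ex h4) v
  rw [ex_conj, ex_mul, Pi.add_apply, ex_pow] at h5
  simp [ex_gen_self] at h5
  omega

open Classical in
/-- partial conjugation homomorphism -/
noncomputable def pc (u : V) (C : Set V)
    (hC : ∀ s t, Γ.Adj s t → s ∈ C → t ∉ C → t ∈ _root_.star Γ u) (k : ℤ) :
    RAAG Γ →* RAAG Γ :=
  lift (fun s => if s ∈ C then gen Γ u ^ k * gen Γ s * (gen Γ u ^ k)⁻¹ else gen Γ s) (by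
    have key : ∀ s t, Γ.Adj s t → s ∈ C → t ∉ C →
        Commute (gen Γ u ^ k * gen Γ s * (gen Γ u ^ k)⁻¹) (gen Γ t) := by
      intro s t h hs ht
      have h1 : Commute (gen Γ u) (gen Γ t) := by
        rcases hC s t h hs ht with rfl | h
        · exact Commute.refl _
        · exact gen_comm h
      exact ((h1.zpow_left k).mul_left (gen_comm h)).mul_left (h1.zpow_left k).inv_left
    intro s t h
    split_ifs with h1 h2 h2
    · have := (gen_comm h).map (MulAut.conj (gen Γ u ^ k) : RAAG Γ ≃* RAAG Γ)
      simpa only [MulAut.conj_apply] using this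
    · exact key s t h h1 h2
    · exact (key t s h.symm h2 h1).symm
    · exact gen_comm h)

lemma pc_mem {u : V} {C : Set V}
    (hC : ∀ s t, Γ.Adj s t → s ∈ C → t ∉ C → t ∈ _root_.star Γ u) (k : ℤ) {s : V} (hs : s ∈ C) :
    pc u C hC k (gen Γ s) = gen Γ u ^ k * gen Γ s * (gen Γ u ^ k)⁻¹ := by simp [pc, hs]

lemma pc_notMem {u : V} {C : Set V}
    (hC : ∀ s t, Γ.Adj s t → s ∈ C → t ∉ C → t ∈ _root_.star Γ u) (k : ℤ) {s : V} (hs : s ∉ C) :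
    pc u C hC k (gen Γ s) = gen Γ s := by simp [pc, hs]

lemma pc_comp {u : V} {C : Set V}
    (hC : ∀ s t, Γ.Adj s t → s ∈ C → t ∉ C → t ∈ _root_.star Γ u) (hu : u ∉ C) (k : ℤ) :
    (pc u C hC k).comp (pc u C hC (-k)) = MonoidHom.id _ := by
  apply hom_ext'
  intro s
  rw [MonoidHom.comp_apply, MonoidHom.id_apply]
  by_cases hs : s ∈ C
  · rw [pc_mem hC _ hs, map_mul, map_mul, map_inv, map_zpow, pc_mem hC _ hs, pc_notMem hC _ hu]
    group
  · rw [pc_notMem hC _ hs, pc_notMem hC _ hs]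

lemma conn (hf : Finite (Out (RAAG Γ))) (u : V) : connectedOutsideStar Γ u := by
  intro x y
  by_contra hxy
  let C : Set V := {z | ∃ hz : z ∉ _root_.star Γ u,
    (Γ.induce {v : V | v ∉ _root_.star Γ u}).Reachable x ⟨z, hz⟩}
  have hC : ∀ s t, Γ.Adj s t → s ∈ C → t ∉ C → t ∈ _root_.star Γ u := by
    rintro s t h ⟨hs, hr⟩ ht
    by_contra htu
    refine ht ⟨htu, hr.trans (SimpleGraph.Adj.reachable ?_)⟩
    exact h
  have hu : u ∉ C := fun h => h.1 (Or.inl rfl)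
  have hx : x.1 ∈ C := ⟨x.2, SimpleGraph.Reachable.refl _⟩
  have hy : y.1 ∉ C := fun h => hxy h.2
  let φ : MulAut (RAAG Γ) := MonoidHom.toMulEquiv (pc u C hC 1) (pc u C hC (-1))
    (by simpa using pc_comp hC hu (-1)) (pc_comp hC hu 1)
  have h1 : φ (gen Γ x.1) = gen Γ u * gen Γ x.1 * (gen Γ u)⁻¹ := by
    have := pc_mem hC 1 hx
    rwa [zpow_one] at this
  have h2 : φ (gen Γ u) = gen Γ u := pc_notMem hC 1 hu
  have h3 : φ (gen Γ y.1) = gen Γ y.1 := pc_notMem hC 1 hy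
  have h4 : ∀ n : ℕ, (φ ^ n) (gen Γ x.1) = gen Γ u ^ n * gen Γ x.1 * (gen Γ u ^ n)⁻¹ := by
    intro n
    induction n with
    | zero => simp
    | succ n ih =>
      rw [pow_succ', MulAut.mul_apply, ih, map_mul, map_mul, map_inv, map_pow, h1, h2, pow_succ]
      group
  have h5 : ∀ n : ℕ, (φ ^ n) (gen Γ y.1) = gen Γ y.1 := by
    intro n
    induction n with
    | zero => simp
    | succ n ih => rw [pow_succ', MulAut.mul_apply, ih, h3]
  obtain ⟨n, hn, g, hg⟩ := pow_inner hf φ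
  have a1 := h4 n
  have a2 := h5 n
  rw [hg, MulAut.conj_apply] at a1 a2
  have c1 : Commute (gen Γ x.1) ((gen Γ u ^ n)⁻¹ * g) := by
    show gen Γ x.1 * ((gen Γ u ^ n)⁻¹ * g) = (gen Γ u ^ n)⁻¹ * g * gen Γ x.1
    calc gen Γ x.1 * ((gen Γ u ^ n)⁻¹ * g)
        = (gen Γ u ^ n)⁻¹ * (gen Γ u ^ n * gen Γ x.1 * (gen Γ u ^ n)⁻¹) * g := by group
      _ = (gen Γ u ^ n)⁻¹ * (g * gen Γ x.1 * g⁻¹) * g := by rw [a1]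
      _ = _ := by group
  have c2 : Commute (gen Γ y.1) g := by
    show gen Γ y.1 * g = g * gen Γ y.1
    exact (mul_inv_eq_iff_eq_mul.1 a2).symm
  have b1 := ex_Par (centralizer_gen_Par c1) (mem_star_symm x.2)
  have b2 := ex_Par (centralizer_gen_Par c2) (mem_star_symm y.2)
  simp [b2, ex_gen_self] at b1
  omega

end converse

end RaagProof

theorem out_raag_finite_iff {V : Type} [Fintype V] (Γ : SimpleGraph V) :
    Finite (Out (RAAG Γ)) ↔
      ∀ u : V, connectedOutsideStar Γ u ∧
        ∀ v : V, Γ.neighborSet u ⊆ star Γ v → u = v :=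
  ⟨fun hf u => ⟨RaagProof.conn hf u, fun v => RaagProof.no_transvection hf u v⟩,
    fun h => RaagProof.finite_of h⟩
end

section
/- Let Γ be a nonempty finite simple graph such that the outer automorphism group Out(A_Γ) is finite. Then Γ is connected. -/
open scoped commutatorElement

theorem exists_inner_of_finite_out {G : Type*} [Group G] (h : Finite (Out G))
    (τ : ℤ → G →* G) (h0 : ∀ x, τ 0 x = x) (hadd : ∀ m n x, τ m (τ n x) = τ (m + n) x) :
    ∃ n : ℤ, n ≠ 0 ∧ ∃ g : G, ∀ x, τ n x = g * x * g⁻¹ := by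
  let E : ℤ → MulAut G := fun n =>
    { toFun := τ n
      invFun := τ (-n)
      left_inv := fun x => by rw [hadd]; simp [h0]
      right_inv := fun x => by rw [hadd]; simp [h0]
      map_mul' := map_mul _ }
  let F : ℤ → Out G := fun n => (QuotientGroup.mk (E n) : MulAut G ⧸ (MulAut.conj : G →* MulAut G).range)
  obtain ⟨m, n, hmn, hF⟩ := Finite.exists_ne_map_eq_of_infinite F
  obtain ⟨g, hg⟩ := QuotientGroup.eq.1 hF
  refine ⟨-m + n, by omega, g, fun x => ?_⟩
  have := DFunLike.congr_fun hg x
  rw [MulAut.conj_apply] at this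
  rw [this, ← hadd]
  rfl

theorem raag_commute {V : Type*} {Γ : SimpleGraph V} {v w : V} (h : Γ.Adj v w) :
    Commute (PresentedGroup.of v : RAAG Γ) (PresentedGroup.of w) := by
  have : (PresentedGroup.mk (raagRels Γ)) ⁅FreeGroup.of v, FreeGroup.of w⁆ = 1 :=
    PresentedGroup.one_of_mem ⟨v, w, h, rfl⟩
  rw [map_commutatorElement] at this
  exact commutatorElement_eq_one_iff_commute.1 this

theorem raag_lift {V : Type*} {Γ : SimpleGraph V} {H : Type*} [Group H] (f : V → H)
    (hf : ∀ v w, Γ.Adj v w → Commute (f v) (f w)) :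
    ∃ φ : RAAG Γ →* H, ∀ v, φ (PresentedGroup.of v) = f v := by
  refine ⟨PresentedGroup.toGroup (f := f) ?_, fun v => PresentedGroup.toGroup.of _⟩
  rintro r ⟨v, w, h, rfl⟩
  rw [map_commutatorElement]
  simpa using commutatorElement_eq_one_iff_commute.2 (hf v w h)

theorem no_transvection {V : Type*} {Γ : SimpleGraph V} (h : Finite (Out (RAAG Γ)))
    (d e : V) (hde : d ≠ e) (hN : ∀ w, Γ.Adj d w → w = e ∨ Γ.Adj w e) : False := by
  classical
  have key : ∀ n : ℤ, ∃ φ : RAAG Γ →* RAAG Γ, ∀ v, φ (PresentedGroup.of v) =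
      if v = d then PresentedGroup.of d * PresentedGroup.of e ^ n else PresentedGroup.of v := by
    intro n
    apply raag_lift
    have aux : ∀ w, Γ.Adj d w → Commute (PresentedGroup.of d * PresentedGroup.of e ^ n : RAAG Γ)
        (PresentedGroup.of w) := by
      intro w hw
      refine (raag_commute hw).mul_left (Commute.zpow_left ?_ n)
      rcases hN w hw with rfl | h
      · exact Commute.refl _
      · exact (raag_commute h).symm
    intro v w hvw
    by_cases hv : v = d
    · subst hv
      have : w ≠ v := hvw.ne'
      simpa [this] using aux w hvw
    · by_cases hw : w = d
      · subst hw
        simpa [hv] using (aux v hvw.symm).symm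
      · simpa [hv, hw] using raag_commute hvw
  choose τ hτ using key
  have h0 : τ 0 = MonoidHom.id _ := by
    refine PresentedGroup.ext fun v => ?_
    rw [hτ]; by_cases hv : v = d <;> simp [hv]
  have hadd : ∀ m n, (τ m).comp (τ n) = τ (m + n) := by
    intro m n
    refine PresentedGroup.ext fun v => ?_
    rw [MonoidHom.comp_apply, hτ, hτ]
    by_cases hv : v = d
    · simp [hv, hτ, hde.symm, zpow_add, mul_assoc]
    · simp [hv, hτ]
  obtain ⟨n, hn, g, hg⟩ := exists_inner_of_finite_out h τ (fun x => by rw [h0]; rfl)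
    (fun m n x => by rw [← hadd]; rfl)
  obtain ⟨φ, hφ⟩ := raag_lift (Γ := Γ) (fun v => if v = e then Multiplicative.ofAdd (1 : ℤ) else 1)
    (fun _ _ _ => Commute.all _ _)
  have := congrArg φ (hg (PresentedGroup.of d))
  rw [hτ] at this
  simp [hφ, hde, ← ofAdd_zsmul] at this
  exact hn this

theorem no_partial_conj {V : Type*} {Γ : SimpleGraph V} (h : Finite (Out (RAAG Γ)))
    (c d e : V) (hcd : ¬ Γ.Reachable c d) (hed : Γ.Reachable e d) (hne : e ≠ d)
    (hadj : ¬ Γ.Adj e d) : False := by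
  classical
  have key : ∀ n : ℤ, ∃ φ : RAAG Γ →* RAAG Γ, ∀ v, φ (PresentedGroup.of v) =
      if Γ.Reachable v d then PresentedGroup.of v else
        PresentedGroup.of d ^ n * PresentedGroup.of v * (PresentedGroup.of d ^ n)⁻¹ := by
    intro n
    apply raag_lift
    intro v w hvw
    by_cases hv : Γ.Reachable v d
    · have hw : Γ.Reachable w d := hvw.symm.reachable.trans hv
      simpa [hv, hw] using raag_commute hvw
    · have hw : ¬ Γ.Reachable w d := fun hw => hv (hvw.reachable.trans hw)
      simp only [hv, hw, if_false]
      exact (Commute.conj_iff _).2 (raag_commute hvw)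
  choose τ hτ using key
  have h0 : τ 0 = MonoidHom.id _ := by
    refine PresentedGroup.ext fun v => ?_
    rw [hτ]; simp
  have hadd : ∀ m n, (τ m).comp (τ n) = τ (m + n) := by
    intro m n
    refine PresentedGroup.ext fun v => ?_
    rw [MonoidHom.comp_apply, hτ, hτ]
    by_cases hv : Γ.Reachable v d
    · simp [hv, hτ]
    · have : Γ.Reachable d d := SimpleGraph.Reachable.refl d
      simp only [hv, if_false, map_mul, map_inv, map_zpow, hτ, this, if_true]
      group
  obtain ⟨n, hn, g, hg⟩ := exists_inner_of_finite_out h τ (fun x => by rw [h0]; rfl)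
    (fun m n x => by rw [← hadd]; rfl)
  have hcd' : c ≠ d := by rintro rfl; exact hcd (SimpleGraph.Reachable.refl _)
  obtain ⟨φ, hφ⟩ := raag_lift (Γ := Γ) (fun v => if v = d then ModularGroup.T else
      if v = c ∨ v = e then ModularGroup.S else 1) (by
    have aux : ∀ w, Γ.Adj d w → ¬ (w = c ∨ w = e) := by
      rintro w hw (rfl | rfl)
      · exact hcd hw.symm.reachable
      · exact hadj hw.symm
    intro v w hvw
    by_cases hv : v = d
    · subst hv
      simp [hvw.ne', aux w hvw]
    · by_cases hw : w = d
      · subst hw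
        simp [hv, aux v hvw.symm]
      · simp only [hv, hw, if_false]
        split_ifs <;> simp)
  have h1 := congrArg φ (hg (PresentedGroup.of c))
  have h2 := congrArg φ (hg (PresentedGroup.of e))
  rw [hτ] at h1 h2
  simp only [hcd, hed, if_true, if_false, map_mul, map_inv, map_zpow, hφ, hcd', hne, true_or,
    or_true] at h1 h2
  rw [← h2, mul_inv_eq_iff_eq_mul] at h1
  have h3 := congrArg (fun M : Matrix.SpecialLinearGroup (Fin 2) ℤ => (M : Matrix (Fin 2) (Fin 2) ℤ) 0 0) h1
  simp [ModularGroup.coe_T_zpow, ModularGroup.coe_S, Matrix.mul_apply, Fin.sum_univ_two] at h3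
  exact hn h3

theorem connected_of_out_raag_finite {V : Type} [Fintype V] [Nonempty V]
    (Γ : SimpleGraph V) (h : Finite (Out (RAAG Γ))) :
    Γ.Connected := by
  refine { preconnected := fun c d => ?_, nonempty := inferInstance }
  by_contra hcd
  have hne : d ≠ c := by rintro rfl; exact hcd (SimpleGraph.Reachable.refl _)
  by_cases hd : ∃ f, Γ.Adj d f
  · obtain ⟨f, hf⟩ := hd
    by_cases he : ∃ e, Γ.Adj f e ∧ e ≠ d ∧ ¬ Γ.Adj e d
    · obtain ⟨e, h1, h2, h3⟩ := he
      exact no_partial_conj h c d e hcd (h1.symm.reachable.trans hf.symm.reachable) h2 h3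
    · push Not at he
      exact no_transvection h f d hf.ne' fun w hw => or_iff_not_imp_left.2 (he w hw)
  · exact no_transvection h d c hne fun w hw => (hd ⟨w, hw⟩).elim
end

section
/- Let Γ be a finite simple graph with at least two vertices such that the outer automorphism group Out(A_Γ) is finite. Then the centre of the right-angled Artin group A_Γ is trivial. -/
open scoped commutatorElement

section RaagHelpers

open Classical in
theorem freeGroup_eq_one_of_commute_aux {α : Type*} (f : FreeGroup α) (u : α)
    (h : FreeGroup.of u * f = f * FreeGroup.of u)
    (hne : ∀ p ∈ f.toWord.head?, p.1 ≠ u) : f = 1 := by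
  by_contra hf
  have hw : f.toWord ≠ [] := by simpa using hf
  obtain ⟨p, L, hL⟩ := List.exists_cons_of_ne_nil hw
  have hp : p.1 ≠ u := hne p (by simp [hL])
  have h1 : (FreeGroup.of u * f).toWord = (u, true) :: f.toWord := by
    rw [FreeGroup.toWord_mul, FreeGroup.toWord_of]
    have : FreeGroup.IsReduced ((u, true) :: f.toWord) := by
      have h0 := FreeGroup.isReduced_toWord (x := f)
      rw [hL] at h0 ⊢
      rw [FreeGroup.isReduced_cons_cons]
      exact ⟨fun h => absurd h.symm hp, h0⟩
    exact this.reduce_eq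
  have h2 : FreeGroup.Red (f.toWord ++ [(u, true)]) (f * FreeGroup.of u).toWord := by
    rw [FreeGroup.toWord_mul, FreeGroup.toWord_of]
    exact FreeGroup.reduce.red
  have h3 := h2.sublist
  rw [← h, h1] at h3
  have h4 := h3.eq_of_length (by simp)
  rw [hL] at h4
  simp at h4
  exact hp (by rw [← h4.1])

theorem freeGroup_eq_one_of_commute {α : Type*} (f : FreeGroup α) (x y : α) (hxy : x ≠ y)
    (hx : FreeGroup.of x * f = f * FreeGroup.of x)
    (hy : FreeGroup.of y * f = f * FreeGroup.of y) : f = 1 := by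
  classical
  by_cases h : ∀ p ∈ f.toWord.head?, p.1 ≠ x
  · exact freeGroup_eq_one_of_commute_aux f x hx (by convert h)
  · push Not at h
    obtain ⟨p, hp, rfl⟩ := h
    refine freeGroup_eq_one_of_commute_aux f y hy ?_
    intro q hq
    have : p = q := by
      have h1 : f.toWord.head? = some p := hp
      have h2 : f.toWord.head? = some q := Option.mem_def.mp (by convert hq)
      rw [h1] at h2
      exact Option.some.inj h2
    rw [← this]; exact hxy

variable {V : Type*} (Γ : SimpleGraph V)

/-- Universal property of a right-angled Artin group. -/
def raagLift {G : Type*} [Group G] (f : V → G)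
    (hf : ∀ v w, Γ.Adj v w → f v * f w = f w * f v) : RAAG Γ →* G :=
  PresentedGroup.toGroup (f := f) (by
    rintro r ⟨v, w, hvw, rfl⟩
    rw [map_commutatorElement, FreeGroup.lift_apply_of, FreeGroup.lift_apply_of,
      commutatorElement_eq_one_iff_mul_comm]
    exact hf v w hvw)

/-- Generators. -/
abbrev raagOf (v : V) : RAAG Γ := PresentedGroup.of v

@[simp] theorem raagLift_of {G : Type*} [Group G] (f : V → G)
    (hf : ∀ v w, Γ.Adj v w → f v * f w = f w * f v) (v : V) :
    raagLift Γ f hf (raagOf Γ v) = f v := PresentedGroup.toGroup.of _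

theorem raag_comm {v w : V} (h : Γ.Adj v w) :
    raagOf Γ v * raagOf Γ w = raagOf Γ w * raagOf Γ v := by
  rw [← commutatorElement_eq_one_iff_mul_comm]
  exact PresentedGroup.one_of_mem (rels := raagRels Γ) ⟨v, w, h, rfl⟩

theorem raag_not_comm {v w : V} (hne : v ≠ w) (h : ¬ Γ.Adj v w) :
    raagOf Γ v * raagOf Γ w ≠ raagOf Γ w * raagOf Γ v := by
  classical
  intro hc
  let f : V → Equiv.Perm (Fin 3) := fun u =>
    if u = v then Equiv.swap 0 1 else if u = w then Equiv.swap 1 2 else 1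
  have hf : ∀ a b, Γ.Adj a b → f a * f b = f b * f a := by
    intro a b hab
    have hba := hab.symm
    have hn := hab.ne
    simp only [f]
    split_ifs <;> subst_vars <;> simp_all
  have := congrArg (raagLift Γ f hf) hc
  simp only [map_mul, raagLift_of, f, if_true, if_neg hne.symm] at this
  revert this
  decide

open Classical in
/-- The retraction killing the generators in `S`. -/
noncomputable def raagKill (S : Finset V) : RAAG Γ →* RAAG Γ :=
  raagLift Γ (fun u => if u ∈ S then 1 else raagOf Γ u) (by
    intro a b hab
    have := raag_comm Γ hab
    split_ifs <;> simp [this])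

/-- Conjugation action on the free group on the underlying set. -/
def conjFree (G : Type*) [Group G] : G →* MulAut (FreeGroup G) where
  toFun g := FreeGroup.freeGroupCongr (MulAut.conj g).toEquiv
  map_one' := by
    apply MulEquiv.toMonoidHom_injective
    ext x
    simp
  map_mul' a b := by
    apply MulEquiv.toMonoidHom_injective
    ext x
    simp

theorem conjFree_of {G : Type*} [Group G] (g x : G) :
    conjFree G g (FreeGroup.of x) = FreeGroup.of (g * x * g⁻¹) := by
  simp [conjFree]

open Classical in
/-- The embedding in the semidirect product. -/
noncomputable def raagPhi (v : V) :
    RAAG Γ →* FreeGroup (RAAG Γ) ⋊[conjFree (RAAG Γ)] RAAG Γ :=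
  raagLift Γ (fun u => if u = v then SemidirectProduct.inl (FreeGroup.of (raagOf Γ v))
    else SemidirectProduct.inr (raagOf Γ u)) (by
    have key : ∀ b, Γ.Adj v b →
        (SemidirectProduct.inl (FreeGroup.of (raagOf Γ v)) *
          SemidirectProduct.inr (raagOf Γ b) :
          FreeGroup (RAAG Γ) ⋊[conjFree (RAAG Γ)] RAAG Γ) =
        SemidirectProduct.inr (raagOf Γ b) *
          SemidirectProduct.inl (FreeGroup.of (raagOf Γ v)) := by
      intro b hb
      have := raag_comm Γ hb
      ext
      · simp [conjFree_of, ← this]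
      · simp
    intro a b hab
    split_ifs with h1 h2 h2
    · rfl
    · subst h1; exact key b hab
    · subst h2; exact (key a hab.symm).symm
    · rw [← map_mul, raag_comm Γ hab, map_mul])

/-- The left inverse of the embedding. -/
def raagPsi : FreeGroup (RAAG Γ) ⋊[conjFree (RAAG Γ)] RAAG Γ →* RAAG Γ :=
  SemidirectProduct.lift (FreeGroup.lift id) (MonoidHom.id _) (by
    intro g
    ext x
    simp [conjFree_of])

theorem raagPsi_raagPhi (v : V) (z : RAAG Γ) : raagPsi Γ (raagPhi Γ v z) = z := by
  have : (raagPsi Γ).comp (raagPhi Γ v) = MonoidHom.id _ := by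
    apply PresentedGroup.ext
    intro u
    change raagPsi Γ (raagPhi Γ v (raagOf Γ u)) = raagOf Γ u
    rw [raagPhi, raagLift_of]
    split_ifs with h
    · subst h; simp [raagPsi]
    · simp [raagPsi]
  exact DFunLike.congr_fun this z

theorem raagPhi_right (v : V) (z : RAAG Γ) : (raagPhi Γ v z).right = raagKill Γ {v} z := by
  have : SemidirectProduct.rightHom.comp (raagPhi Γ v) = raagKill Γ {v} := by
    apply PresentedGroup.ext
    intro u
    change (raagPhi Γ v (raagOf Γ u)).right = raagKill Γ {v} (raagOf Γ u)
    rw [raagPhi, raagLift_of, raagKill, raagLift_of]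
    by_cases h : u = v <;> simp [h]
  exact DFunLike.congr_fun this z

theorem raagKill_center {v w : V} (hne : v ≠ w) (h : ¬ Γ.Adj v w) (z : RAAG Γ)
    (hz : z ∈ Subgroup.center (RAAG Γ)) : raagKill Γ {v} z = z := by
  rw [Subgroup.mem_center_iff] at hz
  set f := (raagPhi Γ v z).left with hf
  set g := (raagPhi Γ v z).right with hg
  have hv := congrArg (raagPhi Γ v) (hz (raagOf Γ v))
  have hw := congrArg (raagPhi Γ v) (hz (raagOf Γ w))
  have ev : raagPhi Γ v (raagOf Γ v) =
      SemidirectProduct.inl (FreeGroup.of (raagOf Γ v)) := by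
    rw [raagPhi, raagLift_of, if_pos rfl]
  have ew : raagPhi Γ v (raagOf Γ w) = SemidirectProduct.inr (raagOf Γ w) := by
    rw [raagPhi, raagLift_of, if_neg hne.symm]
  rw [map_mul, map_mul, ev] at hv
  rw [map_mul, map_mul, ew] at hw
  have hv' := congrArg SemidirectProduct.left hv
  have hw' := congrArg SemidirectProduct.left hw
  simp only [SemidirectProduct.mul_left, SemidirectProduct.left_inl, SemidirectProduct.right_inl,
    SemidirectProduct.left_inr, SemidirectProduct.right_inr, map_one, mul_one, one_mul,
    MulAut.one_apply, ← hf, ← hg, conjFree_of] at hv' hw'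
  have hgv : g * raagOf Γ v * g⁻¹ = raagOf Γ v := by
    have h1 := congrArg (FreeGroup.lift
      (fun x : RAAG Γ => (FreeAbelianGroup.of x : FreeAbelianGroup (RAAG Γ)) |> Multiplicative.ofAdd)) hv'
    rw [map_mul, map_mul, mul_comm, mul_left_cancel_iff, FreeGroup.lift_apply_of,
      FreeGroup.lift_apply_of] at h1
    exact (FreeAbelianGroup.of_injective (Multiplicative.ofAdd.injective h1)).symm
  rw [hgv] at hv'
  have hv2 := congrArg (conjFree (RAAG Γ) (raagOf Γ w)) hv'
  rw [map_mul, map_mul, hw', conjFree_of] at hv2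
  have hf1 : f = 1 := by
    refine freeGroup_eq_one_of_commute f _ _ ?_ hv' hv2
    intro he
    apply raag_not_comm Γ hne h
    conv_lhs => rw [he]
    group
  have : raagPhi Γ v z = SemidirectProduct.inr g := by
    ext
    · simp [← hf, hf1]
    · simp [← hg]
  have h2 := raagPsi_raagPhi Γ v z
  rw [this] at h2
  rw [← raagPhi_right, ← hg, ← h2]
  simp [raagPsi]

theorem raag_center_eq_bot [Fintype V] (hd : ∀ v, ∃ w, v ≠ w ∧ ¬ Γ.Adj v w) :
    Subgroup.center (RAAG Γ) = ⊥ := by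
  classical
  rw [eq_bot_iff]
  intro z hz
  rw [Subgroup.mem_bot]
  have key : ∀ S : Finset V, raagKill Γ S z = z := by
    intro S
    induction S using Finset.induction_on with
    | empty =>
      have : raagKill Γ ∅ = MonoidHom.id _ := by
        apply PresentedGroup.ext
        intro u
        change raagKill Γ ∅ (raagOf Γ u) = raagOf Γ u
        rw [raagKill, raagLift_of]; simp
      rw [this]; rfl
    | insert v S hv ih =>
      have : raagKill Γ (insert v S) = (raagKill Γ S).comp (raagKill Γ {v}) := by
        apply PresentedGroup.ext
        intro u
        change raagKill Γ (insert v S) (raagOf Γ u) = raagKill Γ S (raagKill Γ {v} (raagOf Γ u))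
        simp only [raagKill, raagLift_of]
        by_cases h : u = v
        · simp [h]
        · simp [h]
      obtain ⟨w, h1, h2⟩ := hd v
      rw [this, MonoidHom.comp_apply, raagKill_center Γ h1 h2 z hz, ih]
  have : raagKill Γ Finset.univ = 1 := by
    apply PresentedGroup.ext
    intro u
    change raagKill Γ Finset.univ (raagOf Γ u) = 1
    rw [raagKill, raagLift_of]; simp
  rw [← key Finset.univ, this]; rfl

open Classical in
/-- The exponent sum of `w`. -/
noncomputable def raagExp (w : V) : RAAG Γ →* Multiplicative ℤ :=
  raagLift Γ (fun u => if u = w then Multiplicative.ofAdd 1 else 1) (fun _ _ _ => mul_comm _ _)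

theorem raag_central_of_dom {v : V} (hd : ∀ w, v ≠ w → Γ.Adj v w) :
    ∀ x : RAAG Γ, x * raagOf Γ v = raagOf Γ v * x := by
  have : (MulAut.conj (raagOf Γ v)).toMonoidHom = MonoidHom.id _ := by
    apply PresentedGroup.ext
    intro u
    change raagOf Γ v * raagOf Γ u * (raagOf Γ v)⁻¹ = raagOf Γ u
    by_cases h : v = u
    · subst h; group
    · rw [raag_comm Γ (hd u h)]; group
  intro x
  have h := DFunLike.congr_fun this x
  change raagOf Γ v * x * (raagOf Γ v)⁻¹ = x at h
  exact (mul_inv_eq_iff_eq_mul.mp h).symm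

/-- Transvection by a central element. -/
noncomputable def raagTrans {v : V} (hd : ∀ w, v ≠ w → Γ.Adj v w) (w : V) (n : ℤ) :
    RAAG Γ →* RAAG Γ where
  toFun x := x * raagOf Γ v ^ (n * Multiplicative.toAdd (raagExp Γ w x))
  map_one' := by simp
  map_mul' x y := by
    have hc : Commute y (raagOf Γ v) := raag_central_of_dom Γ hd y
    rw [map_mul, toAdd_mul, mul_add, zpow_add]
    have := (hc.zpow_right (n * Multiplicative.toAdd (raagExp Γ w x))).eq
    rw [mul_assoc, mul_assoc, ← mul_assoc y, this]
    group

theorem raagTrans_comp {v : V} (hd : ∀ w, v ≠ w → Γ.Adj v w) {w : V} (hne : v ≠ w) (m n : ℤ)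
    (h : m + n = 0) (x : RAAG Γ) :
    raagTrans Γ hd w m (raagTrans Γ hd w n x) = x := by
  have h0 : raagExp Γ w (raagOf Γ v) = 1 := by
    rw [raagExp, raagLift_of, if_neg hne]
  simp only [raagTrans, MonoidHom.coe_mk, OneHom.coe_mk, map_mul, map_zpow, h0]
  rw [toAdd_one, mul_zero, zpow_zero, mul_one, mul_assoc, ← zpow_add, ← add_mul, h]
  simp

/-- Transvection as an automorphism. -/
noncomputable def raagTransAut {v : V} (hd : ∀ w, v ≠ w → Γ.Adj v w) {w : V} (hne : v ≠ w)
    (n : ℤ) : MulAut (RAAG Γ) where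
  toFun := raagTrans Γ hd w n
  invFun := raagTrans Γ hd w (-n)
  left_inv := raagTrans_comp Γ hd hne _ _ (by ring)
  right_inv := raagTrans_comp Γ hd hne _ _ (by ring)
  map_mul' := map_mul _

theorem raag_out_infinite {v : V} (hd : ∀ w, v ≠ w → Γ.Adj v w) {w : V} (hne : v ≠ w) :
    Infinite (Out (RAAG Γ)) := by
  refine Infinite.of_injective (fun n : ℤ =>
    (QuotientGroup.mk (raagTransAut Γ hd hne n) : Out (RAAG Γ))) ?_
  intro m n hmn
  obtain ⟨g, hg⟩ := QuotientGroup.eq.mp hmn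
  have h1 : raagTransAut Γ hd hne n = raagTransAut Γ hd hne m * MulAut.conj g := by
    rw [hg]; group
  have h2 := DFunLike.congr_fun h1 (raagOf Γ w)
  have h3 := congrArg (raagExp Γ v) h2
  have e1 : raagExp Γ w (raagOf Γ w) = Multiplicative.ofAdd 1 := by
    rw [raagExp, raagLift_of, if_pos rfl]
  have e2 : raagExp Γ v (raagOf Γ v) = Multiplicative.ofAdd 1 := by
    rw [raagExp, raagLift_of, if_pos rfl]
  have h4 : ∀ k x, raagTransAut Γ hd hne k x =
    x * raagOf Γ v ^ (k * Multiplicative.toAdd (raagExp Γ w x)) := fun _ _ => rfl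
  simp only [MulAut.mul_apply, MulAut.conj_apply, h4, map_mul, map_inv, map_zpow, e1, e2,
    mul_inv_cancel_comm, mul_left_cancel_iff, toAdd_ofAdd, mul_one] at h3
  have h5 := congrArg Multiplicative.toAdd h3
  simpa [eq_comm] using h5

end RaagHelpers

theorem center_raag_trivial_of_out_finite {V : Type} [Fintype V] (Γ : SimpleGraph V)
    (hV : 2 ≤ Fintype.card V) (h : Finite (Out (RAAG Γ))) :
    Subgroup.center (RAAG Γ) = ⊥ := by
  apply raag_center_eq_bot
  by_contra hc
  push Not at hc
  obtain ⟨v, hv⟩ := hc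
  have : Nontrivial V := Fintype.one_lt_card_iff_nontrivial.mp hV
  obtain ⟨w, hw⟩ := exists_ne v
  have := raag_out_infinite Γ hv hw.symm
  exact not_finite (Out (RAAG Γ))
end

section
/- Let Γ be a finite simple graph such that for every vertex u, any two vertices of Γ lying outside st(u) are connected by a path all of whose vertices lie outside st(u). If Γ has exactly two connected components, then for every vertex u the star st(u) equals the set of vertices in the connected component of u; that is, every vertex lying in the same connected component as u belongs to st(u). -/
theorem star_eq_component_of_two_components {V : Type} [Fintype V] (Γ : SimpleGraph V)
    (h : ∀ u : V, connectedOutsideStar Γ u)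
    (h2 : Nat.card Γ.ConnectedComponent = 2) :
    ∀ u : V, star Γ u = {v : V | Γ.Reachable u v} := by
  intro u
  have hs : ∀ v, v ∈ star Γ u → Γ.Reachable u v := by
    intro v hv
    rcases hv with rfl | hv
    · exact SimpleGraph.Reachable.refl _
    · exact SimpleGraph.Adj.reachable hv
  ext v
  refine ⟨hs v, fun hv => ?_⟩
  by_contra hns
  have hw : ∃ w, ¬ Γ.Reachable u w := by
    by_contra hall
    push Not at hall
    have : Subsingleton Γ.ConnectedComponent := by
      constructor
      intro a b
      induction a using SimpleGraph.ConnectedComponent.ind with | _ a => ?_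
      induction b using SimpleGraph.ConnectedComponent.ind with | _ b => ?_
      exact SimpleGraph.ConnectedComponent.sound ((hall a).symm.trans (hall b))
    have := Finite.card_le_one_iff_subsingleton.2 this
    omega
  obtain ⟨w, hw⟩ := hw
  have hr := h u ⟨v, hns⟩ ⟨w, fun hm => hw (hs w hm)⟩
  have hr' : Γ.Reachable v w :=
    hr.map (SimpleGraph.Embedding.induce {v : V | v ∉ star Γ u}).toHom
  exact hw (SimpleGraph.Reachable.trans hv hr')
end

section
/- Let Γ be a nonempty finite simple graph such that for every vertex u: (i) any two vertices of Γ lying outside st(u) are connected by a path all of whose vertices lie outside st(u); and (ii) for every vertex v, if lk(u) ⊆ st(v) then u = v. Then Γ is connected. -/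
theorem connected_of_star_conditions {V : Type} [Fintype V] [Nonempty V]
    (Γ : SimpleGraph V)
    (h1 : ∀ u : V, connectedOutsideStar Γ u)
    (h2 : ∀ u v : V, Γ.neighborSet u ⊆ star Γ v → u = v) :
    Γ.Connected := by
  refine ⟨fun x y => ?_⟩
  by_contra hxy
  by_cases hw : ∃ w, Γ.Adj x w
  · obtain ⟨w, hw⟩ := hw
    refine hw.ne (h2 x w fun z hz => ?_)
    by_contra hzw
    have hz' : Γ.Adj x z := hz
    have hy : y ∉ star Γ w := by
      rintro (h | h)
      · subst h
        exact hxy hw.reachable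
      · have h' : Γ.Adj w y := h
        exact hxy (hw.reachable.trans h'.reachable)
    have hr := (h1 w ⟨z, hzw⟩ ⟨y, hy⟩).map
      (SimpleGraph.Embedding.induce {v : V | v ∉ star Γ w}).toHom
    exact hxy (hz'.reachable.trans hr)
  · have : x = y := h2 x y fun z hz => (hw ⟨z, hz⟩).elim
    subst this
    exact hxy (SimpleGraph.Reachable.refl x)
end
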